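/- The two-component unlink U ⊂ S³ satisfies MN(U) = 2; moreover, the Milnor map u of the rational function G(z,w) = (2z−1)/z at radius 1, which is a Morse map for U with exactly two critical points (one of index 1 and one of index 2), is a minimal Morse map. -/

import Mathlib

/-!  Morse maps for knots and links in `S³` and the Morse–Novikov number:
common framework.

We work in the smooth category.  `S³` is the unit sphere of `ℝ⁴ ≅ ℂ²`.
A link is presented by disjoint smoothly embedded oriented parametrized
circles.  A *simple boundary-regular map* for a link `L` is a smooth map
`f : S³ ∖ L → S¹` which near `L` is the
standard fibration `(x, z) ↦ z/|z|` in a positively oriented tubular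
neighborhood trivialization of `L` (this makes the homotopy class of `f`
the canonical class `ξ_L` dual to a Seifert surface, i.e. `f` is simple).
Such a map is *Morse* if all its critical points are nondegenerate; the
Morse–Novikov number `MN L` is the least number of critical points of a
simple boundary-regular Morse map for `L`. -/

noncomputable section
open scoped Manifold Real
open Metric Set

namespace MorseNovikov

/-- Ambient Euclidean 4-space, identified with `ℂ²` via the complex
coordinates `Z`, `W`. -/
abbrev E := EuclideanSpace ℝ (Fin 4)
abbrev E3 := EuclideanSpace ℝ (Fin 3)
abbrev E2 := EuclideanSpace ℝ (Fin 2)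

instance : Fact (Module.finrank ℝ E = 3 + 1) := ⟨by simp⟩

/-- The 3-sphere `S³`, the unit sphere of `ℝ⁴ ≅ ℂ²`. -/
abbrev Sph : Type := sphere (0 : E) 1

/-- First complex coordinate on `ℝ⁴ = ℂ²`. -/
def Z (p : E) : ℂ := (p 0 : ℂ) + (p 1 : ℂ) * Complex.I
/-- Second complex coordinate on `ℝ⁴ = ℂ²`. -/
def W (p : E) : ℂ := (p 2 : ℂ) + (p 3 : ℂ) * Complex.I

lemma continuous_Z : Continuous Z := by unfold Z; fun_prop
lemma continuous_W : Continuous W := by unfold W; fun_prop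

/-- The point of `ℝ⁴ = ℂ²` with complex coordinates `(z, w)`. -/
def mk4 (z w : ℂ) : E := (EuclideanSpace.equiv (Fin 4) ℝ).symm ![z.re, z.im, w.re, w.im]

/-- `z/|z| ∈ S¹` (with junk value `1` at `z = 0`). -/
def toCircle (z : ℂ) : Circle := Circle.exp (Complex.arg z)

/-- The set underlying the standard (horizontal) unknot `O = {w = 0} ⊂ S³`. -/
def Ocar : Set Sph := {p : Sph | W (p : E) = 0}

/-- The set underlying the standard split 2-component unlink
(the link of indeterminacy at infinity of `(2z-1)/z`). -/
def Ucar : Set Sph := {p : Sph | Z (p : E) = 0 ∨ Z (p : E) = 1/2}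

/-- A link: a nonempty closed oriented 1-dimensional smooth submanifold of
`S³`, presented by disjoint smoothly embedded circles; each component is a
`2π`-periodic injective smooth immersion of `ℝ` (recording its orientation). -/
structure Link where
  n : ℕ
  npos : 0 < n
  emb : Fin n → ℝ → Sph
  smooth : ∀ i, ContMDiff 𝓘(ℝ, ℝ) (𝓡 3) (⊤ : ℕ∞) (emb i)
  periodic : ∀ i t, emb i (t + 2*π) = emb i t
  immersed : ∀ i t, mfderiv 𝓘(ℝ, ℝ) (𝓡 3) (emb i) t ≠ 0
  inj : ∀ i j s t, s ∈ Ico 0 (2*π) → t ∈ Ico 0 (2*π) →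
    emb i s = emb j t → i = j ∧ s = t

/-- The underlying subset of `S³`. -/
def Link.carrier (L : Link) : Set Sph := ⋃ i, L.emb i '' (Icc 0 (2*π))

lemma Link.isClosed_carrier (L : Link) : IsClosed L.carrier := by
  refine isClosed_iUnion_of_finite fun i => ?_
  exact (isCompact_Icc.image (L.smooth i).continuous).isClosed

/-- The complement `S³ ∖ L`, an open submanifold of `S³`. -/
def Link.compl (L : Link) : TopologicalSpace.Opens Sph :=
  ⟨{x | x ∉ L.carrier}, L.isClosed_carrier.isOpen_compl⟩

/-- A knot is a one-component link. -/
def Link.IsKnot (L : Link) : Prop := L.n = 1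

section Generic
variable {M : Type*} [TopologicalSpace M] [ChartedSpace E3 M]

/-- `x` is a critical point of the circle-valued function `f`:
the differential of `f` at `x` fails to be surjective. -/
def IsCrit (f : M → Circle) (x : M) : Prop :=
  ¬ Function.Surjective (mfderiv (𝓡 3) (𝓡 1) f x)

/-- The set of critical points of `f`. -/
def critSet (f : M → Circle) : Set M := {x | IsCrit f x}

/-- A local real lift of `f` near `x`, read in the preferred chart at `x`. -/
def liftChart (f : M → Circle) (x : M) (u : E3) : ℝ :=
  Complex.arg ((f ((extChartAt (𝓡 3) x).symm u) : ℂ) / (f x : ℂ))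

/-- The Hessian bilinear form of `f` at `x` (meaningful at critical points,
where it is independent of the choice of chart and lift). -/
def hessAt (f : M → Circle) (x : M) (v w : E3) : ℝ :=
  fderiv ℝ (fun u => fderiv ℝ (liftChart f x) u v) (extChartAt (𝓡 3) x x) w

/-- Nondegeneracy of a critical point. -/
def Nondeg (f : M → Circle) (x : M) : Prop :=
  ∀ v : E3, v ≠ 0 → ∃ w : E3, hessAt f x v w ≠ 0

/-- `f` is a Morse function: it has no degenerate critical points. -/
def MorseFun (f : M → Circle) : Prop := ∀ x, IsCrit f x → Nondeg f x

/-- `x` is a nondegenerate critical point of `f` of Morse index `i`. -/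
def HasIndex (f : M → Circle) (x : M) (i : ℕ) : Prop :=
  IsCrit f x ∧ i ≤ 3 ∧
  ∃ V W : Submodule ℝ E3, Module.finrank ℝ V = i ∧ Module.finrank ℝ W = 3 - i ∧
    (∀ v ∈ V, v ≠ 0 → hessAt f x v v < 0) ∧ (∀ w ∈ W, w ≠ 0 → 0 < hessAt f x w w)

end Generic

/-- The determinant of four ambient vectors; expresses the standard
orientation of `S³ ⊂ ℝ⁴`. -/
def det4 (a b c d : E) : ℝ :=
  Matrix.det (Matrix.of ![(fun i => a i), (fun i => b i), (fun i => c i), (fun i => d i)])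

/-- The ambient (`ℝ⁴`-valued) differential of a map `g : ℝ × ℂ → S³`. -/
def tangAmb (g : ℝ × ℂ → Sph) (q : ℝ × ℂ) (v : ℝ × ℂ) : E :=
  mfderiv (𝓡 3) 𝓘(ℝ, E) (fun p : Sph => (p : E)) (g q)
    (mfderiv 𝓘(ℝ, ℝ × ℂ) (𝓡 3) g q v)

/-- A **simple boundary-regular smooth map** for the link `L`: a smooth map
`f : S³ ∖ L → S¹` together with an adapted trivialization `τ : L × D² → N(L)`
of a tubular neighborhood of `L`, with `τ(x, 0) = x`, on which `f` is the
standard fibration `(x, z) ↦ z/|z|`.  The trivialization is positively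
oriented with respect to the orientations of `L` and `S³`; consequently the
homotopy class of `f` is the canonical class `ξ_L ∈ H¹(S³ ∖ L; ℤ)` dual to a
Seifert surface, i.e. `f` is simple. -/
structure BRMap (L : Link) where
  f : L.compl → Circle
  smooth : ContMDiff (𝓡 3) (𝓡 1) (⊤ : ℕ∞) f
  tub : Fin L.n → ℝ × ℂ → Sph
  tub_smooth : ∀ i, ContMDiffOn 𝓘(ℝ, ℝ × ℂ) (𝓡 3) (⊤ : ℕ∞) (tub i) (univ ×ˢ ball (0:ℂ) 1)
  tub_per : ∀ i t z, tub i (t + 2*π, z) = tub i (t, z)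
  tub_core : ∀ i t, tub i (t, 0) = L.emb i t
  tub_inj : ∀ i j t s z w, t ∈ Ico 0 (2*π) → s ∈ Ico 0 (2*π) →
    z ∈ ball (0:ℂ) 1 → w ∈ ball (0:ℂ) 1 → tub i (t, z) = tub j (s, w) →
    i = j ∧ t = s ∧ z = w
  tub_nbhd : ∀ x ∈ L.carrier, (⋃ i, tub i '' (univ ×ˢ ball (0:ℂ) 1)) ∈ nhds x
  tub_off : ∀ i t z, z ∈ ball (0:ℂ) 1 → z ≠ 0 → tub i (t, z) ∉ L.carrier
  adapted : ∀ i t z, z ∈ ball (0:ℂ) 1 → z ≠ 0 →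
    ∀ x : L.compl, (x : Sph) = tub i (t, z) → f x = toCircle z
  positive : ∀ i t z, z ∈ ball (0:ℂ) 1 →
    0 < det4 ((tub i (t, z) : E)) (tangAmb (tub i) (t, z) (1, 0))
        (tangAmb (tub i) (t, z) (0, 1)) (tangAmb (tub i) (t, z) (0, Complex.I))

variable {L : Link}

/-- The page `F_θ := L ∪ f⁻¹(θ)` of `f`, as a subset of `S³`. -/
def pageSet (F : BRMap L) (θ : Circle) : Set Sph :=
  L.carrier ∪ {x : Sph | ∃ h : x ∈ L.compl, F.f ⟨x, h⟩ = θ}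

/-- `θ` is a regular value of `F.f` (the corresponding page is smooth). -/
def IsRegularValue (F : BRMap L) (θ : Circle) : Prop :=
  ∀ x : L.compl, F.f x = θ → ¬ IsCrit F.f x

/-- The Morse–Novikov number of `L`: the least number of critical points of
a simple boundary-regular Morse map `S³ ∖ L → S¹`. -/
def MN (L : Link) : ℕ∞ :=
  sInf {k : ℕ∞ | ∃ F : BRMap L, MorseFun F.f ∧ (critSet F.f).encard = k}

/-- `F` is a minimal Morse map for `L`. -/
def Minimal (F : BRMap L) : Prop :=
  MorseFun F.f ∧ ∀ G : BRMap L, MorseFun G.f →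
    (critSet F.f).encard ≤ (critSet G.f).encard

/-- All critical points of `F` have index 1 or 2. -/
def Moderate (F : BRMap L) : Prop :=
  ∀ x ∈ critSet F.f, HasIndex F.f x 1 ∨ HasIndex F.f x 2

/-- `F.f` restricted to its critical set factors as the index followed by an
injection. -/
def SelfIndexed (F : BRMap L) : Prop :=
  ∀ x ∈ critSet F.f, ∀ y ∈ critSet F.f, ∀ i j : ℕ,
    HasIndex F.f x i → HasIndex F.f y j → (F.f x = F.f y ↔ i = j)

/-- An ambient isotopy of `S³`: a smooth family of diffeomorphisms starting
at the identity. -/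
structure Isotopy where
  H : ℝ × Sph → Sph
  smooth : ContMDiff (𝓘(ℝ, ℝ).prod (𝓡 3)) (𝓡 3) (⊤ : ℕ∞) H
  init : ∀ x, H (0, x) = x
  bij : ∀ t, Function.Bijective (fun x => H (t, x))

/-- Two subsets of `S³` are ambient isotopic. -/
def AmbientIsotopic (A B : Set Sph) : Prop :=
  ∃ h : Isotopy, (fun x => h.H (1, x)) '' A = B

/-- Two links are (ambient) isotopic. -/
def LinkIsotopic (L₁ L₂ : Link) : Prop := AmbientIsotopic L₁.carrier L₂.carrier

/-- Isotopy of simple boundary-regular maps: an ambient isotopy carries one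
binding to the other and intertwines the two maps. -/
def BRMapIsotopic (L₁ : Link) (F₁ : BRMap L₁) (L₂ : Link) (F₂ : BRMap L₂) : Prop :=
  ∃ h : Isotopy, (fun x => h.H (1, x)) '' L₁.carrier = L₂.carrier ∧
    ∀ (x : L₁.compl) (y : L₂.compl), (y : Sph) = h.H (1, (x : Sph)) →
      F₂.f y = F₁.f x

/-- A closed (nonempty, compact, boundaryless) smooth surface inside `A ⊆ S³`. -/
structure ClosedSurfaceIn (A : Set Sph) where
  carr : Type
  [ts : TopologicalSpace carr]
  [cs : ChartedSpace E2 carr]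
  [cpt : CompactSpace carr]
  [ne : Nonempty carr]
  emb : carr → Sph
  smooth : ContMDiff (𝓡 2) (𝓡 3) (⊤ : ℕ∞) emb
  inj : Function.Injective emb
  imm : ∀ p, Function.Injective (mfderiv (𝓡 2) (𝓡 3) emb p)
  sub : Set.range emb ⊆ A

/-- `A` contains a nonempty closed surface. -/
def ContainsClosedSurface (A : Set Sph) : Prop := Nonempty (ClosedSurfaceIn A)

/-- `F` is boundary-connected: no page of `F` contains a nonempty closed
surface (equivalently, every page has trivial second homology). -/
def BoundaryConnected (F : BRMap L) : Prop :=
  ∀ θ : Circle, ¬ ContainsClosedSurface (pageSet F θ)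

/-- `F` is connected: every page of `F` is connected. -/
def ConnectedMap (F : BRMap L) : Prop :=
  ∀ θ : Circle, IsConnected (pageSet F θ)

/-- The ambient differential of a map into `S³` defined on a
surface-with-boundary. -/
def tangAmbS {C : Type*} [TopologicalSpace C] [ChartedSpace (EuclideanHalfSpace 2) C]
    (g : C → Sph) (p : C) (v : E2) : E :=
  mfderiv (𝓡 3) 𝓘(ℝ, E) (fun q : Sph => (q : E)) (g p)
    (mfderiv (𝓡∂ 2) (𝓡 3) g p v)

/-- A compact oriented smooth surface-with-boundary embedded in `S³`, with
boundary the link `L` (a *spanning surface* for `L`).  Orientedness is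
encoded by a continuous nonvanishing normal (coorientation) field in `S³`. -/
structure SpanningSurface (L : Link) where
  carr : Type
  [ts : TopologicalSpace carr]
  [cs : ChartedSpace (EuclideanHalfSpace 2) carr]
  [cpt : CompactSpace carr]
  emb : carr → Sph
  smooth : ContMDiff (𝓡∂ 2) (𝓡 3) (⊤ : ℕ∞) emb
  inj : Function.Injective emb
  imm : ∀ p, Function.Injective (mfderiv (𝓡∂ 2) (𝓡 3) emb p)
  bdry : emb '' ((𝓡∂ 2).boundary carr) = L.carrier
  int_off : ∀ p, p ∉ (𝓡∂ 2).boundary carr → emb p ∉ L.carrier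
  coorient : ∃ ν : carr → E, Continuous ν ∧ ∀ p, ν p ≠ 0 ∧
    inner (𝕜 := ℝ) (ν p) ((emb p : Sph) : E) = 0 ∧
    ∀ v : E2, inner (𝕜 := ℝ) (ν p) (tangAmbS emb p v) = 0

/-- A Seifert surface for `L`: a spanning surface with no closed components. -/
structure SeifertSurface (L : Link) extends SpanningSurface L where
  no_closed : ∀ p : carr, (connectedComponent p ∩ (𝓡∂ 2).boundary carr).Nonempty

/-- A compact smooth surface-with-boundary embedded in the region `Amb ⊆ S³`,
with boundary the set `Bd`. -/
structure EmbSurface (Bd Amb : Set Sph) where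
  carr : Type
  [ts : TopologicalSpace carr]
  [cs : ChartedSpace (EuclideanHalfSpace 2) carr]
  [cpt : CompactSpace carr]
  emb : carr → Sph
  smooth : ContMDiff (𝓡∂ 2) (𝓡 3) (⊤ : ℕ∞) emb
  inj : Function.Injective emb
  imm : ∀ p, Function.Injective (mfderiv (𝓡∂ 2) (𝓡 3) emb p)
  bdry : emb '' ((𝓡∂ 2).boundary carr) = Bd
  sub : Set.range emb ⊆ Amb

/-- Angular speed about the origin of a plane curve. -/
def angSpeed (g : ℝ → ℂ) (t : ℝ) : ℝ := ((deriv g t) / g t).im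

/-- Total winding number about `0` of a (`2π`-periodic) plane curve. -/
def windingNumber (g : ℝ → ℂ) : ℝ := (1/(2*π)) * ∫ t in (0:ℝ)..(2*π), angSpeed g t

/-- The rational function `G(z,w) = (2z - 1)/z`, as a function of the ambient
coordinates; its Milnor map at radius `1` is `p ↦ G(p)/|G(p)|`. -/
def Gu (p : E) : ℂ := (2 * Z p - 1) / Z p

/-!
Let `g` be a simple boundary-regular map for the unlink `{z = 0} ∪ {z = 1/2}`. The 2-sphere
`Re z = const`, for a constant between `0` and `1/2`, separates the two components and lifts to the
infinite cyclic cover `{(x, s) | g x = exp (i s)}`, because `g` has a continuous argument on the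
simply connected slab around it. Collapsing the cover onto a bicollar of one lift gives a
circle-valued function `c` which is constantly `1` wherever `s` is very negative. On the other hand
the lifts of two meridians, one for each component, can be joined across the slab to a path from a
point to its deck translate on which `c` winds once.

If `g` had no critical point, the flow of a descent field for `g`, chosen to vanish along the link
by means of the open book structure there, would push this path into the region where `c` is
constant, contradicting the winding number. If `g` has a single nondegenerate critical point `p`,
then, after replacing `g` by its conjugate, its Hessian at `p` has at most one positive eigenvalue,
and near `p` the linear flow of the Hessian serves as descent field. Its stable set at `p` lies in a
great circle, so the points whose trajectories fail to descend form a countable union of Lipschitz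
images of curves. These have Hausdorff dimension at most one, a path in the 3-sphere can be made to
avoid them, and the same contradiction follows. So there are at least two critical points.

The Milnor map of `(2 z - 1) / z` has exactly two, where `w = 0` and `z = 1/2 ± i √3/2`. At these
its Hessian is `(‖w‖² - t²) / (2 Im z)`, with `t` the displacement along the circle `w = 0`.
-/

section FlowOfVectorField

variable {A : Type*} [NormedAddCommGroup A] [NormedSpace ℝ A] {V : A → A} {K : NNReal}

/-- `Φ` is the global flow of the autonomous vector field `V`: every orbit of `Φ` is an integral
curve of `V`. -/
def IsFlowOf (Φ : Flow ℝ A) (V : A → A) : Prop :=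
  ∀ x, IsIntegralCurve (fun t => Φ t x) (fun _ => V)

lemma exists_isIntegralCurveOn_Ioo [CompleteSpace A] (hV : LipschitzWith K V) {C : NNReal}
    (hC : ∀ x, ‖V x‖ ≤ C) (x : A) (n : ℕ) :
    ∃ γ : ℝ → A, γ 0 = x ∧ ∀ t ∈ Ioo (-(n + 1 : ℝ)) (n + 1), HasDerivAt γ (V (γ t)) t := by
  have zero_mem : (0 : ℝ) ∈ Icc (-(n + 1 : ℝ)) (n + 1) := by
    constructor <;> linarith [n.cast_nonneg (α := ℝ)]
  have picard : IsPicardLindelof (fun _ => V) (⟨0, zero_mem⟩ : Icc (-(n + 1 : ℝ)) (n + 1)) x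
      (C * (n + 1)) 0 C K :=
    .of_time_independent (fun y _ => hC y) hV.lipschitzOnWith (by simp)
  obtain ⟨γ, h0, hγ⟩ := picard.exists_eq_forall_mem_Icc_hasDerivWithinAt₀
  exact ⟨γ, h0, fun t ht =>
    (hγ t (Ioo_subset_Icc_self ht)).hasDerivAt (Icc_mem_nhds ht.1 ht.2)⟩

lemma exists_isIntegralCurve [CompleteSpace A] (hV : LipschitzWith K V) {C : NNReal}
    (hC : ∀ x, ‖V x‖ ≤ C) (x : A) :
    ∃ γ : ℝ → A, γ 0 = x ∧ IsIntegralCurve γ (fun _ => V) := by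
  choose α h0 hα using exists_isIntegralCurveOn_Ioo hV hC x
  have agree : ∀ m n : ℕ, m ≤ n → ∀ t ∈ Ioo (-(m + 1 : ℝ)) (m + 1), α m t = α n t := by
    intro m n hmn t ht
    have hmn' : (m : ℝ) ≤ n := by exact_mod_cast hmn
    refine ODE_solution_unique_of_mem_Ioo (v := fun _ => V) (s := fun _ => univ) (K := K)
      (t₀ := 0) (fun _ _ => hV.lipschitzOnWith) ?_ (fun t ht => ⟨hα m t ht, trivial⟩)
      (fun t ht => ⟨hα n t ⟨by linarith [ht.1], by linarith [ht.2]⟩, trivial⟩)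
      ((h0 m).trans (h0 n).symm) ht
    constructor <;> linarith [m.cast_nonneg (α := ℝ)]
  have mem_Ioo (t : ℝ) : t ∈ Ioo (-((⌈|t|⌉₊ : ℝ) + 1)) (⌈|t|⌉₊ + 1) := by
    have := Nat.le_ceil |t|
    constructor <;> linarith [neg_abs_le t, le_abs_self t]
  refine ⟨fun t => α ⌈|t|⌉₊ t, by simp [h0], fun t => ?_⟩
  refine (hα ⌈|t|⌉₊ t (mem_Ioo t)).congr_of_eventuallyEq ?_
  filter_upwards [isOpen_Ioo.mem_nhds (mem_Ioo t)] with s hs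
  rcases le_total ⌈|s|⌉₊ ⌈|t|⌉₊ with h | h
  · exact agree _ _ h s (mem_Ioo s)
  · exact (agree _ _ h s hs).symm

lemma eq_of_isIntegralCurve (hV : LipschitzWith K V) {γ δ : ℝ → A}
    (hγ : IsIntegralCurve γ (fun _ => V)) (hδ : IsIntegralCurve δ (fun _ => V))
    (h0 : γ 0 = δ 0) : γ = δ :=
  ODE_solution_unique_univ (v := fun _ => V) (s := fun _ => univ) (t₀ := 0)
    (fun _ => hV.lipschitzOnWith) (fun t => ⟨hγ t, trivial⟩) (fun t => ⟨hδ t, trivial⟩) h0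

lemma dist_integralCurve_le_of_nonneg (hV : LipschitzWith K V) {γ δ : ℝ → A}
    (hγ : IsIntegralCurve γ (fun _ => V)) (hδ : IsIntegralCurve δ (fun _ => V)) {t : ℝ}
    (ht : 0 ≤ t) : dist (γ t) (δ t) ≤ dist (γ 0) (δ 0) * Real.exp (K * t) := by
  simpa using dist_le_of_trajectories_ODE (v := fun _ => V) (fun _ => hV)
    hγ.continuous.continuousOn (fun s _ => (hγ s).hasDerivWithinAt)
    hδ.continuous.continuousOn (fun s _ => (hδ s).hasDerivWithinAt) le_rfl t ⟨ht, le_rfl⟩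

lemma dist_integralCurve_le (hV : LipschitzWith K V) {γ δ : ℝ → A}
    (hγ : IsIntegralCurve γ (fun _ => V)) (hδ : IsIntegralCurve δ (fun _ => V)) (t : ℝ) :
    dist (γ t) (δ t) ≤ dist (γ 0) (δ 0) * Real.exp (K * |t|) := by
  rcases le_total 0 t with ht | ht
  · simpa only [abs_of_nonneg ht] using dist_integralCurve_le_of_nonneg hV hγ hδ ht
  · have reverse {η : ℝ → A} (hη : IsIntegralCurve η (fun _ => V)) :
        IsIntegralCurve (fun s => η (-s)) (fun _ => fun x => -V x) := fun s => by
      simpa [Function.comp_def] using (hη (-s)).scomp s (hasDerivAt_neg s)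
    have hV' : LipschitzWith K (fun x => -V x) :=
      .of_dist_le_mul fun x y => by simpa only [dist_neg_neg] using hV.dist_le_mul x y
    simpa [abs_of_nonpos ht] using
      dist_integralCurve_le_of_nonneg hV' (reverse hγ) (reverse hδ) (neg_nonneg.2 ht)

theorem exists_isFlowOf [CompleteSpace A] (hV : LipschitzWith K V) {C : NNReal}
    (hC : ∀ x, ‖V x‖ ≤ C) : ∃ Φ : Flow ℝ A, IsFlowOf Φ V := by
  choose γ h0 hγ using exists_isIntegralCurve hV hC
  have lipschitz (t : ℝ) :
      LipschitzWith (Real.toNNReal (Real.exp (K * |t|))) (fun x => γ x t) := by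
    refine .of_dist_le_mul fun x y => ?_
    rw [Real.coe_toNNReal _ (Real.exp_pos _).le, mul_comm]
    simpa only [h0] using dist_integralCurve_le hV (hγ x) (hγ y) t
  have speed (x : A) : LipschitzWith C (γ x) :=
    lipschitzWith_of_nnnorm_deriv_le (fun t => (hγ x t).differentiableAt)
      fun t => by rw [(hγ x t).deriv]; exact hC _
  refine ⟨⟨fun t x => γ x t, ?_, fun s t x => ?_, h0⟩, hγ⟩
  · exact continuous_prod_of_continuous_lipschitzWith _ C (fun t => (lipschitz t).continuous) speed
  · exact congrFun (eq_of_isIntegralCurve hV ((hγ x).comp_add t) (hγ _) (by simp [h0])) s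

namespace IsFlowOf

variable {Φ : Flow ℝ A}

lemma hasDerivAt (h : IsFlowOf Φ V) (x : A) (t : ℝ) :
    HasDerivAt (fun s => Φ s x) (V (Φ t x)) t :=
  h x t

lemma eq_of_isIntegralCurve (h : IsFlowOf Φ V) (hV : LipschitzWith K V) {γ : ℝ → A}
    (hγ : IsIntegralCurve γ (fun _ => V)) (t : ℝ) : γ t = Φ t (γ 0) :=
  congrFun (MorseNovikov.eq_of_isIntegralCurve hV hγ (h _) (Φ.map_zero_apply _).symm) t

lemma eq_self_of_eq_zero (h : IsFlowOf Φ V) (hV : LipschitzWith K V) {x : A} (hx : V x = 0)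
    (t : ℝ) : Φ t x = x :=
  (h.eq_of_isIntegralCurve hV (isIntegralCurve_const fun _ => hx) t).symm

lemma exists_lipschitzWith (h : IsFlowOf Φ V) (hV : LipschitzWith K V) (t : ℝ) :
    ∃ K' : NNReal, LipschitzWith K' (Φ t) :=
  ⟨Real.toNNReal (Real.exp (K * |t|)), .of_dist_le_mul fun x y => by
    rw [Real.coe_toNNReal _ (Real.exp_pos _).le, mul_comm]
    simpa only [Φ.map_zero_apply] using dist_integralCurve_le hV (h x) (h y) t⟩

lemma dist_le (h : IsFlowOf Φ V) {C : NNReal} (hC : ∀ x, ‖V x‖ ≤ C) (x : A) (s t : ℝ) :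
    dist (Φ s x) (Φ t x) ≤ C * dist s t :=
  (lipschitzWith_of_nnnorm_deriv_le (fun t => (h.hasDerivAt x t).differentiableAt)
    fun t => by rw [(h.hasDerivAt x t).deriv]; exact hC _).dist_le_mul s t

lemma isInvariant_of_eqOn_zero_compl (h : IsFlowOf Φ V) (hV : LipschitzWith K V) {X Y : Set A}
    (hY : IsInvariant Φ Y) (hX : X ⊆ Y) (h0 : ∀ x ∈ Y \ X, V x = 0) : IsInvariant Φ X := by
  intro t x hx
  by_contra hxt
  have fixed : Φ (-t) (Φ t x) = Φ t x :=
    h.eq_self_of_eq_zero hV (h0 _ ⟨hY t (hX hx), hxt⟩) (-t)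
  rw [← Φ.map_add, neg_add_cancel, Φ.map_zero_apply] at fixed
  exact hxt (fixed ▸ hx)

end IsFlowOf

lemma IsFlowOf.isInvariant_sphere {H : Type*} [NormedAddCommGroup H] [InnerProductSpace ℝ H]
    {Φ : Flow ℝ H} {V : H → H} (h : IsFlowOf Φ V) (hV : ∀ x, inner ℝ (V x) x = 0) (r : ℝ) :
    IsInvariant Φ (sphere 0 r) := by
  intro t x hx
  have normSq_deriv (s : ℝ) : HasDerivAt (fun s => ‖Φ s x‖ ^ 2) 0 s := by
    have := (h.hasDerivAt x s).norm_sq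
    rwa [real_inner_comm, hV, mul_zero] at this
  have normSq_eq : ‖Φ t x‖ ^ 2 = ‖Φ 0 x‖ ^ 2 :=
    is_const_of_deriv_eq_zero (fun s => (normSq_deriv s).differentiableAt)
      (fun s => (normSq_deriv s).deriv) t 0
  rw [Φ.map_zero_apply, sq_eq_sq₀ (norm_nonneg _) (norm_nonneg _)] at normSq_eq
  rw [mem_sphere_zero_iff_norm] at hx ⊢
  exact normSq_eq.trans hx

end FlowOfVectorField

section AngularDerivative

variable {A : Type*} [NormedAddCommGroup A] [NormedSpace ℝ A] {g : A → ℂ} {X : Set A}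

/-- `g` restricts to a smooth circle-valued function near each point of `X`. Circle-valued
functions are represented by complex-valued ones so that their derivatives are complex numbers. -/
structure IsCircleMapNear (g : A → ℂ) (X : Set A) : Prop where
  norm_eventually_eq_one : ∀ x ∈ X, ∀ᶠ y in nhds x, ‖g y‖ = 1
  contDiffAt : ∀ x ∈ X, ContDiffAt ℝ (⊤ : ℕ∞) g x

/-- The differential of the argument of `g` at `x`, that is, the imaginary part of the
logarithmic derivative of `g`. -/
def angularDeriv (g : A → ℂ) (x : A) : A →L[ℝ] ℝ :=
  Complex.imCLM.comp ((g x)⁻¹ • fderiv ℝ g x)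

lemma angularDeriv_apply (g : A → ℂ) (x v : A) :
    angularDeriv g x v = (fderiv ℝ g x v / g x).im := by
  simp only [angularDeriv, ContinuousLinearMap.comp_apply, Complex.imCLM_apply,
    smul_apply, smul_eq_mul, div_eq_inv_mul]

namespace IsCircleMapNear

variable (hg : IsCircleMapNear g X) {x : A}
include hg

lemma norm_eq_one (hx : x ∈ X) : ‖g x‖ = 1 := (hg.norm_eventually_eq_one x hx).self_of_nhds

lemma ne_zero (hx : x ∈ X) : g x ≠ 0 := norm_ne_zero_iff.1 (by simp [hg.norm_eq_one hx])

lemma differentiableAt (hx : x ∈ X) : DifferentiableAt ℝ g x :=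
  (hg.contDiffAt x hx).differentiableAt (by simp)

lemma continuousOn : ContinuousOn g X :=
  fun _ hx => (hg.differentiableAt hx).continuousAt.continuousWithinAt

lemma re_fderiv_div_eq_zero (hx : x ∈ X) (v : A) : (fderiv ℝ g x v / g x).re = 0 := by
  have normSq_deriv := (hg.differentiableAt hx).hasFDerivAt.norm_sq
  have normSq_const : HasFDerivAt (fun y => ‖g y‖ ^ 2) (0 : A →L[ℝ] ℝ) x := by
    refine (hasFDerivAt_const (1 : ℝ) x).congr_of_eventuallyEq ?_
    filter_upwards [hg.norm_eventually_eq_one x hx] with y hy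
    simp [hy]
  have orthogonal := congrArg (fun T => T v) (normSq_deriv.unique normSq_const)
  simp only [smul_apply, ContinuousLinearMap.comp_apply, coe_innerSL_apply, Complex.inner,
    Complex.mul_re, Complex.conj_re, Complex.conj_im, mul_neg, sub_neg_eq_add, smul_add,
    nsmul_eq_mul, Nat.cast_ofNat, zero_apply] at orthogonal
  rw [Complex.div_re, ← add_div, div_eq_zero_iff]
  left
  linarith

lemma fderiv_eq (hx : x ∈ X) (v : A) :
    fderiv ℝ g x v = Complex.I * angularDeriv g x v * g x := by
  have quotient : fderiv ℝ g x v / g x = Complex.I * angularDeriv g x v := by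
    apply Complex.ext <;> simp [angularDeriv_apply, hg.re_fderiv_div_eq_zero hx v]
  exact (div_eq_iff (hg.ne_zero hx)).1 quotient

lemma contDiffAt_angularDeriv (hx : x ∈ X) : ContDiffAt ℝ (⊤ : ℕ∞) (angularDeriv g) x :=
  contDiffAt_const.clm_comp (((hg.contDiffAt x hx).inv (hg.ne_zero hx)).smul
    ((hg.contDiffAt x hx).fderiv_right (m := (⊤ : ℕ∞)) (by simp)))

end IsCircleMapNear

end AngularDerivative

section AccumulatedAngle

variable {A : Type*} [NormedAddCommGroup A] [NormedSpace ℝ A] {g : A → ℂ} {X : Set A}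
  {V : A → A} {Φ : Flow ℝ A}

/-- The total angle through which `g` turns along the orbit of `x` under the flow `Φ` of `V` from
time `0` to time `T`. -/
def accumulatedAngle (g : A → ℂ) (V : A → A) (Φ : Flow ℝ A) (x : A) (T : ℝ) : ℝ :=
  ∫ t in (0 : ℝ)..T, angularDeriv g (Φ t x) (V (Φ t x))

lemma accumulatedAngle_zero (g : A → ℂ) (V : A → A) (Φ : Flow ℝ A) (x : A) :
    accumulatedAngle g V Φ x 0 = 0 := by simp [accumulatedAngle]

variable (hg : IsCircleMapNear g X) (hV : Continuous V) (hX : IsInvariant Φ X)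
include hg hV hX

lemma continuous_angularDeriv_flow :
    Continuous (fun p : X × ℝ => angularDeriv g (Φ p.2 p.1) (V (Φ p.2 p.1))) := by
  have orbit : Continuous (fun p : X × ℝ => Φ p.2 (p.1 : A)) :=
    Φ.cont'.comp (continuous_snd.prodMk (continuous_subtype_val.comp continuous_fst))
  refine continuous_iff_continuousAt.2 fun p =>
    ContinuousAt.clm_apply ?_ (hV.comp orbit).continuousAt
  exact ContinuousAt.comp (g := angularDeriv g)
    (hg.contDiffAt_angularDeriv (hX p.2 p.1.2)).continuousAt orbit.continuousAt

lemma continuous_accumulatedAngle :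
    Continuous (fun p : X × ℝ => accumulatedAngle g V Φ p.1 p.2) := by
  have reindex : Continuous fun q : (X × ℝ) × ℝ => (q.1.1, q.2) := by fun_prop
  have integrand := (continuous_angularDeriv_flow hg hV hX).comp reindex
  exact intervalIntegral.continuous_parametric_intervalIntegral_of_continuous
    (f := fun (p : X × ℝ) t => angularDeriv g (Φ t p.1) (V (Φ t p.1))) integrand continuous_snd

lemma hasDerivAt_accumulatedAngle {x : A} (hx : x ∈ X) (T : ℝ) :
    HasDerivAt (accumulatedAngle g V Φ x) (angularDeriv g (Φ T x) (V (Φ T x))) T := by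
  have h := (continuous_angularDeriv_flow hg hV hX).comp (Continuous.prodMk_right (⟨x, hx⟩ : X))
  exact intervalIntegral.integral_hasDerivAt_right (h.intervalIntegrable _ _)
    (h.stronglyMeasurableAtFilter _ _) h.continuousAt

lemma antitone_accumulatedAngle (hdec : ∀ x ∈ X, angularDeriv g x (V x) ≤ 0) {x : A}
    (hx : x ∈ X) : Antitone (accumulatedAngle g V Φ x) :=
  antitone_of_hasDerivAt_nonpos (fun T => hasDerivAt_accumulatedAngle hg hV hX hx T)
    fun T => hdec _ (hX T hx)

lemma apply_flow_eq (hΦ : IsFlowOf Φ V) {x : A} (hx : x ∈ X) (T : ℝ) :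
    g (Φ T x) = g x * Complex.exp (accumulatedAngle g V Φ x T * Complex.I) := by
  set S := accumulatedAngle g V Φ x
  have ratio_deriv (t : ℝ) :
      HasDerivAt (fun t => g (Φ t x) * Complex.exp (-(S t * Complex.I))) 0 t := by
    have num : HasDerivAt (fun t => g (Φ t x)) (fderiv ℝ g (Φ t x) (V (Φ t x))) t :=
      (hg.differentiableAt (hX t hx)).hasFDerivAt.comp_hasDerivAt t (hΦ.hasDerivAt x t)
    have den := ((hasDerivAt_accumulatedAngle hg hV hX hx t).ofReal_comp.mul_const
      Complex.I).neg.cexp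
    refine (num.mul den).congr_deriv ?_
    rw [hg.fderiv_eq (hX t hx)]
    ring
  have ratio_const := is_const_of_deriv_eq_zero (fun t => (ratio_deriv t).differentiableAt)
    (fun t => (ratio_deriv t).deriv) T 0
  simp only [S, accumulatedAngle_zero, Φ.map_zero_apply, Complex.ofReal_zero, zero_mul, neg_zero,
    Complex.exp_zero, mul_one] at ratio_const
  rw [← ratio_const, mul_assoc, ← Complex.exp_add, neg_add_cancel, Complex.exp_zero, mul_one]

end AccumulatedAngle

section SphericalCaps

variable {H : Type*} [NormedAddCommGroup H] [InnerProductSpace ℝ H] {x₀ : H} {κ : ℝ}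

/-- The open spherical cap of unit vectors `x` with `κ < ⟪x, x₀⟫`. -/
def sphericalCap (x₀ : H) (κ : ℝ) : Set H := {x | ‖x‖ = 1 ∧ κ < inner ℝ x x₀}

/-- The open cone spanned by `sphericalCap x₀ κ`. Being convex for `0 ≤ κ`, it allows one to
connect points of the cap by projected straight segments. -/
def capCone (x₀ : H) (κ : ℝ) : Set H := {v | κ * ‖v‖ < inner ℝ v x₀}

lemma sphericalCap_subset_capCone : sphericalCap x₀ κ ⊆ capCone x₀ κ :=
  fun x hx => by simpa [capCone, hx.1] using hx.2

lemma mem_sphericalCap_self (hx₀ : ‖x₀‖ = 1) (hκ : κ < 1) : x₀ ∈ sphericalCap x₀ κ :=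
  ⟨hx₀, by simpa [hx₀]⟩

lemma isOpen_capCone (x₀ : H) (κ : ℝ) : IsOpen (capCone x₀ κ) :=
  isOpen_lt (by fun_prop) (by fun_prop)

lemma convex_capCone (x₀ : H) (hκ : 0 ≤ κ) : Convex ℝ (capCone x₀ κ) := by
  have : ConvexOn ℝ univ (fun v : H => κ * ‖v‖ - inner ℝ v x₀) := by
    refine (convexOn_univ_norm.smul hκ).sub ⟨convex_univ, fun v _ w _ a b _ _ _ => ?_⟩
    simp [inner_add_left, real_inner_smul_left]
  simpa [capCone, sub_neg] using this.convex_lt 0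

lemma ne_zero_of_mem_capCone {v : H} (hv : v ∈ capCone x₀ κ) : v ≠ 0 := by
  rintro rfl
  simp [capCone] at hv

lemma normalize_mem_sphericalCap {v : H} (hv : v ∈ capCone x₀ κ) :
    ‖v‖⁻¹ • v ∈ sphericalCap x₀ κ := by
  have norm_pos := norm_pos_iff.2 (ne_zero_of_mem_capCone hv)
  refine ⟨by rw [norm_smul, norm_inv, norm_norm, inv_mul_cancel₀ norm_pos.ne'], ?_⟩
  rw [real_inner_smul_left, inv_mul_eq_div, lt_div_iff₀ norm_pos]
  exact hv

lemma exists_sphericalCap_subset (hx₀ : ‖x₀‖ = 1) {O : Set H} (hO : O ∈ nhds x₀) :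
    ∃ κ, 0 ≤ κ ∧ κ < 1 ∧ sphericalCap x₀ κ ⊆ O := by
  obtain ⟨ε, hε, ball_subset⟩ := Metric.mem_nhds_iff.1 hO
  refine ⟨max 0 (1 - ε ^ 2 / 2), le_max_left _ _, max_lt one_pos (by linarith [pow_pos hε 2]),
    fun x hx => ball_subset ?_⟩
  have norm_sub_sq := norm_sub_sq_real x x₀
  rw [hx.1, hx₀] at norm_sub_sq
  rw [mem_ball, dist_eq_norm]
  exact lt_of_pow_lt_pow_left₀ 2 hε.le (by linarith [(le_max_right _ _).trans_lt hx.2])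

end SphericalCaps

section ThinSets

variable {H : Type*} [NormedAddCommGroup H]

/-- A set is thin if it is covered by countably many locally Lipschitz curves. In dimension four
the sphere stays locally path connected after removal of a thin set. -/
def IsThin (B : Set H) : Prop :=
  ∃ c : ℕ → ℝ → H, (∀ n, LocallyLipschitz (c n)) ∧ B ⊆ ⋃ n, range (c n)

lemma isThin_empty : IsThin (∅ : Set H) :=
  ⟨fun _ _ => 0, fun _ => LocallyLipschitz.const 0, empty_subset _⟩

lemma IsThin.mono {B B' : Set H} (hB : IsThin B) (h : B' ⊆ B) : IsThin B' :=
  let ⟨c, hc, hBc⟩ := hB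
  ⟨c, hc, h.trans hBc⟩

/-- The union of the lines through `a` and a point of the linear cone over `B`. A segment issuing
from `a` whose end point avoids this set projects radially to a curve that misses `B`. -/
def linesToCone [NormedSpace ℝ H] (a : H) (B : Set H) : Set H :=
  {m | ∃ t l : ℝ, ∃ x ∈ B, a + t • (l • x - a) = m}

lemma smul_mem_linesToCone [NormedSpace ℝ H] (a : H) {B : Set H} {x : H} (hx : x ∈ B) (l : ℝ) :
    l • x ∈ linesToCone a B :=
  ⟨1, l, x, hx, by simp⟩

lemma dimH_range_le_three {Y : Type*} [EMetricSpace Y] {f : ℝ × ℝ × ℝ → Y}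
    (hf : LocallyLipschitz f) : dimH (range f) ≤ 3 := by
  have : dimH (range f) ≤ dimH (univ : Set (ℝ × ℝ × ℝ)) :=
    dimH_range_le_of_locally_lipschitzOn fun x => by
      obtain ⟨K, t, ht, hK⟩ := hf x
      exact ⟨K, t, by simpa using ht, hK⟩
  refine this.trans_eq ?_
  rw [Real.dimH_univ_eq_finrank]
  simp

lemma IsThin.dimH_linesToCone_le [NormedSpace ℝ H] {B : Set H} (hB : IsThin B) (a : H) :
    dimH (linesToCone a B) ≤ 3 := by
  obtain ⟨c, hc, hBc⟩ := hB
  have cover : linesToCone a B ⊆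
      ⋃ n, range (fun p : ℝ × ℝ × ℝ => a + p.1 • (p.2.1 • c n p.2.2 - a)) := by
    rintro _ ⟨t, l, x, hx, rfl⟩
    obtain ⟨n, r, rfl⟩ := mem_iUnion.1 (hBc hx)
    exact mem_iUnion.2 ⟨n, (t, l, r), rfl⟩
  refine (dimH_mono cover).trans ?_
  rw [dimH_iUnion]
  refine iSup_le fun n => dimH_range_le_three ?_
  have join : LocallyLipschitz (fun q : ℝ × ℝ × H => a + q.1 • (q.2.1 • q.2.2 - a)) :=
    ContDiff.locallyLipschitz (𝕂 := ℝ) (by fun_prop)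
  refine join.comp (LipschitzWith.prod_fst.locallyLipschitz.prodMk
    (LocallyLipschitz.prodMk ?_ ((hc n).comp ?_)))
  · exact (LipschitzWith.prod_fst.comp LipschitzWith.prod_snd).locallyLipschitz
  · exact (LipschitzWith.prod_snd.comp LipschitzWith.prod_snd).locallyLipschitz

lemma IsThin.exists_notMem_linesToCone [NormedSpace ℝ H] [FiniteDimensional ℝ H]
    (hH : 3 < Module.finrank ℝ H) {B : Set H} (hB : IsThin B) (a b : H) {O : Set H}
    (hO : IsOpen O) (hne : O.Nonempty) :
    ∃ m ∈ O, m ∉ linesToCone a B ∧ m ∉ linesToCone b B := by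
  have dim_lt : dimH (linesToCone a B ∪ linesToCone b B) < Module.finrank ℝ H := by
    rw [dimH_union]
    exact (max_le (hB.dimH_linesToCone_le a) (hB.dimH_linesToCone_le b)).trans_lt
      (by exact_mod_cast hH)
  obtain ⟨m, hm, hmB⟩ := (dense_compl_of_dimH_lt_finrank dim_lt).inter_open_nonempty O hO hne
  exact ⟨m, hm, fun h => hmB (Or.inl h), fun h => hmB (Or.inr h)⟩

end ThinSets

section CapsMinusThinSets

variable {H : Type*} [NormedAddCommGroup H] [InnerProductSpace ℝ H] {x₀ : H} {κ : ℝ}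
  {B : Set H}

lemma joinedIn_sphericalCap_diff (hκ : 0 ≤ κ) {a m : H} (ha : a ∈ sphericalCap x₀ κ)
    (haB : a ∉ B) (hm : m ∈ capCone x₀ κ) (hmB : m ∉ linesToCone a B) :
    JoinedIn (sphericalCap x₀ κ \ B) a (‖m‖⁻¹ • m) := by
  set segment : ℝ → H := fun t => a + t • (m - a)
  have mem_cone : ∀ t ∈ Icc (0 : ℝ) 1, segment t ∈ capCone x₀ κ := fun t ht => by
    convert convex_capCone x₀ hκ (sphericalCap_subset_capCone ha) hm (sub_nonneg.2 ht.2) ht.1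
      (by ring) using 1
    module
  have norm_ne (t) (ht : t ∈ Icc (0 : ℝ) 1) : ‖segment t‖ ≠ 0 :=
    norm_ne_zero_iff.2 (ne_zero_of_mem_capCone (mem_cone t ht))
  have segment_cont : Continuous segment := by fun_prop
  refine JoinedIn.ofLine (f := fun t => ‖segment t‖⁻¹ • segment t) ?_ ?_ ?_ ?_
  · exact (segment_cont.norm.continuousOn.inv₀ norm_ne).smul segment_cont.continuousOn
  · simp [segment, ha.1]
  · simp [segment]
  · rintro _ ⟨t, ht, rfl⟩
    refine ⟨normalize_mem_sphericalCap (mem_cone t ht), fun hB => ?_⟩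
    rcases eq_or_ne t 0 with rfl | ht0
    · exact haB (by simpa [segment, ha.1] using hB)
    · refine hmB ⟨t⁻¹, ‖segment t‖, _, hB, ?_⟩
      rw [smul_inv_smul₀ (norm_ne t ht), add_sub_cancel_left, inv_smul_smul₀ ht0]
      abel

lemma isPathConnected_sphericalCap_diff [FiniteDimensional ℝ H] (hH : 3 < Module.finrank ℝ H)
    (hB : IsThin B) (hx₀ : ‖x₀‖ = 1) (hκ : 0 ≤ κ) (hκ1 : κ < 1) :
    IsPathConnected (sphericalCap x₀ κ \ B) := by
  have hne : (capCone x₀ κ).Nonempty :=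
    ⟨x₀, sphericalCap_subset_capCone (mem_sphericalCap_self hx₀ hκ1)⟩
  have generic (a b : H) := hB.exists_notMem_linesToCone hH a b (isOpen_capCone x₀ κ) hne
  refine isPathConnected_iff.2 ⟨?_, fun a ha b hb => ?_⟩
  · obtain ⟨m, hm, hmB, -⟩ := generic 0 0
    refine ⟨‖m‖⁻¹ • m, normalize_mem_sphericalCap hm, fun h => hmB ?_⟩
    simpa [smul_inv_smul₀ (norm_ne_zero_iff.2 (ne_zero_of_mem_capCone hm))] using
      smul_mem_linesToCone 0 h ‖m‖
  · obtain ⟨m, hm, hma, hmb⟩ := generic a b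
    exact (joinedIn_sphericalCap_diff hκ ha.1 ha.2 hm hma).trans
      (joinedIn_sphericalCap_diff hκ hb.1 hb.2 hm hmb).symm

end CapsMinusThinSets

section ContinuousArguments

variable {X : Type*} [TopologicalSpace X] {g : X → ℂ} {φ ψ : X → ℝ} {S T : Set X}

/-- `φ` is a continuous determination on `S` of the argument of the circle-valued function `g`. -/
structure IsContinuousArgOn (φ : X → ℝ) (g : X → ℂ) (S : Set X) : Prop where
  continuousOn : ContinuousOn φ S
  apply_eq : ∀ x ∈ S, g x = Complex.exp (φ x * Complex.I)

lemma exp_int_mul_two_pi (k : ℤ) :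
    Complex.exp (((k * (2 * π) : ℝ) : ℂ) * Complex.I) = 1 :=
  Complex.exp_eq_one_iff.2 ⟨k, by push_cast; ring⟩

lemma exists_int_of_exp_eq {s t : ℝ}
    (h : Complex.exp (s * Complex.I) = Complex.exp (t * Complex.I)) :
    ∃ k : ℤ, s = t + k * (2 * π) := by
  obtain ⟨k, hk⟩ := Complex.exp_eq_exp_iff_exists_int.1 h
  refine ⟨k, ?_⟩
  have : (s : ℂ) * Complex.I = ((t + k * (2 * π) : ℝ) : ℂ) * Complex.I := by
    rw [hk]; push_cast; ring
  exact_mod_cast mul_right_cancel₀ Complex.I_ne_zero this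

lemma eq_of_isPreconnected_of_exp_eq_one (hS : IsPreconnected S) (hφ : ContinuousOn φ S)
    (h : ∀ x ∈ S, Complex.exp (φ x * Complex.I) = 1) {x y : X} (hx : x ∈ S) (hy : y ∈ S) :
    φ x = φ y := by
  have turns_mem : MapsTo (fun x => φ x / (2 * π)) S (range ((↑) : ℤ → ℝ)) := fun x hx => by
    obtain ⟨k, hk⟩ := exists_int_of_exp_eq (s := φ x) (t := 0) (by simpa using h x hx)
    exact ⟨k, by simp only [hk]; field_simp; ring⟩
  have turns_eq := hS.constant_of_mapsTo
    Int.isClosedEmbedding_coe_real.isEmbedding.isInducing.isDiscrete_range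
    (hφ.div_const _) turns_mem hx hy
  simpa [Real.pi_ne_zero] using turns_eq

namespace IsContinuousArgOn

lemma mono (h : IsContinuousArgOn φ g T) (hST : S ⊆ T) : IsContinuousArgOn φ g S :=
  ⟨h.continuousOn.mono hST, fun x hx => h.apply_eq x (hST hx)⟩

lemma sub_eq_sub (hφ : IsContinuousArgOn φ g S) (hψ : IsContinuousArgOn ψ g S)
    (hS : IsPreconnected S) {x y : X} (hx : x ∈ S) (hy : y ∈ S) : φ x - ψ x = φ y - ψ y := by
  refine eq_of_isPreconnected_of_exp_eq_one hS (hφ.continuousOn.sub hψ.continuousOn)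
    (fun z hz => ?_) hx hy
  rw [Pi.sub_apply, Complex.ofReal_sub, sub_mul, Complex.exp_sub, ← hφ.apply_eq z hz,
    ← hψ.apply_eq z hz, div_self]
  rw [hφ.apply_eq z hz]
  exact Complex.exp_ne_zero _

lemma comp {Y : Type*} [TopologicalSpace Y] {f : Y → X} {R : Set Y}
    (h : IsContinuousArgOn φ g S) (hf : ContinuousOn f R) (hR : MapsTo f R S) :
    IsContinuousArgOn (φ ∘ f) (g ∘ f) R :=
  ⟨h.continuousOn.comp hf hR, fun _ hy => h.apply_eq _ (hR hy)⟩

lemma congr {g' : X → ℂ} (h : IsContinuousArgOn φ g S) (hg : EqOn g' g S) :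
    IsContinuousArgOn φ g' S :=
  ⟨h.continuousOn, fun x hx => (hg hx).trans (h.apply_eq x hx)⟩

lemma add_int_mul_two_pi (h : IsContinuousArgOn φ g S) (k : ℤ) :
    IsContinuousArgOn (fun x => φ x + k * (2 * π)) g S := by
  refine ⟨h.continuousOn.add continuousOn_const, fun x hx => ?_⟩
  rw [Complex.ofReal_add, add_mul, Complex.exp_add, exp_int_mul_two_pi, mul_one, h.apply_eq x hx]

/-- On a connected overlap two arguments differ by a constant multiple of `2π`, so one of them can
be shifted to extend the other. -/
theorem exists_union (hφ : IsContinuousArgOn φ g S) (hψ : IsContinuousArgOn ψ g T)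
    (hS : IsOpen S) (hT : IsOpen T) (hST : IsConnected (S ∩ T)) :
    ∃ χ, IsContinuousArgOn χ g (S ∪ T) := by
  classical
  obtain ⟨q, hq⟩ := hST.nonempty
  obtain ⟨k, hk⟩ := exists_int_of_exp_eq
    ((hφ.apply_eq q hq.1).symm.trans (hψ.apply_eq q hq.2))
  have hψk := hψ.add_int_mul_two_pi k
  have agree : ∀ x ∈ S ∩ T, φ x = ψ x + k * (2 * π) := fun x hx => by
    have := sub_eq_sub (hφ.mono inter_subset_left) (hψ.mono inter_subset_right)
      hST.isPreconnected hx hq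
    linarith
  set χ : X → ℝ := fun x => if x ∈ S then φ x else ψ x + k * (2 * π)
  have eqOn_S : EqOn χ φ S := fun x hx => if_pos hx
  have eqOn_T : EqOn χ (fun x => ψ x + k * (2 * π)) T := fun x hx => by
    by_cases hxS : x ∈ S
    · exact (eqOn_S hxS).trans (agree x ⟨hxS, hx⟩)
    · exact if_neg hxS
  refine ⟨χ, (hφ.continuousOn.congr eqOn_S).union_of_isOpen
    (hψk.continuousOn.congr eqOn_T) hS hT, ?_⟩
  rintro x (hx | hx)
  · rw [eqOn_S hx, hφ.apply_eq x hx]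
  · rw [eqOn_T hx, hψk.apply_eq x hx]

end IsContinuousArgOn

lemma exists_isContinuousArgOn_univ {A : Type*} [TopologicalSpace A] [SimplyConnectedSpace A]
    [LocallyPathConnectedSpace A] {f : A → ℂ} (hf : Continuous f) (hf1 : ∀ a, ‖f a‖ = 1) (a₀ : A)
    {s₀ : ℝ} (h0 : f a₀ = Complex.exp (s₀ * Complex.I)) :
    ∃ φ, IsContinuousArgOn φ f univ ∧ φ a₀ = s₀ := by
  let f' : C(A, Circle) := ⟨fun a => ⟨f a, by simp [Submonoid.unitSphere, hf1]⟩, by fun_prop⟩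
  obtain ⟨φ, ⟨hφ0, hφ⟩, -⟩ := Circle.isCoveringMap_exp.existsUnique_continuousMap_lifts f' a₀ s₀
    (by ext; exact h0.symm)
  exact ⟨φ, ⟨φ.continuous.continuousOn,
    fun a _ => congrArg (fun c : Circle => (c : ℂ)) (congrFun hφ a).symm⟩, hφ0⟩

lemma exp_arg_mul_I {z : ℂ} (hz : ‖z‖ = 1) : Complex.exp (z.arg * Complex.I) = z := by
  simpa [hz] using Complex.norm_mul_exp_arg_mul_I z

end ContinuousArguments

section SphereArguments

variable {H : Type*} [NormedAddCommGroup H] [InnerProductSpace ℝ H]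

lemma isConnected_compl_poles (hH : 2 < Module.finrank ℝ H) (v : sphere (0 : H) 1) :
    IsConnected ({v}ᶜ ∩ {-v}ᶜ : Set (sphere (0 : H) 1)) := by
  have hv : ‖(v : H)‖ = 1 := norm_eq_of_mem_sphere v
  set σ := stereographic hv
  have source_eq : σ.source = {v}ᶜ := stereographic_source hv
  have target_eq : σ.target = univ := stereographic_target hv
  have mem_source {x} (hx : x ≠ v) : x ∈ σ.source := source_eq ▸ hx
  have apply_neg : σ (-v) = 0 := stereographic_apply_neg v
  have image_eq : σ.symm '' {0}ᶜ = {v}ᶜ ∩ {-v}ᶜ := by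
    ext x
    constructor
    · rintro ⟨w, hw, rfl⟩
      have hwt : w ∈ σ.target := target_eq ▸ mem_univ w
      refine ⟨source_eq ▸ σ.map_target hwt, fun h => hw ?_⟩
      rw [mem_singleton_iff, ← σ.right_inv hwt, mem_singleton_iff.1 h, apply_neg]
    · rintro ⟨hxv, hxv'⟩
      refine ⟨σ x, fun h => hxv' (σ.injOn (mem_source hxv) ?_ ?_), σ.left_inv (mem_source hxv)⟩
      · exact mem_source (ne_neg_of_mem_unit_sphere ℝ v).symm
      · rw [mem_singleton_iff.1 h, apply_neg]
  have : FiniteDimensional ℝ H := Module.finite_of_finrank_pos (by omega)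
  have : Fact (Module.finrank ℝ H = (Module.finrank ℝ H - 1) + 1) := ⟨by omega⟩
  have rank_gt : 1 < Module.rank ℝ (ℝ ∙ (v : H))ᗮ := by
    rw [← Module.finrank_eq_rank, Submodule.finrank_orthogonal_span_singleton
      (n := Module.finrank ℝ H - 1) (ne_zero_of_mem_unit_sphere v)]
    exact_mod_cast (by omega : 1 < Module.finrank ℝ H - 1)
  rw [← image_eq]
  exact (isConnected_compl_singleton_of_one_lt_rank rank_gt 0).image _
    (σ.continuousOn_symm.mono (by simp [target_eq]))

lemma exists_isContinuousArgOn_prod_compl {Y : Type*} [NormedAddCommGroup Y] [NormedSpace ℝ Y]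
    {f : Y × sphere (0 : H) 1 → ℂ} (hf : Continuous f) (hf1 : ∀ p, ‖f p‖ = 1)
    (v : sphere (0 : H) 1) : ∃ φ, IsContinuousArgOn φ f (univ ×ˢ {v}ᶜ) := by
  have hv : ‖(v : H)‖ = 1 := norm_eq_of_mem_sphere v
  set σ := stereographic hv
  have source_eq : σ.source = {v}ᶜ := stereographic_source hv
  have symm_cont : Continuous σ.symm :=
    continuousOn_univ.1 ((stereographic_target hv) ▸ σ.continuousOn_symm)
  obtain ⟨φ, hφ, -⟩ := exists_isContinuousArgOn_univ
    (hf.comp (continuous_id.prodMap symm_cont)) (fun p => hf1 _) 0 (exp_arg_mul_I (hf1 _)).symm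
  have chart_cont : ContinuousOn (Prod.map id σ) ((univ : Set Y) ×ˢ {v}ᶜ) :=
    continuousOn_id.prodMap (source_eq ▸ σ.continuousOn)
  refine ⟨_, (hφ.comp chart_cont (mapsTo_univ _ _)).congr fun p hp => ?_⟩
  have : σ.symm (σ p.2) = p.2 := σ.left_inv (source_eq ▸ hp.2)
  simp only [Function.comp_apply, Prod.map_apply', id, this]

theorem exists_isContinuousArgOn_prod_sphere {Y : Type*} [NormedAddCommGroup Y]
    [NormedSpace ℝ Y] (hH : 2 < Module.finrank ℝ H) {f : Y × sphere (0 : H) 1 → ℂ}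
    (hf : Continuous f) (hf1 : ∀ p, ‖f p‖ = 1) : ∃ φ, IsContinuousArgOn φ f univ := by
  have : Nontrivial H := Module.nontrivial_of_finrank_pos (R := ℝ) (by omega)
  obtain ⟨v⟩ : Nonempty (sphere (0 : H) 1) := (NormedSpace.sphere_nonempty.2 zero_le_one).to_subtype
  obtain ⟨φ, hφ⟩ := exists_isContinuousArgOn_prod_compl hf hf1 v
  obtain ⟨ψ, hψ⟩ := exists_isContinuousArgOn_prod_compl hf hf1 (-v)
  have overlap : IsConnected ((univ : Set Y) ×ˢ {v}ᶜ ∩ univ ×ˢ {-v}ᶜ) := by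
    rw [← prod_inter]
    exact isConnected_univ.prod (isConnected_compl_poles hH v)
  obtain ⟨χ, hχ⟩ := hφ.exists_union hψ (isOpen_univ.prod isOpen_compl_singleton)
    (isOpen_univ.prod isOpen_compl_singleton) overlap
  refine ⟨χ, hχ.mono fun p _ => ?_⟩
  rcases eq_or_ne p.2 v with h | h
  · exact Or.inr ⟨trivial, by simpa [h] using ne_neg_of_mem_unit_sphere ℝ v⟩
  · exact Or.inl ⟨trivial, h⟩

end SphereArguments

section Coordinates

@[simp] lemma Z_re (x : E) : (Z x).re = x 0 := by simp [Z]

@[simp] lemma Z_im (x : E) : (Z x).im = x 1 := by simp [Z]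

@[simp] lemma W_re (x : E) : (W x).re = x 2 := by simp [W]

@[simp] lemma W_im (x : E) : (W x).im = x 3 := by simp [W]

@[simp] lemma mk4_apply_zero (z w : ℂ) : mk4 z w 0 = z.re := by simp [mk4]

@[simp] lemma mk4_apply_one (z w : ℂ) : mk4 z w 1 = z.im := by simp [mk4]

@[simp] lemma mk4_apply_two (z w : ℂ) : mk4 z w 2 = w.re := by simp [mk4]

@[simp] lemma mk4_apply_three (z w : ℂ) : mk4 z w 3 = w.im := by simp [mk4]

@[simp] lemma Z_mk4 (z w : ℂ) : Z (mk4 z w) = z := by apply Complex.ext <;> simp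

@[simp] lemma W_mk4 (z w : ℂ) : W (mk4 z w) = w := by apply Complex.ext <;> simp

lemma ext_Z_W {x y : E} (hz : Z x = Z y) (hw : W x = W y) : x = y := by
  ext i
  fin_cases i
  · simpa using congrArg Complex.re hz
  · simpa using congrArg Complex.im hz
  · simpa using congrArg Complex.re hw
  · simpa using congrArg Complex.im hw

@[simp] lemma mk4_Z_W (x : E) : mk4 (Z x) (W x) = x := ext_Z_W (by simp) (by simp)

lemma continuous_mk4 : Continuous (fun p : ℂ × ℂ => mk4 p.1 p.2) := by
  refine (EuclideanSpace.equiv (Fin 4) ℝ).symm.continuous.comp (continuous_pi fun i => ?_)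
  fin_cases i <;> simp only [Fin.zero_eta, Fin.mk_one, Fin.reduceFinMk, Matrix.cons_val] <;>
    fun_prop

lemma norm_sq_eq_sum (x : E) : ‖x‖ ^ 2 = x 0 ^ 2 + x 1 ^ 2 + x 2 ^ 2 + x 3 ^ 2 := by
  rw [EuclideanSpace.real_norm_sq_eq, Fin.sum_univ_four]

lemma norm_sq_eq_Z_W (x : E) : ‖x‖ ^ 2 = ‖Z x‖ ^ 2 + ‖W x‖ ^ 2 := by
  rw [norm_sq_eq_sum, Complex.sq_norm, Complex.sq_norm, Complex.normSq_apply,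
    Complex.normSq_apply, Z_re, Z_im, W_re, W_im]
  ring

lemma norm_eq_one_iff_sum (x : E) : ‖x‖ = 1 ↔ x 0 ^ 2 + x 1 ^ 2 + x 2 ^ 2 + x 3 ^ 2 = 1 := by
  rw [← norm_sq_eq_sum, pow_eq_one_iff_of_nonneg (norm_nonneg x) two_ne_zero]

lemma norm_eq_one_iff_Z_W (x : E) : ‖x‖ = 1 ↔ ‖Z x‖ ^ 2 + ‖W x‖ ^ 2 = 1 := by
  rw [← norm_sq_eq_Z_W, pow_eq_one_iff_of_nonneg (norm_nonneg x) two_ne_zero]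

lemma norm_mk4_sqrt (z : ℂ) (hz : ‖z‖ ≤ 1) {w : ℂ} (hw : ‖w‖ = 1) :
    ‖mk4 z (√(1 - ‖z‖ ^ 2) * w)‖ = 1 := by
  rw [norm_eq_one_iff_Z_W, Z_mk4, W_mk4, norm_mul, hw, mul_one, Complex.norm_real,
    Real.norm_of_nonneg (Real.sqrt_nonneg _), Real.sq_sqrt (by nlinarith [norm_nonneg z])]
  ring

end Coordinates

section UnlinkGeometry

/-- The complement of the unlink in the unit sphere, as a subset of the ambient space. -/
def unlinkCompl : Set E := {x | ‖x‖ = 1 ∧ Z x ≠ 0 ∧ Z x ≠ 1 / 2}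

/-- The unlink, as a subset of the ambient space. -/
def unlinkSet : Set E := {x | ‖x‖ = 1 ∧ (Z x = 0 ∨ Z x = 1 / 2)}

lemma sphere_diff_unlinkSet : sphere (0 : E) 1 \ unlinkSet = unlinkCompl := by
  ext x
  simp only [unlinkSet, unlinkCompl, mem_sdiff, mem_sphere_zero_iff_norm, mem_ofPred_eq]
  tauto

/-- The punctured tube of radius `R` around the component `Z = c` of the unlink. -/
def puncturedTube (c R : ℝ) : Set E := {x | ‖x‖ = 1 ∧ Z x ≠ c ∧ ‖Z x - c‖ < R}

/-- Polar coordinates `(r, θ, ψ)` around the circle `Z = c`: `Z = c + r e ^ (iθ)` and `ψ` is the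
argument of `W`. -/
def tubeParam (c : ℝ) (p : ℝ × ℝ × ℝ) : E :=
  mk4 (c + p.1 * Complex.exp (p.2.1 * Complex.I))
    (√(1 - ‖(c + p.1 * Complex.exp (p.2.1 * Complex.I) : ℂ)‖ ^ 2) *
      Complex.exp (p.2.2 * Complex.I))

lemma continuous_tubeParam (c : ℝ) : Continuous (tubeParam c) := by
  refine continuous_mk4.comp (Continuous.prodMk ?_ ?_) <;> fun_prop

lemma tubeParam_polar {c : ℝ} {x : E} (hx : ‖x‖ = 1) :
    tubeParam c (‖Z x - c‖, (Z x - c).arg, (W x).arg) = x := by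
  have norm_W : √(1 - ‖Z x‖ ^ 2) = ‖W x‖ := by
    rw [← (norm_eq_one_iff_Z_W x).1 hx, add_sub_cancel_left, Real.sqrt_sq (norm_nonneg _)]
  simp only [tubeParam]
  rw [Complex.norm_mul_exp_arg_mul_I, add_sub_cancel, norm_W, Complex.norm_mul_exp_arg_mul_I,
    mk4_Z_W]

lemma tubeParam_mem_puncturedTube {c R r θ ψ : ℝ} (hc : 0 ≤ c) (hcR : c + R ≤ 1) (hr : 0 < r)
    (hrR : r < R) : tubeParam c (r, θ, ψ) ∈ puncturedTube c R := by
  have norm_offset : ‖(r * Complex.exp (θ * Complex.I) : ℂ)‖ = r := by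
    rw [norm_mul, Complex.norm_exp_ofReal_mul_I, mul_one, Complex.norm_of_nonneg hr.le]
  have norm_le : ‖(c + r * Complex.exp (θ * Complex.I) : ℂ)‖ ≤ 1 := by
    refine (norm_add_le _ _).trans ?_
    rw [norm_offset, Complex.norm_of_nonneg hc]
    linarith
  refine ⟨norm_mk4_sqrt _ norm_le (Complex.norm_exp_ofReal_mul_I ψ), ?_, ?_⟩
  · simp [tubeParam, hr.ne', Complex.exp_ne_zero]
  · simpa only [tubeParam, Z_mk4, add_sub_cancel_left, norm_offset] using hrR

lemma isPathConnected_puncturedTube {c R : ℝ} (hc : 0 ≤ c) (hR : 0 < R) (hcR : c + R ≤ 1) :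
    IsPathConnected (puncturedTube c R) := by
  have image_eq : tubeParam c '' (Ioo 0 R ×ˢ univ ×ˢ univ) = puncturedTube c R := by
    ext x
    constructor
    · rintro ⟨⟨r, θ, ψ⟩, ⟨⟨hr, hrR⟩, -⟩, rfl⟩
      exact tubeParam_mem_puncturedTube hc hcR hr hrR
    · rintro ⟨hx, hxc, hxR⟩
      exact ⟨_, ⟨⟨norm_pos_iff.2 (sub_ne_zero.2 hxc), hxR⟩, trivial, trivial⟩,
        tubeParam_polar hx⟩
  rw [← image_eq]
  refine IsPathConnected.image (Convex.isPathConnected ?_ ?_) (continuous_tubeParam c)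
  · exact (convex_Ioo _ _).prod (convex_univ.prod convex_univ)
  · exact ⟨(R / 2, 0, 0), ⟨by positivity, by linarith⟩, trivial, trivial⟩

lemma abs_sub_lt_of_mem_puncturedTube {c R : ℝ} {x : E} (hx : x ∈ puncturedTube c R) :
    |x 0 - c| < R := by
  simpa using (Complex.abs_re_le_norm (Z x - c)).trans_lt hx.2.2

lemma puncturedTube_zero_subset : puncturedTube 0 (1 / 4) ⊆ unlinkCompl := by
  refine fun x hx => ⟨hx.1, by simpa using hx.2.1, fun h => ?_⟩
  have h0 : x 0 = 1 / 2 := by simpa using congrArg Complex.re h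
  have := abs_lt.1 (abs_sub_lt_of_mem_puncturedTube hx)
  linarith

lemma puncturedTube_half_subset : puncturedTube (1 / 2) (1 / 8) ⊆ unlinkCompl := by
  refine fun x hx => ⟨hx.1, fun h => ?_, by simpa using hx.2.1⟩
  have h0 : x 0 = 0 := by simpa using congrArg Complex.re h
  have := abs_lt.1 (abs_sub_lt_of_mem_puncturedTube hx)
  linarith

/-- A thickened 2-sphere in `S³` separating the two components of the unlink. -/
def slab : Set E := {x | ‖x‖ = 1 ∧ 1 / 8 < x 0 ∧ x 0 < 7 / 16}

lemma mem_unlinkCompl_of_mem_Icc {x : E} (hx : ‖x‖ = 1) (h0 : x 0 ∈ Icc (1 / 8) (7 / 16)) :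
    x ∈ unlinkCompl := by
  refine ⟨hx, fun h => ?_, fun h => ?_⟩
  · have : x 0 = 0 := by simpa using congrArg Complex.re h
    linarith [h0.1]
  · have : x 0 = 1 / 2 := by simpa using congrArg Complex.re h
    linarith [h0.2]

lemma slab_subset : slab ⊆ unlinkCompl := fun _ hx =>
  mem_unlinkCompl_of_mem_Icc hx.1 ⟨hx.2.1.le, hx.2.2.le⟩

/-- The point of `S³` at height `h`, clamped to `[1/8, 7/16]`, in the direction `y`. -/
def slabParam (p : ℝ × sphere (0 : E3) 1) : E :=
  let c : ℝ := projIcc (1 / 8) (7 / 16) (by norm_num) p.1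
  mk4 ⟨c, √(1 - c ^ 2) * (p.2 : E3) 0⟩
    ⟨√(1 - c ^ 2) * (p.2 : E3) 1, √(1 - c ^ 2) * (p.2 : E3) 2⟩

lemma continuous_slabParam : Continuous slabParam := by
  refine (EuclideanSpace.equiv (Fin 4) ℝ).symm.continuous.comp (continuous_pi fun i => ?_)
  have : Continuous fun p : ℝ × sphere (0 : E3) 1 =>
      (projIcc (1 / 8 : ℝ) (7 / 16) (by norm_num) p.1 : ℝ) :=
    continuous_subtype_val.comp (continuous_projIcc.comp continuous_fst)
  fin_cases i <;> simp only [Fin.zero_eta, Fin.mk_one, Fin.reduceFinMk, Matrix.cons_val] <;>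
    fun_prop

lemma slabParam_mem_unlinkCompl (p : ℝ × sphere (0 : E3) 1) : slabParam p ∈ unlinkCompl := by
  set c := projIcc (1 / 8 : ℝ) (7 / 16) (by norm_num) p.1 with hc
  have hy : (p.2 : E3) 0 ^ 2 + (p.2 : E3) 1 ^ 2 + (p.2 : E3) 2 ^ 2 = 1 := by
    rw [← Fin.sum_univ_three fun i => (p.2 : E3) i ^ 2, ← EuclideanSpace.real_norm_sq_eq,
      norm_eq_of_mem_sphere, one_pow]
  have hr : √(1 - (c : ℝ) ^ 2) ^ 2 = 1 - (c : ℝ) ^ 2 :=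
    Real.sq_sqrt (by nlinarith [c.2.1, c.2.2])
  refine mem_unlinkCompl_of_mem_Icc ?_ ?_
  · simp only [norm_eq_one_iff_sum, slabParam, mk4_apply_zero, mk4_apply_one, mk4_apply_two,
      mk4_apply_three, ← hc]
    linear_combination √(1 - (c : ℝ) ^ 2) ^ 2 * hy + hr
  · simpa only [slabParam, mk4_apply_zero] using c.2

/-- The last three coordinates of a point of `ℝ⁴`. -/
def latitude (x : E) : E3 := !₂[x 1, x 2, x 3]

lemma continuous_latitude : Continuous latitude := by
  refine (PiLp.continuous_toLp 2 _).comp (continuous_pi fun i => ?_)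
  fin_cases i <;> simp only [Fin.zero_eta, Fin.mk_one, Fin.reduceFinMk, Matrix.cons_val] <;>
    fun_prop

lemma norm_latitude {x : E} (hx : ‖x‖ = 1) : ‖latitude x‖ = √(1 - x 0 ^ 2) := by
  rw [norm_eq_one_iff_sum] at hx
  rw [EuclideanSpace.norm_eq, Fin.sum_univ_three]
  simp only [latitude, Real.norm_eq_abs, sq_abs, Matrix.cons_val]
  congr 1
  linarith

lemma sqrt_pos_of_mem_slab {x : E} (hx : x ∈ slab) : 0 < √(1 - x 0 ^ 2) :=
  Real.sqrt_pos.2 (by nlinarith [hx.2.1, hx.2.2])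

/-- The height and the direction of a point of the slab. -/
def slabChart (x : slab) : ℝ × sphere (0 : E3) 1 :=
  (x.1 0, ⟨(√(1 - x.1 0 ^ 2))⁻¹ • latitude x, by
    have := sqrt_pos_of_mem_slab x.2
    rw [mem_sphere_zero_iff_norm, norm_smul, norm_latitude x.2.1, norm_inv,
      Real.norm_of_nonneg this.le, inv_mul_cancel₀ this.ne']⟩)

lemma continuous_slabChart : Continuous slabChart := by
  have height_cont : Continuous fun x : slab => x.1 0 := by fun_prop
  refine height_cont.prodMk (Continuous.subtype_mk ?_ _)
  have radius_cont : Continuous fun x : slab => √(1 - x.1 0 ^ 2) := by fun_prop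
  exact (radius_cont.inv₀ fun x => (sqrt_pos_of_mem_slab x.2).ne').smul
    (continuous_latitude.comp continuous_subtype_val)

lemma slabParam_slabChart (x : slab) : slabParam (slabChart x) = x := by
  have hr := (sqrt_pos_of_mem_slab x.2).ne'
  have clamp : (projIcc (1 / 8 : ℝ) (7 / 16) (by norm_num) (x.1 0) : ℝ) = x.1 0 := by
    rw [projIcc_of_mem _ ⟨x.2.2.1.le, x.2.2.2.le⟩]
  ext i
  fin_cases i <;> simp [slabParam, slabChart, clamp, latitude, mul_inv_cancel_left₀ hr]

theorem exists_isContinuousArgOn_slab {g : E → ℂ} (hg : ContinuousOn g unlinkCompl)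
    (hg1 : ∀ x ∈ unlinkCompl, ‖g x‖ = 1) : ∃ φ, IsContinuousArgOn φ g slab := by
  classical
  obtain ⟨φ, hφ⟩ := exists_isContinuousArgOn_prod_sphere (by simp)
    (hg.comp_continuous continuous_slabParam slabParam_mem_unlinkCompl)
    fun p => hg1 _ (slabParam_mem_unlinkCompl p)
  refine ⟨fun x => if hx : x ∈ slab then φ (slabChart ⟨x, hx⟩) else 0, ?_, fun x hx => ?_⟩
  · rw [continuousOn_iff_continuous_domRestrict]
    refine ((continuousOn_univ.1 hφ.continuousOn).comp continuous_slabChart).congr fun x => ?_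
    simp only [Function.comp_apply, domRestrict_apply, x.2, dite_true, Subtype.coe_eta]
  · rw [dif_pos hx, ← hφ.apply_eq _ (mem_univ _), Function.comp_apply, slabParam_slabChart]

end UnlinkGeometry

section LocallyPathDense

variable {X : Type*} [TopologicalSpace X] {Y G : Set X}

/-- The set `G` is locally path-dense in `Y` if every point of `Y` has arbitrarily small
neighbourhoods in `Y` whose trace on `G` is path connected (in particular nonempty). Paths in `Y`
can then be pushed into `G`. -/
def IsLocallyPathDense (G Y : Set X) : Prop :=
  ∀ y ∈ Y, ∀ O ∈ nhdsWithin y Y, ∃ N ∈ nhdsWithin y Y, N ⊆ O ∧ IsPathConnected (N ∩ G)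

namespace IsLocallyPathDense

theorem joinedIn (hG : IsLocallyPathDense G Y) {a b : X} (ha : a ∈ G) (hb : b ∈ G)
    (hab : JoinedIn Y a b) : JoinedIn G a b := by
  obtain ⟨p, hp⟩ := hab
  have tendsto_path (t : unitInterval) :
      Filter.Tendsto p (nhds t) (nhdsWithin (p t) Y) :=
    tendsto_nhdsWithin_iff.2 ⟨p.continuous.tendsto t, Filter.Eventually.of_forall hp⟩
  let reached : Set unitInterval :=
    {t | ∀ᶠ z in nhdsWithin (p t) Y, z ∈ G → JoinedIn G a z}
  have isOpen_reached : IsOpen reached := isOpen_iff_mem_nhds.2 fun t ht =>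
    tendsto_path t (eventually_eventually_nhdsWithin.2 ht)
  have isClosed_reached : IsClosed reached := by
    rw [← isOpen_compl_iff, isOpen_iff_mem_nhds]
    intro t ht
    obtain ⟨N, hN, -, hNG⟩ := hG (p t) (hp t) univ Filter.univ_mem
    have unreached : ∀ z ∈ N ∩ G, ¬ JoinedIn G a z := fun z hz haz => ht <| by
      filter_upwards [hN] with w hwN hwG
      exact haz.trans ((hNG.joinedIn z hz w ⟨hwN, hwG⟩).mono inter_subset_right)
    filter_upwards [tendsto_path t (eventually_eventually_nhdsWithin.2 hN)] with t' hNt' ht'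
    obtain ⟨N', -, hN'O, hN'G⟩ := hG (p t') (hp t') _ (Filter.inter_mem hNt' ht')
    obtain ⟨z, hzN', hzG⟩ := hN'G.nonempty
    exact unreached z ⟨(hN'O hzN').1, hzG⟩ ((hN'O hzN').2 hzG)
  have zero_mem : 0 ∈ reached := by
    obtain ⟨N, hN, -, hNG⟩ := hG (p 0) (hp 0) univ Filter.univ_mem
    filter_upwards [hN] with z hzN hzG
    have haN : a ∈ N := p.source ▸ mem_of_mem_nhdsWithin (hp 0) hN
    exact (hNG.joinedIn a ⟨haN, ha⟩ z ⟨hzN, hzG⟩).mono inter_subset_right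
  have reached_eq := IsClopen.eq_univ ⟨isClosed_reached, isOpen_reached⟩ ⟨0, zero_mem⟩
  have one_mem : 1 ∈ reached := reached_eq ▸ mem_univ _
  rw [← p.target] at hb ⊢
  exact Filter.Eventually.self_of_nhdsWithin one_mem (hp 1) hb

theorem exists_joinedIn_map (hG : IsLocallyPathDense G Y) (hY : IsLocallyPathDense Y Y)
    (hGY : G ⊆ Y) {τ : X → X} (hτ : Continuous τ) (hτY : MapsTo τ Y Y) (hτG : MapsTo τ G G) {y : X}
    (hy : JoinedIn Y y (τ y)) : ∃ a, JoinedIn G a (τ a) := by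
  obtain ⟨N, hN, -, hNY⟩ := hY y hy.source_mem univ Filter.univ_mem
  obtain ⟨N', -, hN'N, hN'G⟩ := hG y hy.source_mem N hN
  obtain ⟨a, haN', haG⟩ := hN'G.nonempty
  have hay : JoinedIn Y a y := (hNY.joinedIn a ⟨hN'N haN', hGY haG⟩ y
    ⟨mem_of_mem_nhdsWithin hy.source_mem hN, hy.source_mem⟩).mono inter_subset_right
  have hτay : JoinedIn Y (τ a) (τ y) := (hay.map hτ).mono hτY.image_subset
  exact ⟨a, hG.joinedIn haG (hτG haG) ((hay.trans hy).trans hτay.symm)⟩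

end IsLocallyPathDense

end LocallyPathDense

section ArgCover

variable {X : Type*} {f : X → ℂ} {S G : Set X}

/-- The infinite cyclic cover of `S` determined by a circle-valued function `f`: a point over `x`
is a real argument of `f x`. -/
def argCover (f : X → ℂ) (S : Set X) : Set (X × ℝ) :=
  {p | p.1 ∈ S ∧ f p.1 = Complex.exp (p.2 * Complex.I)}

/-- The generator of the deck transformations of an infinite cyclic cover. -/
def deckShift (p : X × ℝ) : X × ℝ := (p.1, p.2 + 2 * π)

lemma mapsTo_deckShift : MapsTo deckShift (argCover f S) (argCover f S) := fun p hp => by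
  refine ⟨hp.1, ?_⟩
  simp only [deckShift, Complex.ofReal_add, add_mul, Complex.exp_add, hp.2]
  simp

lemma argCover_mono {f : X → ℂ} (h : G ⊆ S) : argCover f G ⊆ argCover f S :=
  fun _ hp => ⟨h hp.1, hp.2⟩

lemma eq_of_exp_eq_of_abs_sub_lt {s t : ℝ}
    (h : Complex.exp (s * Complex.I) = Complex.exp (t * Complex.I)) (hst : |s - t| < 2 * π) :
    s = t := by
  obtain ⟨k, hk⟩ := exists_int_of_exp_eq h
  rw [hk, add_sub_cancel_left, abs_mul, abs_of_pos Real.two_pi_pos,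
    mul_lt_iff_lt_one_left Real.two_pi_pos] at hst
  have hk0 : k = 0 := Int.abs_lt_one_iff.1 (by exact_mod_cast hst)
  simp [hk, hk0]

/-- The branch of `argCover f S` near `x₀` that passes through `(x₀, s₀)`. -/
def argBranch (f : X → ℂ) (x₀ : X) (s₀ : ℝ) (x : X) : X × ℝ := (x, s₀ + (f x / f x₀).arg)

lemma continuousOn_argBranch [TopologicalSpace X] (hf : ContinuousOn f S) (x₀ : X) (s₀ : ℝ) :
    ContinuousOn (argBranch f x₀ s₀) {x ∈ S | 0 < (f x / f x₀).re} := by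
  refine continuousOn_id.prodMk (continuousOn_const.add fun x hx => ?_)
  exact ContinuousAt.comp_continuousWithinAt (f := fun x => f x / f x₀)
    (Complex.continuousAt_arg (Or.inl hx.2)) (((hf x hx.1).mono (sep_subset _ _)).div_const _)

section Branch

variable (hf1 : ∀ x ∈ S, ‖f x‖ = 1) {x₀ : X} {s₀ : ℝ} (hp : (x₀, s₀) ∈ argCover f S)
include hf1 hp

lemma argBranch_mem_argCover {x : X} (hx : x ∈ S) : argBranch f x₀ s₀ x ∈ argCover f S := by
  have hx₀ : f x₀ ≠ 0 := norm_ne_zero_iff.1 (by simp [hf1 x₀ hp.1])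
  have ratio := exp_arg_mul_I (z := f x / f x₀) (by simp [hf1 x hx, hf1 x₀ hp.1])
  refine ⟨hx, ?_⟩
  simp only [argBranch, Complex.ofReal_add, add_mul, Complex.exp_add, ← hp.2, ratio]
  field_simp

lemma argBranch_self : argBranch f x₀ s₀ x₀ = (x₀, s₀) := by
  have hx₀ : f x₀ ≠ 0 := norm_ne_zero_iff.1 (by simp [hf1 x₀ hp.1])
  simp [argBranch, hx₀]

lemma argBranch_eq {x : X} {s : ℝ} (hxs : (x, s) ∈ argCover f S)
    (hre : 0 < (f x / f x₀).re) (hs : |s - s₀| < π) : argBranch f x₀ s₀ x = (x, s) := by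
  have hmem := argBranch_mem_argCover hf1 hp hxs.1
  have harg := abs_lt.1 (Complex.abs_arg_lt_pi_div_two_iff.2 (Or.inl hre))
  have hs' := abs_lt.1 hs
  refine Prod.ext rfl (eq_of_exp_eq_of_abs_sub_lt (hmem.2.symm.trans hxs.2) ?_)
  simp only [argBranch]
  rw [abs_lt]
  constructor <;> linarith [Real.pi_pos]

variable [TopologicalSpace X] (hf : ContinuousOn f S)
include hf

lemma eventually_re_div_pos : ∀ᶠ x in nhdsWithin x₀ S, 0 < (f x / f x₀).re := by
  have hx₀ : f x₀ ≠ 0 := norm_ne_zero_iff.1 (by simp [hf1 x₀ hp.1])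
  have := Complex.continuous_re.continuousAt.comp_continuousWithinAt
    ((hf x₀ hp.1).div_const (f x₀))
  exact this.eventually (lt_mem_nhds (by simp [hx₀]))

end Branch

variable [TopologicalSpace X]

lemma continuous_deckShift : Continuous (deckShift : X × ℝ → X × ℝ) := by
  unfold deckShift
  fun_prop

theorem IsLocallyPathDense.argCover (hG : IsLocallyPathDense G S) (hf : ContinuousOn f S)
    (hf1 : ∀ x ∈ S, ‖f x‖ = 1) : IsLocallyPathDense (argCover f G) (argCover f S) := by
  rintro ⟨x₀, s₀⟩ hp O hO
  have branch_self := argBranch_self hf1 hp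
  have half_mem := eventually_re_div_pos hf1 hp hf
  have branch_tendsto : Filter.Tendsto (argBranch f x₀ s₀) (nhdsWithin x₀ S)
      (nhdsWithin (x₀, s₀) (MorseNovikov.argCover f S)) := by
    refine tendsto_nhdsWithin_iff.2 ⟨?_, ?_⟩
    · have hc := continuousOn_argBranch hf x₀ s₀ x₀ ⟨hp.1, half_mem.self_of_nhdsWithin hp.1⟩
      rw [← branch_self]
      exact hc.mono_left (nhdsWithin_le_iff.2 (Filter.inter_mem self_mem_nhdsWithin half_mem))
    · filter_upwards [self_mem_nhdsWithin] with x hx using argBranch_mem_argCover hf1 hp hx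
  obtain ⟨N, hN, hNsub, hNG⟩ := hG x₀ hp.1 _
    (Filter.inter_mem (branch_tendsto hO) (Filter.inter_mem self_mem_nhdsWithin half_mem))
  refine ⟨argBranch f x₀ s₀ '' N, ?_, image_subset_iff.2 fun x hx => (hNsub hx).1, ?_⟩
  · have fst_tendsto : Filter.Tendsto Prod.fst
        (nhdsWithin (x₀, s₀) (MorseNovikov.argCover f S)) (nhdsWithin x₀ S) :=
      continuous_fst.continuousWithinAt.tendsto_nhdsWithin fun _ hp => hp.1
    have level_near : ∀ᶠ p : X × ℝ in nhdsWithin (x₀, s₀) (MorseNovikov.argCover f S),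
        |p.2 - s₀| < π := by
      have : Continuous fun p : X × ℝ => |p.2 - s₀| := by fun_prop
      exact this.continuousWithinAt.eventually (gt_mem_nhds (by simp [Real.pi_pos]))
    filter_upwards [fst_tendsto hN, level_near, self_mem_nhdsWithin] with p hpN hps hpS
    exact ⟨p.1, hpN, argBranch_eq hf1 hp hpS (hNsub hpN).2.2 hps⟩
  · have image_eq : argBranch f x₀ s₀ '' N ∩ MorseNovikov.argCover f G =
        argBranch f x₀ s₀ '' (N ∩ G) := by
      ext p
      constructor
      · rintro ⟨⟨x, hx, rfl⟩, hpG⟩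
        exact ⟨x, ⟨hx, hpG.1⟩, rfl⟩
      · rintro ⟨x, ⟨hx, hxG⟩, rfl⟩
        exact ⟨⟨x, hx, rfl⟩, hxG, (argBranch_mem_argCover hf1 hp (hNsub hx).2.1).2⟩
    rw [image_eq]
    exact hNG.image' ((continuousOn_argBranch hf x₀ s₀).mono fun x hx => (hNsub hx.1).2)

theorem exists_joinedIn_argCover (hf : ContinuousOn f S) (hf1 : ∀ x ∈ S, ‖f x‖ = 1) {x y : X}
    (hxy : JoinedIn S x y) {s : ℝ} (hs : (x, s) ∈ argCover f S) :
    ∃ t, JoinedIn (argCover f S) (x, s) (y, t) := by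
  obtain ⟨p, hp⟩ := hxy
  obtain ⟨φ, hφ, hφ0⟩ := exists_isContinuousArgOn_univ (hf.comp_continuous p.continuous_extend
    fun t => hp _) (fun t => hf1 _ (hp _)) 0 (s₀ := s) (by simpa using hs.2)
  refine ⟨φ 1, JoinedIn.ofLine (f := fun t => (p.extend t, φ t))
    (p.continuous_extend.continuousOn.prodMk (hφ.continuousOn.mono (subset_univ _)))
    (by simp [hφ0]) (by simp) ?_⟩
  rintro _ ⟨t, -, rfl⟩
  exact ⟨hp _, hφ.apply_eq t (mem_univ t)⟩

lemma joinedIn_argCover_of_eq_one {a b : X} (h : JoinedIn {x ∈ S | f x = 1} a b) (k : ℤ) :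
    JoinedIn (argCover f S) (a, k * (2 * π)) (b, k * (2 * π)) := by
  refine (h.map (Continuous.prodMk_left (k * (2 * π) : ℝ))).mono ?_
  rintro _ ⟨x, ⟨hxS, hx1⟩, rfl⟩
  exact ⟨hxS, hx1.trans (exp_int_mul_two_pi k).symm⟩

/-- `η` is a closed curve in `A`, parametrized by the angle, along which the circle-valued function
`g` turns exactly once, at unit speed. -/
structure IsMeridianIn (η : ℝ → X) (g : X → ℂ) (A : Set X) : Prop where
  continuous : Continuous η
  mem : ∀ θ, η θ ∈ A
  apply_eq : ∀ θ : ℝ, g (η θ) = g (η 0) * Complex.exp (θ * Complex.I)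
  periodic : η (2 * π) = η 0

theorem IsMeridianIn.joinedIn_deckShift {η : ℝ → X} (hη : IsMeridianIn η f S)
    (hS : IsPathConnected S) (hf : ContinuousOn f S) (hf1 : ∀ x ∈ S, ‖f x‖ = 1) {p : X × ℝ}
    (hp : p ∈ argCover f S) : JoinedIn (argCover f S) p (deckShift p) := by
  obtain ⟨t, ht⟩ := exists_joinedIn_argCover hf hf1 (hS.joinedIn p.1 hp.1 (η 0) (hη.mem 0)) hp
  have ht' : JoinedIn (argCover f S) (deckShift p) (deckShift (η 0, t)) :=
    (ht.map continuous_deckShift).mono mapsTo_deckShift.image_subset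
  have turn : JoinedIn (argCover f S) (η 0, t) (deckShift (η 0, t)) := by
    have hc := hη.continuous
    refine JoinedIn.ofLine (f := fun r => (η (r * (2 * π)), t + r * (2 * π)))
      (by fun_prop) (by simp) (by simp only [deckShift, one_mul, hη.periodic]) ?_
    rintro _ ⟨r, -, rfl⟩
    have base : f (η 0) = Complex.exp (t * Complex.I) := ht.target_mem.2
    refine ⟨hη.mem _, ?_⟩
    rw [hη.apply_eq, base, ← Complex.exp_add, ← add_mul, ← Complex.ofReal_add]
  exact (ht.trans turn).trans ht'.symm

/-- A loop on which `c (·, 0)` has degree one would be deformed by `c` to a loop of degree zero. -/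
theorem not_joinedIn_deckShift_of_homotopy {c : X × ℝ → ℂ} (hc : ContinuousOn c (S ×ˢ univ))
    (hc1 : ∀ p ∈ S ×ˢ (univ : Set ℝ), ‖c p‖ = 1)
    (hend : ∀ K ⊆ S, IsCompact K → ∃ T, ∀ x ∈ K, c (x, T) = 1) (a : X × ℝ) :
    ¬ JoinedIn (argCover (fun x => c (x, 0)) S) a (deckShift a) := by
  rintro ⟨p, hp⟩
  have hp' (t : ℝ) : p.extend t ∈ argCover (fun x => c (x, 0)) S := hp _
  let x (t : ℝ) : X := (p.extend t).1
  have hx : Continuous x := continuous_fst.comp p.continuous_extend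
  have extend_one : p.extend 1 = deckShift (p.extend 0) := by rw [p.extend_one, p.extend_zero]
  have x_one : x 1 = x 0 := (congrArg Prod.fst extend_one :)
  obtain ⟨T, hT⟩ := hend (x '' Icc 0 1) (image_subset_iff.2 fun t _ => (hp' t).1)
    (isCompact_Icc.image hx)
  obtain ⟨L, hL, -⟩ := exists_isContinuousArgOn_univ
    (hc.comp_continuous (hx.prodMap continuous_id) fun q => ⟨(hp' q.1).1, trivial⟩)
    (fun q => hc1 _ ⟨(hp' q.1).1, trivial⟩) ((0 : ℝ), (0 : ℝ)) (hp' 0).2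
  have hLc := continuousOn_univ.1 hL.continuousOn
  have bottom : L (1, 0) - (p.extend 1).2 = L (0, 0) - (p.extend 0).2 := by
    have levels : IsContinuousArgOn (fun t => (p.extend t).2) (fun t => c (x t, 0)) univ :=
      ⟨(continuous_snd.comp p.continuous_extend).continuousOn, fun t _ => (hp' t).2⟩
    exact (hL.comp (f := fun t => (t, (0 : ℝ))) (by fun_prop) (mapsTo_univ _ _)).sub_eq_sub
      levels isPreconnected_univ (mem_univ 1) (mem_univ 0)
  have sides : L (0, T) - L (1, T) = L (0, 0) - L (1, 0) := by
    have right := hL.comp (f := fun r => ((1 : ℝ), r)) (R := univ) (by fun_prop) (mapsTo_univ _ _)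
    have left := hL.comp (f := fun r => ((0 : ℝ), r)) (R := univ) (by fun_prop) (mapsTo_univ _ _)
    exact left.sub_eq_sub (right.congr fun r _ => by simp [x_one]) isPreconnected_univ
      (mem_univ T) (mem_univ 0)
  have top : L (1, T) = L (0, T) := by
    refine eq_of_isPreconnected_of_exp_eq_one (φ := fun t => L (t, T)) isPreconnected_Icc
      (by fun_prop) (fun t ht => ?_) (right_mem_Icc.2 zero_le_one) (left_mem_Icc.2 zero_le_one)
    rw [← hL.apply_eq (t, T) (mem_univ _)]
    exact hT _ (mem_image_of_mem x ht)
  have shift : (p.extend 1).2 = (p.extend 0).2 + 2 * π := congrArg Prod.snd extend_one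
  linarith [Real.pi_pos]

end ArgCover

section CuttingFunction

/-- A cutoff of the height, equal to `0` up to height `1/4` and to `1` from height `3/8` on. -/
def ramp (h : ℝ) : ℝ := max 0 (min 1 (8 * h - 2))

lemma continuous_ramp : Continuous ramp := by
  unfold ramp
  fun_prop

lemma ramp_eq_zero {h : ℝ} (hh : h ≤ 1 / 4) : ramp h = 0 :=
  max_eq_left ((min_le_right _ _).trans (by linarith))

lemma ramp_eq_one {h : ℝ} (hh : 3 / 8 ≤ h) : ramp h = 1 := by
  rw [ramp, min_eq_left (by linarith), max_eq_right zero_le_one]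

open Classical in
/-- The circle-valued function on the infinite cyclic cover of the complement of the unlink that
is dual to the lift of the separating sphere to the level `φ`, by the Pontryagin–Thom
construction. -/
def cuttingFun (φ : E → ℝ) (p : E × ℝ) : ℂ :=
  if p.1 ∈ slab ∧ |p.2 - φ p.1| < π then
    Complex.exp ((ramp (p.1 0) * (2 * π) : ℝ) * Complex.I)
  else 1

variable {φ : E → ℝ} {p : E × ℝ}

lemma norm_cuttingFun (φ : E → ℝ) (p : E × ℝ) : ‖cuttingFun φ p‖ = 1 := by
  unfold cuttingFun
  split_ifs
  · exact Complex.norm_exp_ofReal_mul_I _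
  · exact norm_one

lemma cuttingFun_of_height (h : p.1 0 ≤ 1 / 4 ∨ 3 / 8 ≤ p.1 0) : cuttingFun φ p = 1 := by
  unfold cuttingFun
  split_ifs
  · rcases h with h | h
    · simp [ramp_eq_zero h]
    · simp [ramp_eq_one h]
  · rfl

lemma cuttingFun_of_level (h : π ≤ |p.2 - φ p.1|) : cuttingFun φ p = 1 :=
  if_neg fun hp => hp.2.not_ge h

variable {g : E → ℂ} (hφ : IsContinuousArgOn φ g slab)
include hφ

lemma abs_sub_ne_pi {x : E} {s : ℝ} (hx : x ∈ slab) (hs : g x = Complex.exp (s * Complex.I)) :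
    |s - φ x| ≠ π := by
  obtain ⟨k, hk⟩ := exists_int_of_exp_eq (hs.symm.trans (hφ.apply_eq x hx))
  rw [hk, add_sub_cancel_left, abs_mul, abs_of_pos Real.two_pi_pos]
  intro h
  have twice : 2 * |k| = 1 := by
    have : (2 * |(k : ℝ)|) * π = 1 * π := by linarith
    exact_mod_cast mul_right_cancel₀ Real.pi_ne_zero this
  omega

lemma continuousWithinAt_cuttingFun_of_mem_slab {x : E} {s : ℝ}
    (hp : (x, s) ∈ argCover g unlinkCompl) (hx : x ∈ slab) :
    ContinuousWithinAt (cuttingFun φ) (argCover g unlinkCompl) (x, s) := by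
  have slab_near : ∀ᶠ p in nhdsWithin (x, s) (argCover g unlinkCompl), p.1 ∈ slab := by
    have height_cont : Continuous fun p : E × ℝ => p.1 0 := by fun_prop
    filter_upwards [mem_nhdsWithin_of_mem_nhds ((isOpen_Ioo.preimage height_cont).mem_nhds hx.2),
      self_mem_nhdsWithin] with p hheight hpS using ⟨hpS.1.1, hheight⟩
  have level_cont : ContinuousWithinAt (fun p : E × ℝ => |p.2 - φ p.1|)
      (argCover g unlinkCompl) (x, s) := by
    have : Filter.Tendsto (fun p : E × ℝ => φ p.1)
        (nhdsWithin (x, s) (argCover g unlinkCompl)) (nhds (φ x)) :=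
      (hφ.continuousOn x hx).tendsto.comp
        (tendsto_nhdsWithin_iff.2 ⟨continuous_fst.continuousWithinAt, slab_near⟩)
    exact (continuous_snd.continuousWithinAt.sub this).abs
  rcases (abs_sub_ne_pi hφ hx hp.2).lt_or_gt with hlt | hgt
  · have ramp_cont := continuous_ramp
    have formula_cont : Continuous fun p : E × ℝ =>
      Complex.exp ((ramp (p.1 0) * (2 * π) : ℝ) * Complex.I) := by fun_prop
    refine formula_cont.continuousWithinAt.congr_of_eventuallyEq ?_ (if_pos ⟨hx, hlt⟩)
    filter_upwards [slab_near, level_cont.eventually (gt_mem_nhds hlt)] with p hpslab hplevel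
      using if_pos ⟨hpslab, hplevel⟩
  · refine continuousWithinAt_const.congr_of_eventuallyEq ?_ (cuttingFun_of_level hgt.le)
    filter_upwards [level_cont.eventually (lt_mem_nhds hgt)] with p hp
      using cuttingFun_of_level hp.le

theorem continuousOn_cuttingFun : ContinuousOn (cuttingFun φ) (argCover g unlinkCompl) := by
  rintro ⟨x, s⟩ hp
  by_cases hx : x ∈ slab
  · exact continuousWithinAt_cuttingFun_of_mem_slab hφ hp hx
  have height : x 0 < 1 / 4 ∨ 3 / 8 < x 0 := by
    by_contra! h
    exact hx ⟨hp.1.1, by linarith, by linarith⟩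
  have height_cont : Continuous fun p : E × ℝ => p.1 0 := by fun_prop
  have height_near : ∀ᶠ p : E × ℝ in nhds (x, s), p.1 0 < 1 / 4 ∨ 3 / 8 < p.1 0 :=
    ((isOpen_Iio.union isOpen_Ioi).preimage height_cont).mem_nhds height
  refine continuousWithinAt_const.congr_of_eventuallyEq (f := fun _ => 1) ?_
    (cuttingFun_of_height (height.imp le_of_lt le_of_lt))
  filter_upwards [mem_nhdsWithin_of_mem_nhds height_near] with p hp
    using cuttingFun_of_height (hp.imp le_of_lt le_of_lt)

end CuttingFunction

section DegreeOneLoop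

/-- The arc in the slab that crosses the separating sphere, parametrized by height. -/
def crossingArc (h : ℝ) : E := mk4 h (√(1 - h ^ 2) : ℝ)

lemma continuous_crossingArc : Continuous crossingArc :=
  continuous_mk4.comp
    (Complex.continuous_ofReal.prodMk (Complex.continuous_ofReal.comp (by fun_prop)))

lemma Z_crossingArc (h : ℝ) : Z (crossingArc h) = h := Z_mk4 _ _

lemma crossingArc_zero (h : ℝ) : crossingArc h 0 = h := by simp [crossingArc]

lemma norm_crossingArc {h : ℝ} (hh : h ∈ Icc (0 : ℝ) 1) : ‖crossingArc h‖ = 1 := by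
  rw [norm_eq_one_iff_Z_W, crossingArc, Z_mk4, W_mk4, Complex.norm_real, Complex.norm_real,
    Real.norm_eq_abs, Real.norm_eq_abs, sq_abs, sq_abs, Real.sq_sqrt (by nlinarith [hh.1, hh.2])]
  ring

lemma crossingArc_mem_slab {h : ℝ} (hh : h ∈ Ioo (1 / 8 : ℝ) (7 / 16)) : crossingArc h ∈ slab :=
  ⟨norm_crossingArc ⟨by linarith [hh.1], by linarith [hh.2]⟩, by simpa [crossingArc_zero] using hh⟩

lemma crossingArc_mem_puncturedTube {c R h : ℝ} (hh : h ∈ Icc (0 : ℝ) 1) (hc : h ≠ c)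
    (hR : |h - c| < R) : crossingArc h ∈ puncturedTube c R := by
  refine ⟨norm_crossingArc hh, ?_, ?_⟩
  · rw [Z_crossingArc]
    exact_mod_cast hc
  · rwa [Z_crossingArc, ← Complex.ofReal_sub, Complex.norm_real]

variable {g : E → ℂ} {φ : E → ℝ}

/-- The point over the crossing arc at height `h` on the distinguished lift of the slab. -/
def liftedArc (φ : E → ℝ) (h : ℝ) : E × ℝ := (crossingArc h, φ (crossingArc h))

section

variable (hφ : IsContinuousArgOn φ g slab)
include hφ

lemma liftedArc_mem {h : ℝ} (hh : h ∈ Ioo (1 / 8 : ℝ) (7 / 16)) :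
    liftedArc φ h ∈ argCover g unlinkCompl :=
  ⟨slab_subset (crossingArc_mem_slab hh), hφ.apply_eq _ (crossingArc_mem_slab hh)⟩

lemma continuousOn_liftedArc : ContinuousOn (liftedArc φ) (Ioo (1 / 8) (7 / 16)) :=
  continuous_crossingArc.continuousOn.prodMk
    (hφ.continuousOn.comp continuous_crossingArc.continuousOn fun _ => crossingArc_mem_slab)

lemma joinedIn_crossing : JoinedIn (argCover (cuttingFun φ) (argCover g unlinkCompl))
    (liftedArc φ (1 / 5), 0) (liftedArc φ (2 / 5), 2 * π) := by
  have heights : MapsTo (fun t : ℝ => 1 / 5 + t * (1 / 5)) (Icc 0 1) (Ioo (1 / 8) (7 / 16)) :=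
    fun t ht => ⟨by linarith [ht.1], by linarith [ht.2]⟩
  have ramp_cont := continuous_ramp
  refine JoinedIn.ofLine (f := fun t => (liftedArc φ (1 / 5 + t * (1 / 5)),
    ramp (1 / 5 + t * (1 / 5)) * (2 * π))) ?_ ?_ ?_ ?_
  · exact ((continuousOn_liftedArc hφ).comp (by fun_prop) heights).prodMk
      (Continuous.continuousOn (by fun_prop))
  · simp [ramp_eq_zero (show (5 : ℝ)⁻¹ ≤ 1 / 4 by norm_num)]
  · norm_num [ramp_eq_one]
  · rintro _ ⟨t, ht, rfl⟩
    refine ⟨liftedArc_mem hφ (heights ht), ?_⟩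
    have on_level : |(liftedArc φ (1 / 5 + t * (1 / 5))).2
        - φ (liftedArc φ (1 / 5 + t * (1 / 5))).1| < π := by simp [liftedArc, Real.pi_pos]
    simp only [cuttingFun]
    rw [if_pos ⟨crossingArc_mem_slab (heights ht), on_level⟩]
    simp only [liftedArc, crossingArc_zero]

lemma joinedIn_shifted_crossing :
    JoinedIn {p ∈ argCover g unlinkCompl | cuttingFun φ p = 1}
      (deckShift (liftedArc φ (1 / 5))) (deckShift (liftedArc φ (2 / 5))) := by
  have heights : Icc (1 / 5 : ℝ) (2 / 5) ⊆ Ioo (1 / 8) (7 / 16) :=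
    fun t ht => ⟨by linarith [ht.1], by linarith [ht.2]⟩
  have arc_connected : IsPathConnected (deckShift ∘ liftedArc φ '' Icc (1 / 5) (2 / 5)) :=
    ((convex_Icc _ _).isPathConnected (nonempty_Icc.2 (by norm_num))).image'
      (continuous_deckShift.comp_continuousOn ((continuousOn_liftedArc hφ).mono heights))
  refine (arc_connected.joinedIn _ (mem_image_of_mem _ (left_mem_Icc.2 (by norm_num))) _
    (mem_image_of_mem _ (right_mem_Icc.2 (by norm_num)))).mono ?_
  rintro _ ⟨h, hh, rfl⟩
  refine ⟨mapsTo_deckShift (liftedArc_mem hφ (heights hh)), cuttingFun_of_level ?_⟩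
  simp only [Function.comp_apply, deckShift, liftedArc, add_sub_cancel_left]
  rw [abs_of_pos Real.two_pi_pos]
  linarith [Real.pi_pos]

end

variable (hg : ContinuousOn g unlinkCompl) (hg1 : ∀ x ∈ unlinkCompl, ‖g x‖ = 1)
include hg hg1

lemma IsMeridianIn.joinedIn_deckShift_of_height {η : ℝ → E} {A : Set E} (hη : IsMeridianIn η g A)
    (hA : IsPathConnected A) (hAX : A ⊆ unlinkCompl)
    (hheight : ∀ x ∈ A, x 0 ≤ 1 / 4 ∨ 3 / 8 ≤ x 0) {p : E × ℝ} (hp : p ∈ argCover g A) :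
    JoinedIn {p ∈ argCover g unlinkCompl | cuttingFun φ p = 1} p (deckShift p) :=
  (hη.joinedIn_deckShift hA (hg.mono hAX) (fun x hx => hg1 x (hAX hx)) hp).mono
    fun _ hq => ⟨argCover_mono hAX hq, cuttingFun_of_height (hheight _ hq.1)⟩

/-- Cross the lifted sphere, follow the second meridian, cross back on the next sheet, where the
sphere has no lift, and return along the first meridian. -/
theorem joinedIn_deckShift_of_meridians (hφ : IsContinuousArgOn φ g slab) {η₁ η₂ : ℝ → E}
    (hη₁ : IsMeridianIn η₁ g (puncturedTube 0 (1 / 4)))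
    (hη₂ : IsMeridianIn η₂ g (puncturedTube (1 / 2) (1 / 8))) :
    JoinedIn (argCover (cuttingFun φ) (argCover g unlinkCompl))
      (liftedArc φ (1 / 5), 0) (deckShift (liftedArc φ (1 / 5), 0)) := by
  have first : JoinedIn {p ∈ argCover g unlinkCompl | cuttingFun φ p = 1}
      (liftedArc φ (1 / 5)) (deckShift (liftedArc φ (1 / 5))) := by
    refine hη₁.joinedIn_deckShift_of_height hg hg1
      (isPathConnected_puncturedTube le_rfl (by norm_num) (by norm_num))
      puncturedTube_zero_subset (fun x hx => Or.inl ?_)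
      ⟨crossingArc_mem_puncturedTube (by norm_num) (by norm_num) (by norm_num [abs_lt]),
        (liftedArc_mem hφ (by norm_num)).2⟩
    linarith [(abs_lt.1 (abs_sub_lt_of_mem_puncturedTube hx)).2]
  have second : JoinedIn {p ∈ argCover g unlinkCompl | cuttingFun φ p = 1}
      (liftedArc φ (2 / 5)) (deckShift (liftedArc φ (2 / 5))) := by
    refine hη₂.joinedIn_deckShift_of_height hg hg1
      (isPathConnected_puncturedTube (by norm_num) (by norm_num) (by norm_num))
      puncturedTube_half_subset (fun x hx => Or.inr ?_)
      ⟨crossingArc_mem_puncturedTube (by norm_num) (by norm_num) (by norm_num [abs_lt]),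
        (liftedArc_mem hφ (by norm_num)).2⟩
    linarith [(abs_lt.1 (abs_sub_lt_of_mem_puncturedTube hx)).1]
  have around := (second.trans (joinedIn_shifted_crossing hφ).symm).trans first.symm
  simpa [deckShift] using
    (joinedIn_crossing hφ).trans (by simpa using joinedIn_argCover_of_eq_one around 1)

end DegreeOneLoop

section LiftedFlow

variable {A : Type*} [NormedAddCommGroup A] [NormedSpace ℝ A]
  {g : A → ℂ} {V : A → A} {Φ : Flow ℝ A} {X : Set A}

/-- The lift of the flow `Φ` of `V` to the infinite cyclic cover `argCover g X`. -/
def liftedFlow (g : A → ℂ) (V : A → A) (Φ : Flow ℝ A) (p : (A × ℝ) × ℝ) : A × ℝ :=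
  (Φ p.2 p.1.1, p.1.2 + accumulatedAngle g V Φ p.1.1 p.2)

lemma liftedFlow_zero (p : A × ℝ) : liftedFlow g V Φ (p, 0) = p := by
  simp [liftedFlow, accumulatedAngle_zero]

variable (hg : IsCircleMapNear g X) (hV : Continuous V) (hX : IsInvariant Φ X)
include hg hV hX

lemma mapsTo_liftedFlow (hΦ : IsFlowOf Φ V) :
    MapsTo (liftedFlow g V Φ) (argCover g X ×ˢ univ) (argCover g X) := by
  rintro ⟨⟨x, s⟩, T⟩ ⟨⟨hx, hs⟩, -⟩
  refine ⟨hX T hx, ?_⟩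
  simp only [liftedFlow] at hs ⊢
  rw [apply_flow_eq hg hV hX hΦ hx, hs, ← Complex.exp_add]
  push_cast
  ring_nf

lemma continuousOn_liftedFlow : ContinuousOn (liftedFlow g V Φ) (argCover g X ×ˢ univ) := by
  have angle : ContinuousOn (fun q : A × ℝ => accumulatedAngle g V Φ q.1 q.2) (X ×ˢ univ) := by
    have base : Continuous fun q : X ×ˢ (univ : Set ℝ) => ((⟨q.1.1, q.2.1⟩, q.1.2) : X × ℝ) :=
      (Continuous.subtype_mk (continuous_fst.comp continuous_subtype_val) _).prodMk
        (continuous_snd.comp continuous_subtype_val)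
    have comp_base := (continuous_accumulatedAngle hg hV hX).comp base
    exact continuousOn_iff_continuous_domRestrict.2 comp_base
  refine (Φ.cont'.comp (f := fun p : (A × ℝ) × ℝ => (p.2, p.1.1))
    (by fun_prop)).continuousOn.prodMk (continuous_fst.snd.continuousOn.add ?_)
  exact angle.comp (f := fun p : (A × ℝ) × ℝ => (p.1.1, p.2)) (by fun_prop)
    fun p hp => ⟨hp.1.1, trivial⟩

end LiftedFlow

section Obstruction

lemma isLocallyPathDense_diff {B : Set E} (hB : IsThin B) :
    IsLocallyPathDense (unlinkCompl \ B) unlinkCompl := by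
  intro y hy O hO
  have nonvanishing_near : {x : E | Z x ≠ 0 ∧ Z x ≠ 1 / 2} ∈ nhds y :=
    ((isOpen_ne_fun continuous_Z continuous_const).inter
      (isOpen_ne_fun continuous_Z continuous_const)).mem_nhds hy.2
  obtain ⟨O', hO', hO'O⟩ := mem_nhdsWithin_iff_exists_mem_nhds_inter.1 hO
  obtain ⟨κ, hκ, hκ1, cap_subset⟩ :=
    exists_sphericalCap_subset hy.1 (Filter.inter_mem hO' nonvanishing_near)
  have cap_subset_compl : sphericalCap y κ ⊆ unlinkCompl :=
    fun x hx => ⟨hx.1, (cap_subset hx).2⟩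
  refine ⟨sphericalCap y κ, ?_, fun x hx => hO'O ⟨(cap_subset hx).1, cap_subset_compl hx⟩, ?_⟩
  · have height_near : {x : E | κ < inner ℝ x y} ∈ nhds y :=
      (isOpen_lt continuous_const (by fun_prop)).mem_nhds (mem_sphericalCap_self hy.1 hκ1).2
    filter_upwards [mem_nhdsWithin_of_mem_nhds height_near, self_mem_nhdsWithin] with x hx hxX
      using ⟨hxX.1, hx⟩
  · rw [← inter_sdiff_assoc, inter_eq_left.2 cap_subset_compl]
    exact isPathConnected_sphericalCap_diff (by simp) hB hy.1 hκ hκ1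

lemma exists_le_of_slabCore {φ : E → ℝ} (hφ : ContinuousOn φ slab) :
    ∃ m, ∀ x : E, ‖x‖ = 1 → x 0 ∈ Icc (1 / 4) (3 / 8) → m ≤ φ x := by
  have compact : IsCompact (sphere (0 : E) 1 ∩ (fun x : E => x 0) ⁻¹' Icc (1 / 4) (3 / 8)) :=
    (isCompact_sphere _ _).inter_right (isClosed_Icc.preimage (by fun_prop))
  have subset_slab : sphere (0 : E) 1 ∩ (fun x : E => x 0) ⁻¹' Icc (1 / 4) (3 / 8) ⊆ slab :=
    fun x hx => ⟨by simpa using hx.1, by linarith [hx.2.1], by linarith [hx.2.2]⟩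
  obtain ⟨m, hm⟩ := (compact.image_of_continuousOn (hφ.mono subset_slab)).bddBelow
  exact ⟨m, fun x hx h0 => hm ⟨x, ⟨by simpa using hx, h0⟩, rfl⟩⟩

lemma exists_uniform_lt {X : Type*} [TopologicalSpace X] {K : Set X} (hK : IsCompact K)
    {R : X → ℝ → ℝ} {M : ℝ} (hR : ∀ T, ContinuousOn (R · T) K) (hanti : ∀ x ∈ K, Antitone (R x))
    (h : ∀ x ∈ K, ∃ T, R x T < M) : ∃ T, ∀ x ∈ K, R x T < M := by
  refine (hK.induction_on (p := fun A => ∃ T, ∀ x ∈ A ∩ K, R x T < M) ⟨0, by simp⟩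
    (fun A A' hA ⟨T, hT⟩ => ⟨T, fun x hx => hT x ⟨hA hx.1, hx.2⟩⟩) ?_ ?_).imp
    fun T hT x hx => hT x ⟨hx, hx⟩
  · rintro A A' ⟨T, hT⟩ ⟨T', hT'⟩
    refine ⟨max T T', ?_⟩
    rintro x ⟨hx | hx, hxK⟩
    · exact (hanti x hxK (le_max_left _ _)).trans_lt (hT x ⟨hx, hxK⟩)
    · exact (hanti x hxK (le_max_right _ _)).trans_lt (hT' x ⟨hx, hxK⟩)
  · intro x hx
    obtain ⟨T, hT⟩ := h x hx
    refine ⟨_, (hR T x hx).eventually (gt_mem_nhds hT), T, fun y hy => hy.1⟩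

variable {g : E → ℂ} (hg : IsCircleMapNear g unlinkCompl)
include hg

lemma exists_joinedIn_deckShift_diff {φ : E → ℝ} (hφ : IsContinuousArgOn φ g slab)
    {η₁ η₂ : ℝ → E} (hη₁ : IsMeridianIn η₁ g (puncturedTube 0 (1 / 4)))
    (hη₂ : IsMeridianIn η₂ g (puncturedTube (1 / 2) (1 / 8))) {B : Set E} (hB : IsThin B) :
    ∃ a, JoinedIn (argCover (cuttingFun φ) (argCover g (unlinkCompl \ B))) a (deckShift a) := by
  have dense {B : Set E} (hB : IsThin B) :
      IsLocallyPathDense (argCover (cuttingFun φ) (argCover g (unlinkCompl \ B)))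
        (argCover (cuttingFun φ) (argCover g unlinkCompl)) :=
    ((isLocallyPathDense_diff hB).argCover hg.continuousOn fun x => hg.norm_eq_one).argCover
      (continuousOn_cuttingFun hφ) fun p _ => norm_cuttingFun φ p
  refine (dense hB).exists_joinedIn_map (by simpa using dense isThin_empty)
    (argCover_mono (argCover_mono sdiff_subset)) continuous_deckShift mapsTo_deckShift
    mapsTo_deckShift (joinedIn_deckShift_of_meridians hg.continuousOn (fun x => hg.norm_eq_one)
      hφ hη₁ hη₂)

theorem false_of_descending_flow {η₁ η₂ : ℝ → E}
    (hη₁ : IsMeridianIn η₁ g (puncturedTube 0 (1 / 4)))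
    (hη₂ : IsMeridianIn η₂ g (puncturedTube (1 / 2) (1 / 8))) {V : E → E} {Φ : Flow ℝ E}
    (hΦ : IsFlowOf Φ V) (hV : Continuous V) (hX : IsInvariant Φ unlinkCompl)
    (hdec : ∀ x ∈ unlinkCompl, angularDeriv g x (V x) ≤ 0) {B : Set E} (hB : IsThin B)
    (hdesc : ∀ x ∈ unlinkCompl \ B, ∀ M, ∃ T, accumulatedAngle g V Φ x T < M) : False := by
  obtain ⟨φ, hφ⟩ := exists_isContinuousArgOn_slab hg.continuousOn fun x => hg.norm_eq_one
  obtain ⟨m, hm⟩ := exists_le_of_slabCore hφ.continuousOn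
  obtain ⟨a, ha⟩ := exists_joinedIn_deckShift_diff hg hφ hη₁ hη₂ hB
  have cover_subset : argCover g (unlinkCompl \ B) ⊆ argCover g unlinkCompl :=
    argCover_mono sdiff_subset
  have flow_cont := (continuousOn_liftedFlow hg hV hX).mono (prod_mono_left cover_subset)
  have flow_mem := (mapsTo_liftedFlow hg hV hX hΦ).mono_left (prod_mono_left cover_subset)
  refine not_joinedIn_deckShift_of_homotopy (c := fun q => cuttingFun φ (liftedFlow g V Φ q))
    ((continuousOn_cuttingFun hφ).comp flow_cont flow_mem) (fun _ _ => norm_cuttingFun _ _)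
    (fun K hKS hK => ?_) a (by simpa only [liftedFlow_zero] using ha)
  obtain ⟨T, hT⟩ := exists_uniform_lt hK (R := fun p T => (liftedFlow g V Φ (p, T)).2)
    (M := m - π) (fun T => (flow_cont.comp (f := fun p => (p, T)) (by fun_prop)
      fun p hp => ⟨hKS hp, trivial⟩).snd)
    (fun p hp T T' hTT' => add_le_add_right
      (antitone_accumulatedAngle hg hV hX hdec (hKS hp).1.1 hTT') _)
    (fun p hp => (hdesc _ (hKS hp).1 (m - π - p.2)).imp fun T hT => by
      simp only [liftedFlow]
      linarith)
  refine ⟨T, fun p hp => ?_⟩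
  by_cases height : (liftedFlow g V Φ (p, T)).1 0 ∈ Icc (1 / 4) (3 / 8)
  · refine cuttingFun_of_level ?_
    have below := hm _ (flow_mem (⟨hKS hp, trivial⟩ : (p, T) ∈ _ ×ˢ univ)).1.1 height
    rw [abs_of_nonpos] <;> linarith [hT p hp, Real.pi_pos]
  · refine cuttingFun_of_height ?_
    by_contra! h
    exact height ⟨h.1.le, h.2.le⟩

end Obstruction

section DescentFields

variable {H : Type*} [NormedAddCommGroup H] [InnerProductSpace ℝ H] {g : H → ℂ} {S K O : Set H}
  {V V₀ : H → H} {c : ℝ}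

/-- `g` is a circle-valued function on the complement of the binding `S` in the unit sphere,
infinitesimally constant along radii, and every point of `S` has a neighbourhood with a vector
field that vanishes on `S` and along which `g` turns at unit speed. The last condition is what
boundary regularity provides, and it lets descending fields be extended by zero over `S`. -/
structure IsOpenBookMap (g : H → ℂ) (S : Set H) : Prop
    extends IsCircleMapNear g (sphere 0 1 \ S) where
  angularDeriv_radial : ∀ x ∈ sphere (0 : H) 1 \ S, ∀ᶠ y in nhds x, angularDeriv g y y = 0
  exists_rotation : ∀ x ∈ S, ∃ O ∈ nhds x, ∃ R : H → H, ContDiffOn ℝ (⊤ : ℕ∞) R O ∧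
    (∀ y ∈ O ∩ S, R y = 0) ∧ ∀ y ∈ O ∩ (sphere 0 1 \ S), angularDeriv g y (R y) = 1

/-- A bounded Lipschitz vector field tangent to the spheres about the origin, vanishing on the
binding `S`, and along which `g` turns backwards at speed at least `c` on the part of the unit
sphere outside `S` and `K`. -/
structure IsDescentField (g : H → ℂ) (V : H → H) (S K : Set H) (c : ℝ) : Prop where
  exists_lipschitzWith : ∃ L : NNReal, LipschitzWith L V
  exists_bound : ∃ C : NNReal, ∀ x, ‖V x‖ ≤ C
  inner_self_eq_zero : ∀ x, inner ℝ (V x) x = 0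
  eq_zero : ∀ x ∈ S, V x = 0
  angularDeriv_le : ∀ x ∈ (sphere 0 1 \ S) \ K, angularDeriv g x (V x) ≤ -c

/-- The vectors which a field at `x` may take in order to vanish on `S`, to agree with `V₀` on `K`
and to turn `g` backwards at speed at least `c` elsewhere on the unit sphere. -/
def descentValues (g : H → ℂ) (S K : Set H) (V₀ : H → H) (c : ℝ) (x : H) : Set H :=
  {v | (x ∈ S → v = 0) ∧ (x ∈ K → v = V₀ x) ∧
    (x ∈ (sphere 0 1 \ S) \ K → angularDeriv g x v ≤ -c)}

lemma convex_descentValues (x : H) : Convex ℝ (descentValues g S K V₀ c x) := by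
  intro v hv w hw a b ha hb hab
  refine ⟨fun hx => ?_, fun hx => ?_, fun hx => ?_⟩
  · rw [hv.1 hx, hw.1 hx, smul_zero, smul_zero, add_zero]
  · rw [hv.2.1 hx, hw.2.1 hx, ← add_smul, hab, one_smul]
  · rw [map_add, map_smul, map_smul, smul_eq_mul, smul_eq_mul]
    calc a * angularDeriv g x v + b * angularDeriv g x w ≤ a * -c + b * -c := by
          gcongr
          exacts [hv.2.2 hx, hw.2.2 hx]
      _ = -c := by rw [← add_mul, hab, one_mul]

lemma exists_contDiffOn_mem_descentValues_of_mem (hg : IsOpenBookMap g S) (hK : IsClosed K)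
    (hc : c ≤ 1) {x : H} (hxK : x ∉ K) (hxS : x ∈ S) :
    ∃ U ∈ nhds x, ∃ Y : H → H, ContDiffOn ℝ (⊤ : ℕ∞) Y U ∧
      ∀ y ∈ U, Y y ∈ descentValues g S K V₀ c y := by
  obtain ⟨U, hU, R, hR, hR0, hR1⟩ := hg.exists_rotation x hxS
  refine ⟨U ∩ Kᶜ, Filter.inter_mem hU (hK.isOpen_compl.mem_nhds hxK), fun y => -R y,
    hR.neg.mono inter_subset_left, fun y hy => ⟨fun hyS => ?_, fun hyK => (hy.2 hyK).elim,
      fun hyX => ?_⟩⟩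
  · simp only [hR0 y ⟨hy.1, hyS⟩, neg_zero]
  · rw [map_neg, hR1 y ⟨hy.1, hyX.1⟩]
    linarith

lemma exists_contDiffOn_mem_descentValues_of_angularDeriv_ne_zero (hg : IsOpenBookMap g S)
    (hS : IsClosed S) (hK : IsClosed K) {x : H} (hxK : x ∉ K) (hxS : x ∈ sphere (0 : H) 1 \ S)
    (hx : angularDeriv g x ≠ 0) :
    ∃ U ∈ nhds x, ∃ Y : H → H, ContDiffOn ℝ (⊤ : ℕ∞) Y U ∧
      ∀ y ∈ U, Y y ∈ descentValues g S K V₀ c y := by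
  obtain ⟨v, hv⟩ := DFunLike.ne_iff.1 hx
  have cont : ContinuousAt (fun y => angularDeriv g y ((-(c + 1) / angularDeriv g x v) • v)) x :=
    (hg.contDiffAt_angularDeriv hxS).continuousAt.clm_apply continuousAt_const
  have descends : ∀ᶠ y in nhds x, angularDeriv g y ((-(c + 1) / angularDeriv g x v) • v) < -c := by
    refine cont.eventually (gt_mem_nhds ?_)
    simp only [map_smul, smul_eq_mul]
    rw [div_mul_cancel₀ _ hv]
    linarith
  refine ⟨{y | _ < -c} ∩ (Sᶜ ∩ Kᶜ), Filter.inter_mem descends <| Filter.inter_mem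
    (hS.isOpen_compl.mem_nhds hxS.2) (hK.isOpen_compl.mem_nhds hxK), fun _ => _,
    contDiffOn_const, fun y hy => ⟨fun h => (hy.2.1 h).elim, fun h => (hy.2.2 h).elim,
      fun _ => hy.1.le⟩⟩

lemma exists_contDiffOn_mem_descentValues (hg : IsOpenBookMap g S) (hS : IsClosed S)
    (hK : IsClosed K) (hO : IsOpen O) (hKO : K ⊆ O) (hOS : Disjoint O S)
    (hV₀ : ContDiffOn ℝ (⊤ : ℕ∞) V₀ O) (hc : c ≤ 1)
    (hdec : ∀ y ∈ (O ∩ sphere 0 1) \ K, angularDeriv g y (V₀ y) ≤ -c)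
    (hreg : ∀ x ∈ (sphere 0 1 \ S) \ K, angularDeriv g x ≠ 0) (x : H) :
    ∃ U ∈ nhds x, ∃ Y : H → H, ContDiffOn ℝ (⊤ : ℕ∞) Y U ∧
      ∀ y ∈ U, Y y ∈ descentValues g S K V₀ c y := by
  by_cases hxK : x ∈ K
  · exact ⟨O, hO.mem_nhds (hKO hxK), V₀, hV₀, fun y hy =>
      ⟨fun hyS => (disjoint_left.1 hOS hy hyS).elim, fun _ => rfl,
        fun hyX => hdec y ⟨⟨hy, hyX.1.1⟩, hyX.2⟩⟩⟩
  by_cases hxS : x ∈ S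
  · exact exists_contDiffOn_mem_descentValues_of_mem hg hK hc hxK hxS
  by_cases hx : x ∈ sphere (0 : H) 1
  · exact exists_contDiffOn_mem_descentValues_of_angularDeriv_ne_zero hg hS hK hxK ⟨hx, hxS⟩
      (hreg x ⟨⟨hx, hxS⟩, hxK⟩)
  · exact ⟨(sphere 0 1)ᶜ ∩ Kᶜ, Filter.inter_mem (isClosed_sphere.isOpen_compl.mem_nhds hx)
      (hK.isOpen_compl.mem_nhds hxK), fun _ => 0, contDiffOn_const, fun y hy =>
      ⟨fun _ => rfl, fun hyK => (hy.2 hyK).elim, fun hyX => (hy.1 hyX.1.1).elim⟩⟩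

lemma exists_lipschitzWith_tangent [FiniteDimensional ℝ H] (hV : ContDiff ℝ (⊤ : ℕ∞) V) :
    ∃ V' : H → H, (∃ L : NNReal, LipschitzWith L V') ∧ (∃ C : NNReal, ∀ x, ‖V' x‖ ≤ C) ∧
      (∀ x, inner ℝ (V' x) x = 0) ∧
      ∀ x ∈ sphere (0 : H) 1, V' x = V x - (inner ℝ (V x) x : ℝ) • x := by
  let b : ContDiffBump (0 : H) := ⟨2, 3, by norm_num, by norm_num⟩
  let V' : H → H := fun x => b x • ((‖x‖ ^ 2) • V x - (inner ℝ (V x) x : ℝ) • x)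
  have smooth : ContDiff ℝ (⊤ : ℕ∞) V' := b.contDiff.smul
    (((contDiff_norm_sq ℝ).smul hV).sub ((hV.inner ℝ contDiff_id).smul contDiff_id))
  have compactSupport : HasCompactSupport V' := b.hasCompactSupport.smul_right
  obtain ⟨C, hC⟩ := compactSupport.exists_bound_of_continuous smooth.continuous
  refine ⟨V', (smooth.of_le (m := 1) (by simp)).lipschitzWith_of_hasCompactSupport compactSupport
    (by simp), ⟨C.toNNReal, fun x => (hC x).trans (Real.le_coe_toNNReal C)⟩, fun x => ?_,
    fun x hx => ?_⟩
  · simp only [V', inner_smul_left, inner_sub_left, real_inner_self_eq_norm_sq, conj_trivial]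
    ring
  · rw [mem_sphere_zero_iff_norm] at hx
    have bump_eq_one : b x = 1 := b.one_of_mem_closedBall (by simp [b, hx])
    simp only [V', bump_eq_one, hx, one_pow, one_smul]

theorem exists_isDescentField [FiniteDimensional ℝ H] (hg : IsOpenBookMap g S) (hS : IsClosed S)
    (hSs : S ⊆ sphere 0 1) (hK : IsClosed K) (hO : IsOpen O) (hKO : K ⊆ O) (hOS : Disjoint O S)
    (hV₀ : ContDiffOn ℝ (⊤ : ℕ∞) V₀ O) (htan : ∀ y ∈ K, inner ℝ (V₀ y) y = 0) (hc : c ≤ 1)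
    (hdec : ∀ y ∈ (O ∩ sphere 0 1) \ K, angularDeriv g y (V₀ y) ≤ -c)
    (hreg : ∀ x ∈ (sphere 0 1 \ S) \ K, angularDeriv g x ≠ 0) :
    ∃ V, IsDescentField g V S K c ∧ EqOn V V₀ (K ∩ sphere 0 1) := by
  obtain ⟨V, hV⟩ := exists_contMDiffMap_forall_mem_convex_of_local (n := (⊤ : ℕ∞)) 𝓘(ℝ, H)
    (convex_descentValues (g := g) (S := S) (K := K) (V₀ := V₀) (c := c)) fun x =>
    let ⟨U, hU, Y, hY, hYmem⟩ := exists_contDiffOn_mem_descentValues hg hS hK hO hKO hOS hV₀ hc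
      hdec hreg x
    ⟨U, hU, Y, hY.contMDiffOn, hYmem⟩
  obtain ⟨V', lipschitz, bounded, tangent, hV'⟩ :=
    exists_lipschitzWith_tangent V.contMDiff.contDiff
  refine ⟨V', ⟨lipschitz, bounded, tangent, fun x hx => ?_, fun x hx => ?_⟩, fun x hx => ?_⟩
  · rw [hV' x (hSs hx), (hV x).1 hx, inner_zero_left, zero_smul, sub_zero]
  · rw [hV' x hx.1.1, map_sub, map_smul, (hg.angularDeriv_radial x hx.1).self_of_nhds, smul_zero,
      sub_zero]
    exact (hV x).2.2 hx
  · rw [hV' x hx.2, (hV x).2.1 hx.1, htan x hx.1, zero_smul, sub_zero]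

end DescentFields

section UnboundedDescent

variable {A : Type*} [NormedAddCommGroup A] [NormedSpace ℝ A] {g : A → ℂ} {X K K' : Set A}
  {V : A → A} {Φ : Flow ℝ A} {c δ : ℝ} {x : A}

lemma accumulatedAngle_add_le (hg : IsCircleMapNear g X) (hV : Continuous V)
    (hX : IsInvariant Φ X) (hx : x ∈ X) {t h : ℝ} (hh : 0 ≤ h)
    (hdec : ∀ s ∈ Ioo t (t + h), angularDeriv g (Φ s x) (V (Φ s x)) ≤ -c) :
    accumulatedAngle g V Φ x (t + h) ≤ accumulatedAngle g V Φ x t - c * h := by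
  have deriv_angle := hasDerivAt_accumulatedAngle hg hV hX hx
  have := (convex_Icc t (t + h)).image_sub_le_mul_sub_of_deriv_le (C := -c)
    (fun s _ => (deriv_angle s).continuousAt.continuousWithinAt)
    (fun s _ => (deriv_angle s).differentiableAt.differentiableWithinAt)
    (fun s hs => (deriv_angle s).deriv.trans_le (hdec s (by rwa [interior_Icc] at hs)))
    t (left_mem_Icc.2 (by linarith)) (t + h) (right_mem_Icc.2 (by linarith)) (by linarith)
  linarith

/-- A point outside `K` at time `t` needs a definite time to reach `K'`, and `g` turns backwards
at speed `c` during that time. -/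
theorem exists_accumulatedAngle_lt (hg : IsCircleMapNear g X) (hΦ : IsFlowOf Φ V)
    (hV : Continuous V) (hX : IsInvariant Φ X) {C : NNReal} (hC : ∀ x, ‖V x‖ ≤ C)
    (hdec : ∀ x ∈ X, angularDeriv g x (V x) ≤ 0) (hc : 0 < c) (hδ : 0 < δ)
    (hK' : ∀ x ∈ X \ K', angularDeriv g x (V x) ≤ -c) (hKK' : thickening δ K' ⊆ K) (hx : x ∈ X)
    (hout : ∀ T, ∃ t ≥ T, Φ t x ∉ K) (M : ℝ) : ∃ T, accumulatedAngle g V Φ x T < M := by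
  set angle := accumulatedAngle g V Φ x
  set h : ℝ := δ / (C + 1)
  have h_pos : 0 < h := by positivity
  have outside {t : ℝ} (ht : Φ t x ∉ K) {s : ℝ} (hs : s ∈ Ioo t (t + h)) : Φ s x ∉ K' := by
    refine fun hsK' => ht (hKK' (mem_thickening_iff.2 ⟨_, hsK', ?_⟩))
    calc dist (Φ t x) (Φ s x) ≤ C * dist t s := hΦ.dist_le hC x t s
      _ ≤ C * h := by
        rw [dist_comm, Real.dist_eq, abs_of_pos (by linarith [hs.1])]
        gcongr
        linarith [hs.2]
      _ < (C + 1) * h := by linarith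
      _ = δ := mul_div_cancel₀ δ (by positivity)
  have descend (T : ℝ) : ∃ T', angle T' ≤ angle T - c * h := by
    obtain ⟨t, ht, htK⟩ := hout T
    have drop : angle (t + h) ≤ angle t - c * h := accumulatedAngle_add_le hg hV hX hx h_pos.le
      fun s hs => hK' _ ⟨hX s hx, outside htK hs⟩
    exact ⟨t + h, drop.trans (sub_le_sub_right
      (antitone_accumulatedAngle hg hV hX hdec hx ht) _)⟩
  have descend_iterate (n : ℕ) : ∃ T, angle T ≤ angle 0 - n * (c * h) := by
    induction n with
    | zero => exact ⟨0, by simp⟩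
    | succ n ih =>
      obtain ⟨T, hT⟩ := ih
      obtain ⟨T', hT'⟩ := descend T
      exact ⟨T', by push_cast; linarith⟩
  obtain ⟨n, hn⟩ := exists_nat_gt ((angle 0 - M) / (c * h))
  obtain ⟨T, hT⟩ := descend_iterate n
  rw [div_lt_iff₀ (by positivity)] at hn
  exact ⟨T, by linarith⟩

end UnboundedDescent

section UnlinkMap

variable {g : E → ℂ} {η₁ η₂ : ℝ → E}

lemma isClosed_unlinkSet : IsClosed unlinkSet :=
  (isClosed_eq continuous_norm continuous_const).inter
    ((isClosed_eq continuous_Z continuous_const).union (isClosed_eq continuous_Z continuous_const))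

lemma unlinkSet_subset_sphere : unlinkSet ⊆ sphere 0 1 := fun _ hx =>
  mem_sphere_zero_iff_norm.2 hx.1

/-- An open book map on the complement of the unlink that turns once along a meridian of each
component. -/
structure IsUnlinkMap (g : E → ℂ) : Prop extends IsOpenBookMap g unlinkSet where
  exists_meridian_zero : ∃ η, IsMeridianIn η g (puncturedTube 0 (1 / 4))
  exists_meridian_half : ∃ η, IsMeridianIn η g (puncturedTube (1 / 2) (1 / 8))

namespace IsUnlinkMap

variable (hg : IsUnlinkMap g)
include hg

theorem false_of_isDescentField {V : E → E} {Φ : Flow ℝ E} {K K' : Set E} {c δ : ℝ}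
    (hV : IsDescentField g V unlinkSet K' c) (hΦ : IsFlowOf Φ V) (hc : 0 < c) (hδ : 0 < δ)
    (hdec : ∀ x ∈ K' ∩ unlinkCompl, angularDeriv g x (V x) ≤ 0) (hKK' : thickening δ K' ⊆ K)
    (hB : IsThin {x | x ∈ unlinkCompl ∧ ∃ T, ∀ t ≥ T, Φ t x ∈ K}) : False := by
  obtain ⟨L, hL⟩ := hV.exists_lipschitzWith
  obtain ⟨C, hC⟩ := hV.exists_bound
  obtain ⟨η₁, hη₁⟩ := hg.exists_meridian_zero
  obtain ⟨η₂, hη₂⟩ := hg.exists_meridian_half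
  have circleMap : IsCircleMapNear g unlinkCompl := sphere_diff_unlinkSet ▸ hg.toIsCircleMapNear
  have descends : ∀ x ∈ unlinkCompl \ K', angularDeriv g x (V x) ≤ -c := by
    simpa only [sphere_diff_unlinkSet] using hV.angularDeriv_le
  have descends_weakly : ∀ x ∈ unlinkCompl, angularDeriv g x (V x) ≤ 0 := fun x hx => by
    by_cases hxK' : x ∈ K'
    · exact hdec x ⟨hxK', hx⟩
    · linarith [descends x ⟨hx, hxK'⟩]
  have invariant : IsInvariant Φ unlinkCompl := by
    rw [← sphere_diff_unlinkSet]
    refine hΦ.isInvariant_of_eqOn_zero_compl hL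
      (hΦ.isInvariant_sphere hV.inner_self_eq_zero 1) sdiff_subset fun x hx => hV.eq_zero x ?_
    by_contra hxS
    exact hx.2 ⟨hx.1, hxS⟩
  refine false_of_descending_flow circleMap hη₁ hη₂ hΦ hL.continuous invariant descends_weakly hB
    fun x hx => exists_accumulatedAngle_lt circleMap hΦ hL.continuous invariant hC descends_weakly
      hc hδ descends hKK' hx.1 fun T => ?_
  by_contra! h
  exact hx.2 ⟨hx.1, T, h⟩

theorem exists_angularDeriv_eq_zero : ∃ x ∈ unlinkCompl, angularDeriv g x = 0 := by
  by_contra! regular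
  obtain ⟨V, hV, -⟩ := exists_isDescentField hg.toIsOpenBookMap isClosed_unlinkSet
    unlinkSet_subset_sphere isClosed_empty isOpen_empty subset_rfl (empty_disjoint _)
    (contDiffOn_const (c := 0)) (by simp) le_rfl (by simp) (by
      simpa only [sdiff_empty, sphere_diff_unlinkSet] using regular)
  obtain ⟨L, hL⟩ := hV.exists_lipschitzWith
  obtain ⟨C, hC⟩ := hV.exists_bound
  obtain ⟨Φ, hΦ⟩ := exists_isFlowOf hL hC
  refine hg.false_of_isDescentField (K := ∅) hV hΦ one_pos one_pos (by simp) (by simp)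
    (isThin_empty.mono ?_)
  rintro x ⟨-, T, h⟩
  exact h T le_rfl

end IsUnlinkMap

end UnlinkMap

section AngularHessian

variable {A : Type*} [NormedAddCommGroup A] [NormedSpace ℝ A] {g : A → ℂ} {X : Set A} {p : A}

lemma hasFDerivAt_arg {G : A → ℂ} {G' : A →L[ℝ] ℂ} (hG : HasFDerivAt G G' p)
    (hslit : G p ∈ Complex.slitPlane) :
    HasFDerivAt (fun y => (G y).arg) (Complex.imCLM.comp ((G p)⁻¹ • G')) p := by
  have log_deriv := ((Complex.hasDerivAt_log hslit).hasFDerivAt.restrictScalars ℝ).comp p hG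
  have arg_deriv := Complex.imCLM.hasFDerivAt.comp p log_deriv
  have arg_eq : (fun y => (G y).arg) = Complex.imCLM ∘ Complex.log ∘ G := by
    ext y
    simp [Complex.log_im]
  rw [arg_eq]
  refine arg_deriv.congr_fderiv ?_
  ext v
  simp [mul_comm]

lemma IsCircleMapNear.eventually_hasFDerivAt_arg_div (hg : IsCircleMapNear g X) (hp : p ∈ X) :
    ∀ᶠ y in nhds p, HasFDerivAt (fun y => (g y / g p).arg) (angularDeriv g y) y := by
  have hp0 := hg.ne_zero hp
  have slit : ∀ᶠ y in nhds p, g y / g p ∈ Complex.slitPlane := by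
    refine ((hg.differentiableAt hp).continuousAt.div_const _).eventually
      (Complex.isOpen_slitPlane.mem_nhds ?_)
    simpa only [div_self hp0] using Complex.one_mem_slitPlane
  have smooth : ∀ᶠ y in nhds p, ContDiffAt ℝ 1 g y :=
    ((hg.contDiffAt p hp).of_le (m := 1) (by simp)).eventually (by simp)
  filter_upwards [slit, smooth] with y hy hgy
  simp only [div_eq_mul_inv] at hy ⊢
  refine (hasFDerivAt_arg ((hgy.differentiableAt one_ne_zero).hasFDerivAt.mul_const (g p)⁻¹)
    hy).congr_fderiv ?_
  ext v
  simp only [angularDeriv, ContinuousLinearMap.comp_apply, smul_apply, smul_eq_mul, mul_inv,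
    inv_inv]
  rw [mul_assoc, mul_inv_cancel_left₀ hp0]

/-- The second differential of the argument of `g` at `p`. -/
def angularHess (g : A → ℂ) (p : A) : A →L[ℝ] A →L[ℝ] ℝ := fderiv ℝ (angularDeriv g) p

lemma IsCircleMapNear.hasFDerivAt_angularDeriv (hg : IsCircleMapNear g X) (hp : p ∈ X) :
    HasFDerivAt (angularDeriv g) (angularHess g p) p :=
  ((hg.contDiffAt_angularDeriv hp).differentiableAt (by simp)).hasFDerivAt

lemma IsCircleMapNear.angularHess_symm (hg : IsCircleMapNear g X) (hp : p ∈ X) (v w : A) :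
    angularHess g p v w = angularHess g p w v :=
  second_derivative_symmetric_of_eventually (hg.eventually_hasFDerivAt_arg_div hp)
    (hg.hasFDerivAt_angularDeriv hp) v w

lemma IsCircleMapNear.angularHess_apply_self (hg : IsCircleMapNear g X) (hp : p ∈ X)
    (hcrit : angularDeriv g p = 0) (hrad : ∀ᶠ y in nhds p, angularDeriv g y y = 0) (v : A) :
    angularHess g p v p = 0 := by
  have derivative := (hg.hasFDerivAt_angularDeriv hp).clm_apply (hasFDerivAt_id p)
  have vanishes := (hasFDerivAt_const (𝕜 := ℝ) (0 : ℝ) p).congr_of_eventuallyEq hrad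
  simpa [hcrit] using congrArg (fun T : A →L[ℝ] ℝ => T v) (derivative.unique vanishes)

lemma angularDeriv_conj (g : A → ℂ) :
    angularDeriv (fun y => starRingEnd ℂ (g y)) = -angularDeriv g := by
  ext x v
  have conj_fderiv : fderiv ℝ (fun y => starRingEnd ℂ (g y)) x v = starRingEnd ℂ (fderiv ℝ g x v) :=
    congrArg (fun T => T v) (Complex.conjCLE.comp_fderiv (f := g) (x := x))
  rw [angularDeriv_apply, conj_fderiv, ← map_div₀, Complex.conj_im, Pi.neg_apply,
    neg_apply, angularDeriv_apply]

lemma angularHess_conj (g : A → ℂ) (p : A) :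
    angularHess (fun y => starRingEnd ℂ (g y)) p = -angularHess g p := by
  rw [angularHess, angularDeriv_conj, fderiv_neg, angularHess]

end AngularHessian

section LinearModel

variable {H : Type*} [NormedAddCommGroup H] [InnerProductSpace ℝ H] {T : H →L[ℝ] H} {p y : H}

/-- The vector field `-T y`, made tangent to the spheres about the origin by adding a multiple of
the fixed vector `p`. The correction is along `p` and not along `y` so that the components along
the eigenvectors of `T` orthogonal to `p` obey a linear equation. -/
def linearDescent (T : H →L[ℝ] H) (p y : H) : H :=
  -T y + (inner ℝ (T y) y / inner ℝ p y : ℝ) • p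

lemma inner_linearDescent_self (h : inner ℝ p y ≠ (0 : ℝ)) :
    inner ℝ (linearDescent T p y) y = (0 : ℝ) := by
  rw [linearDescent, inner_add_left, inner_neg_left, inner_smul_left, conj_trivial,
    div_mul_cancel₀ _ h, neg_add_cancel]

lemma contDiffAt_linearDescent (h : inner ℝ p y ≠ (0 : ℝ)) :
    ContDiffAt ℝ (⊤ : ℕ∞) (linearDescent T p) y :=
  T.contDiff.contDiffAt.neg.add (((T.contDiff.contDiffAt.inner ℝ contDiffAt_id).div
    (contDiffAt_const.inner ℝ contDiffAt_id) h).smul contDiffAt_const)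

lemma norm_linearDescent_le (hp : ‖p‖ = 1) (hy : ‖y‖ = 1) (hpy : 1 / 2 ≤ (inner ℝ p y : ℝ)) :
    ‖linearDescent T p y‖ ≤ 3 * ‖T y‖ := by
  have inner_le : |(inner ℝ (T y) y : ℝ)| ≤ ‖T y‖ := by
    simpa only [hy, mul_one] using abs_real_inner_le_norm (T y) y
  calc ‖linearDescent T p y‖ ≤ ‖T y‖ + |(inner ℝ (T y) y : ℝ)| / inner ℝ p y := by
        refine (norm_add_le _ _).trans_eq ?_
        rw [norm_neg, norm_smul, hp, mul_one, Real.norm_eq_abs, abs_div,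
          abs_of_pos (a := (inner ℝ p y : ℝ)) (by linarith)]
    _ ≤ ‖T y‖ + ‖T y‖ / (1 / 2) := by gcongr
    _ = 3 * ‖T y‖ := by ring

lemma inner_eq_one_sub_dist_sq (hp : ‖p‖ = 1) (hy : ‖y‖ = 1) :
    (inner ℝ p y : ℝ) = 1 - dist y p ^ 2 / 2 := by
  rw [dist_eq_norm, norm_sub_sq_real, hy, hp, real_inner_comm]
  ring

variable (hT : (T : H →ₗ[ℝ] H).IsSymmetric) (hker : LinearMap.ker (T : H →ₗ[ℝ] H) = ℝ ∙ p)
include hker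

lemma apply_eq_zero_of_ker_eq_span : T p = 0 :=
  hker.symm.le (Submodule.mem_span_singleton_self p)

include hT in
lemma inner_apply_eq_zero_of_ker_eq_span (v : H) : inner ℝ (T v) p = (0 : ℝ) := by
  have symm : inner ℝ (T v) p = (inner ℝ v (T p) : ℝ) := hT v p
  rw [symm, apply_eq_zero_of_ker_eq_span hker, inner_zero_right]

lemma exists_norm_le_mul_norm_apply [FiniteDimensional ℝ H] :
    ∃ m > (0 : ℝ), ∀ v ∈ (ℝ ∙ p)ᗮ, ‖v‖ ≤ m * ‖T v‖ := by
  obtain ⟨m, hm, anti⟩ := ((T : H →ₗ[ℝ] H).domRestrict (ℝ ∙ p)ᗮ).exists_antilipschitzWith <| by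
    rw [LinearMap.ker_eq_bot']
    intro v hv
    have mem_span : (v : H) ∈ ℝ ∙ p := hker.le hv
    exact Subtype.ext <|
      Submodule.disjoint_def.1 (Submodule.orthogonal_disjoint (ℝ ∙ p)) _ mem_span v.2
  refine ⟨m, by exact_mod_cast hm, fun v hv => ?_⟩
  simpa using anti.le_mul_dist (⟨v, hv⟩ : (ℝ ∙ p)ᗮ) 0

lemma exists_dist_le_mul_norm_apply [FiniteDimensional ℝ H] (hp : ‖p‖ = 1) :
    ∃ m > (0 : ℝ), ∀ y, ‖y‖ = 1 → dist y p ≤ 1 → dist y p ≤ m * ‖T y‖ := by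
  obtain ⟨m, hm, bound⟩ := exists_norm_le_mul_norm_apply hker
  refine ⟨2 * m, by positivity, fun y hy hyp => ?_⟩
  set v : H := y - (inner ℝ p y : ℝ) • p
  have v_mem : v ∈ (ℝ ∙ p)ᗮ := Submodule.mem_orthogonal_singleton_iff_inner_right.2 <| by
    rw [inner_sub_right, inner_smul_right, real_inner_self_eq_norm_sq, hp, one_pow, mul_one,
      sub_self]
  have T_v : T v = T y := by
    rw [map_sub, map_smul, apply_eq_zero_of_ker_eq_span hker, smul_zero, sub_zero]
  have normSq_v : ‖v‖ ^ 2 = dist y p ^ 2 * (1 - dist y p ^ 2 / 4) := by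
    rw [norm_sub_sq_real, inner_smul_right, norm_smul, hp, hy, real_inner_comm p y,
      Real.norm_eq_abs, mul_one, sq_abs, inner_eq_one_sub_dist_sq hp hy]
    ring
  have dist_le : dist y p ≤ 2 * ‖v‖ := by
    refine (pow_le_pow_iff_left₀ dist_nonneg (by positivity) two_ne_zero).1 ?_
    rw [mul_pow, normSq_v]
    nlinarith [mul_nonneg (sq_nonneg (dist y p))
      (sub_nonneg.2 (pow_le_one₀ (n := 2) dist_nonneg hyp))]
  calc dist y p ≤ 2 * ‖v‖ := dist_le
    _ ≤ 2 * (m * ‖T y‖) := by rw [← T_v]; gcongr; exact bound v v_mem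
    _ = 2 * m * ‖T y‖ := by ring

include hT in
theorem exists_eventually_angularDeriv_linearDescent_le [FiniteDimensional ℝ H] {g : H → ℂ}
    (hg : HasFDerivAt (angularDeriv g) (angularHess g p) p) (hp : ‖p‖ = 1)
    (hcrit : angularDeriv g p = 0) (hgT : ∀ v w, inner ℝ (T v) w = angularHess g p v w) :
    ∃ c > 0, ∀ᶠ y in nhds p, ‖y‖ = 1 →
      angularDeriv g y (linearDescent T p y) ≤ -(c * dist y p ^ 2) := by
  obtain ⟨m, hm, lower⟩ := exists_dist_le_mul_norm_apply hker hp
  refine ⟨1 / (2 * m ^ 2), by positivity, ?_⟩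
  filter_upwards [hg.isLittleO.def (show 0 < 1 / (6 * m) by positivity),
    closedBall_mem_nhds p one_pos] with y linearized hy1 hy
  set d := dist y p
  have d_le : d ≤ m * ‖T y‖ := lower y hy hy1
  have norm_le : ‖linearDescent T p y‖ ≤ 3 * ‖T y‖ := by
    refine norm_linearDescent_le hp hy ?_
    rw [inner_eq_one_sub_dist_sq hp hy]
    nlinarith [dist_nonneg (x := y) (y := p), mem_closedBall.1 hy1]
  have main_term : angularHess g p (y - p) (linearDescent T p y) = -‖T y‖ ^ 2 := by
    rw [← hgT, map_sub, apply_eq_zero_of_ker_eq_span hker, sub_zero, linearDescent,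
      inner_add_right, inner_neg_right, inner_smul_right,
      inner_apply_eq_zero_of_ker_eq_span hT hker, mul_zero, add_zero, real_inner_self_eq_norm_sq]
  have error_term : angularDeriv g y (linearDescent T p y) -
      angularHess g p (y - p) (linearDescent T p y) ≤ 1 / (6 * m) * d * (3 * ‖T y‖) := by
    rw [hcrit, sub_zero] at linearized
    refine (Real.le_norm_self _).trans (((angularDeriv g y - angularHess g p (y - p)).le_opNorm
      _).trans (mul_le_mul (by rwa [← dist_eq_norm y p] at linearized) norm_le (norm_nonneg _)
        (by positivity)))
  have error_le : 1 / (6 * m) * d * (3 * ‖T y‖) ≤ ‖T y‖ ^ 2 / 2 := by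
    calc 1 / (6 * m) * d * (3 * ‖T y‖) ≤ 1 / (6 * m) * (m * ‖T y‖) * (3 * ‖T y‖) := by gcongr
      _ = ‖T y‖ ^ 2 / 2 := by field_simp; ring
  have distSq_le : 1 / (2 * m ^ 2) * d ^ 2 ≤ ‖T y‖ ^ 2 / 2 := by
    calc 1 / (2 * m ^ 2) * d ^ 2 ≤ 1 / (2 * m ^ 2) * (m * ‖T y‖) ^ 2 := by gcongr
      _ = ‖T y‖ ^ 2 / 2 := by field_simp
  linarith

end LinearModel

section StableSet

variable {H : Type*} [NormedAddCommGroup H] [InnerProductSpace ℝ H] {T : H →L[ℝ] H} {p e y : H}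

/-- The great circle through `p` in the direction of `e`, when `p` and `e` are orthonormal. -/
def greatCircle (p e : H) (θ : ℝ) : H := Real.cos θ • p + Real.sin θ • e

lemma locallyLipschitz_greatCircle (p e : H) : LocallyLipschitz (greatCircle p e) :=
  ((Real.contDiff_cos.smul contDiff_const).add
    (Real.contDiff_sin.smul contDiff_const) : ContDiff ℝ 1 (greatCircle p e)).locallyLipschitz

lemma mem_range_greatCircle {a c : ℝ} (h : c ^ 2 + a ^ 2 = 1) :
    c • p + a • e ∈ range (greatCircle p e) := by
  have norm_eq : ‖(⟨c, a⟩ : ℂ)‖ = 1 := by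
    rw [Complex.norm_def, Complex.normSq_mk, ← pow_two, ← pow_two, h, Real.sqrt_one]
  have cos_eq := Complex.norm_mul_cos_arg ⟨c, a⟩
  have sin_eq := Complex.norm_mul_sin_arg ⟨c, a⟩
  rw [norm_eq, one_mul] at cos_eq sin_eq
  exact ⟨Complex.arg ⟨c, a⟩, by rw [greatCircle, cos_eq, sin_eq]⟩

lemma eq_zero_of_hasDerivAt_mul_of_bounded {f : ℝ → ℝ} {k M : ℝ} (hk : 0 < k)
    (hf : ∀ t, 0 ≤ t → HasDerivAt f (k * f t) t) (hM : ∀ t, 0 ≤ t → |f t| ≤ M) : f 0 = 0 := by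
  have deriv_zero (t : ℝ) (ht : 0 ≤ t) :
      HasDerivAt (fun t => f t * Real.exp (-k * t)) 0 t := by
    have exp_deriv : HasDerivAt (fun t => Real.exp (-k * t)) (Real.exp (-k * t) * -k) t := by
      simpa using ((hasDerivAt_id t).const_mul (-k)).exp
    exact ((hf t ht).mul exp_deriv).congr_deriv (by ring)
  have constant (t : ℝ) (ht : 0 ≤ t) : f t * Real.exp (-k * t) = f 0 := by
    simpa using constant_of_has_deriv_right_zero (a := 0) (b := t)
      (fun s hs => (deriv_zero s hs.1).continuousAt.continuousWithinAt)
      (fun s hs => (deriv_zero s hs.1).hasDerivWithinAt) t ⟨ht, le_rfl⟩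
  have bound_tendsto : Filter.Tendsto (fun t => M * Real.exp (-k * t)) Filter.atTop (nhds 0) := by
    simpa using (Real.tendsto_exp_atBot.comp
      (Filter.tendsto_id.const_mul_atTop_of_neg (neg_neg_of_pos hk))).const_mul M
  refine abs_nonpos_iff.1 (ge_of_tendsto bound_tendsto ?_)
  filter_upwards [Filter.eventually_ge_atTop 0] with t ht
  rw [← constant t ht, abs_mul, Real.abs_exp]
  gcongr
  exact hM t ht

lemma inner_eq_zero_of_apply_eq_smul (hT : (T : H →ₗ[ℝ] H).IsSymmetric) (hTp : T p = 0) {l : ℝ}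
    (he : T e = l • e) (hl : l ≠ 0) : inner ℝ p e = (0 : ℝ) := by
  have symm : inner ℝ (T p) e = (inner ℝ p (T e) : ℝ) := hT p e
  rw [hTp, he, inner_smul_right, inner_zero_left] at symm
  exact (mul_eq_zero.1 symm.symm).resolve_left hl

section Eigenbasis

variable {ι : Type*} [Fintype ι] {b : OrthonormalBasis ι ℝ H} {l : ι → ℝ}
  (hT : (T : H →ₗ[ℝ] H).IsSymmetric) (hb : ∀ i, T (b i) = l i • b i)
include hT hb

lemma apply_eq_zero_of_mul_inner_eq_zero (h : ∀ i, l i * inner ℝ y (b i) = 0) : T y = 0 := by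
  rw [← b.sum_repr (T y)]
  refine Finset.sum_eq_zero fun i _ => ?_
  have symm : inner ℝ (T y) (b i) = (inner ℝ y (T (b i)) : ℝ) := hT y (b i)
  rw [b.repr_apply_apply, real_inner_comm, symm, hb, inner_smul_right, h, zero_smul]

variable (hker : LinearMap.ker (T : H →ₗ[ℝ] H) = ℝ ∙ p) (hp : ‖p‖ = 1)
include hker hp

lemma mem_range_greatCircle_of_inner_eq_zero {j : ι} (hj : ∀ i ≠ j, l i ≤ 0) (hy : ‖y‖ = 1)
    (hneg : ∀ i, l i < 0 → inner ℝ y (b i) = (0 : ℝ)) : y ∈ range (greatCircle p (b j)) := by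
  have off_j (i : ι) (hi : i ≠ j) : l i * inner ℝ y (b i) = 0 := by
    rcases (hj i hi).lt_or_eq with h | h
    · rw [hneg i h, mul_zero]
    · rw [h, zero_mul]
  have mem_ker (z : H) (hz : T z = 0) : ∃ c : ℝ, c • p = z :=
    Submodule.mem_span_singleton.1 (hker.le hz)
  by_cases hlj : l j = 0
  · obtain ⟨c, rfl⟩ := mem_ker y <| apply_eq_zero_of_mul_inner_eq_zero hT hb fun i => by
      rcases eq_or_ne i j with rfl | hi
      exacts [by rw [hlj, zero_mul], off_j i hi]
    rw [norm_smul, hp, mul_one, Real.norm_eq_abs] at hy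
    simpa only [zero_smul, add_zero] using mem_range_greatCircle (p := p) (e := b j)
      (c := c) (a := 0) (by rw [← sq_abs, hy]; norm_num)
  · have orthogonal : inner ℝ p (b j) = (0 : ℝ) :=
      inner_eq_zero_of_apply_eq_smul hT (apply_eq_zero_of_ker_eq_span hker) (hb j) hlj
    obtain ⟨c, hc⟩ := mem_ker (y - (inner ℝ y (b j) : ℝ) • b j) <|
      apply_eq_zero_of_mul_inner_eq_zero hT hb fun i => by
        rw [inner_sub_left, inner_smul_left, conj_trivial]
        rcases eq_or_ne i j with rfl | hi
        · rw [real_inner_self_eq_norm_sq, b.norm_eq_one, one_pow, mul_one, sub_self, mul_zero]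
        · rw [b.inner_eq_zero hi.symm, mul_zero, sub_zero, off_j i hi]
    have y_eq : c • p + (inner ℝ y (b j) : ℝ) • b j = y := by rw [hc, sub_add_cancel]
    rw [← y_eq]
    refine mem_range_greatCircle ?_
    have pythagoras := norm_add_sq_real (c • p) ((inner ℝ y (b j) : ℝ) • b j)
    rw [y_eq, hy, norm_smul, norm_smul, hp, b.norm_eq_one, inner_smul_left, inner_smul_right,
      orthogonal, mul_one, mul_one, Real.norm_eq_abs, Real.norm_eq_abs, sq_abs,
      sq_abs] at pythagoras
    linarith

/-- Along the flow of `linearDescent`, the components in the directions of negative eigenvalues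
grow exponentially, so they vanish on an orbit that never leaves `K`. -/
theorem mem_range_greatCircle_of_forall_flow_mem {V : H → H} {Φ : Flow ℝ H} (hΦ : IsFlowOf Φ V)
    (hV : ∀ x, inner ℝ (V x) x = 0) {K : Set H} (hK : EqOn V (linearDescent T p) (K ∩ sphere 0 1))
    {j : ι} (hj : ∀ i ≠ j, l i ≤ 0) (hy : y ∈ sphere (0 : H) 1)
    (hyK : ∀ t, 0 ≤ t → Φ t y ∈ K) : y ∈ range (greatCircle p (b j)) := by
  have on_sphere (t : ℝ) : Φ t y ∈ sphere 0 1 := hΦ.isInvariant_sphere hV 1 t hy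
  refine mem_range_greatCircle_of_inner_eq_zero hT hb hker hp hj (mem_sphere_zero_iff_norm.1 hy)
    fun i hi => ?_
  have orthogonal : inner ℝ p (b i) = (0 : ℝ) :=
    inner_eq_zero_of_apply_eq_smul hT (apply_eq_zero_of_ker_eq_span hker) (hb i) hi.ne
  have vanishes := eq_zero_of_hasDerivAt_mul_of_bounded (f := fun t => inner ℝ (Φ t y) (b i))
    (M := 1) (neg_pos.2 hi) (fun t ht => ?_) (fun t _ => ?_)
  · simpa only [Φ.map_zero_apply] using vanishes
  · have derivative := (hΦ.hasDerivAt y t).inner ℝ (hasDerivAt_const t (b i))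
    have symm : inner ℝ (T (Φ t y)) (b i) = (inner ℝ (Φ t y) (T (b i)) : ℝ) := hT _ _
    rw [hK ⟨hyK t ht, on_sphere t⟩] at derivative
    refine derivative.congr_deriv ?_
    rw [linearDescent, inner_zero_right, zero_add, inner_add_left, inner_neg_left,
      inner_smul_left, orthogonal, symm, hb, inner_smul_right, mul_zero, add_zero, neg_mul]
  · simpa only [mem_sphere_zero_iff_norm.1 (on_sphere t), b.norm_eq_one, mul_one] using
      abs_real_inner_le_norm (Φ t y) (b i)

end Eigenbasis

lemma isThin_setOf_eventually_flow_mem {V : H → H} {Φ : Flow ℝ H} {L : NNReal}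
    (hΦ : IsFlowOf Φ V) (hV : LipschitzWith L V) {γ : ℝ → H} (hγ : LocallyLipschitz γ)
    {X K : Set H} (hX : IsInvariant Φ X)
    (h : ∀ y ∈ X, (∀ t, 0 ≤ t → Φ t y ∈ K) → y ∈ range γ) :
    IsThin {x | x ∈ X ∧ ∃ T, ∀ t ≥ T, Φ t x ∈ K} := by
  refine ⟨fun n θ => Φ (-(n : ℝ)) (γ θ), fun n => ?_, ?_⟩
  · obtain ⟨K', hK'⟩ := hΦ.exists_lipschitzWith hV (-(n : ℝ))
    exact hK'.locallyLipschitz.comp hγ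
  · rintro x ⟨hx, T, hT⟩
    obtain ⟨n, hn⟩ := exists_nat_ge T
    obtain ⟨θ, hθ⟩ := h (Φ n x) (hX n hx) fun t ht => by
      rw [← Φ.map_add]
      exact hT _ (by linarith)
    refine mem_iUnion.2 ⟨n, θ, ?_⟩
    simp only [hθ]
    rw [← Φ.map_add, neg_add_cancel, Φ.map_zero_apply]

end StableSet

section UniqueCriticalPoint

variable {H : Type*} [NormedAddCommGroup H] [InnerProductSpace ℝ H] {g : H → ℂ} {S : Set H}
  {T : H →L[ℝ] H} {p : H}

lemma eventually_inner_ne_zero (hp : p ≠ 0) : ∀ᶠ y in nhds p, inner ℝ p y ≠ (0 : ℝ) :=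
  (continuous_const.inner continuous_id).continuousAt.eventually_ne (inner_self_ne_zero.2 hp)

theorem exists_isDescentField_eqOn_linearDescent [FiniteDimensional ℝ H] (hg : IsOpenBookMap g S)
    (hS : IsClosed S) (hSs : S ⊆ sphere 0 1) (hp : p ∈ sphere (0 : H) 1 \ S)
    (hcrit : angularDeriv g p = 0) (hreg : ∀ x ∈ sphere (0 : H) 1 \ S, x ≠ p → angularDeriv g x ≠ 0)
    (hT : (T : H →ₗ[ℝ] H).IsSymmetric) (hker : LinearMap.ker (T : H →ₗ[ℝ] H) = ℝ ∙ p)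
    (hgT : ∀ v w, inner ℝ (T v) w = angularHess g p v w) :
    ∃ V, ∃ r > 0, ∃ c > 0, IsDescentField g V S (ball p r) c ∧
      (∀ y ∈ ball p r ∩ sphere 0 1, angularDeriv g y (V y) ≤ 0) ∧
      EqOn V (linearDescent T p) (closedBall p (2 * r) ∩ sphere 0 1) := by
  obtain ⟨c, hc, decreases⟩ := exists_eventually_angularDeriv_linearDescent_le hT hker
    (hg.hasFDerivAt_angularDeriv hp) (mem_sphere_zero_iff_norm.1 hp.1) hcrit hgT
  obtain ⟨R, hR, hball⟩ := Metric.eventually_nhds_iff_ball.1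
    ((decreases.and (eventually_inner_ne_zero (ne_zero_of_mem_unit_sphere ⟨p, hp.1⟩))).and
      (hS.isOpen_compl.mem_nhds hp.2))
  obtain ⟨r, hr, rfl⟩ : ∃ r > 0, 3 * r = R := ⟨R / 3, by positivity, by ring⟩
  have subset : closedBall p (2 * r) ⊆ ball p (3 * r) := closedBall_subset_ball (by linarith)
  have drop {y : H} (hy : y ∈ (ball p (3 * r) ∩ sphere 0 1) \ ball p r) :
      angularDeriv g y (linearDescent T p y) ≤ -min 1 (c * r ^ 2) := by
    have far : r ≤ dist y p := by simpa using hy.2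
    calc angularDeriv g y (linearDescent T p y) ≤ -(c * dist y p ^ 2) :=
          (hball y hy.1.1).1.1 (mem_sphere_zero_iff_norm.1 hy.1.2)
      _ ≤ -(c * r ^ 2) := by gcongr
      _ ≤ -min 1 (c * r ^ 2) := neg_le_neg (min_le_right _ _)
  obtain ⟨V, hV, eqOn⟩ := exists_isDescentField hg hS hSs isClosed_closedBall isOpen_ball subset
    (disjoint_left.2 fun y hy => (hball y hy).2)
    (fun y hy => (contDiffAt_linearDescent (hball y hy).1.2).contDiffWithinAt)
    (fun y hy => inner_linearDescent_self (hball y (subset hy)).1.2) (min_le_left _ _)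
    (fun y hy => drop ⟨hy.1, fun h => hy.2 (ball_subset_closedBall (ball_subset_ball
      (by linarith) h))⟩)
    (fun x hx => hreg x hx.1 (ne_of_mem_of_not_mem (mem_closedBall_self (by positivity)) hx.2).symm)
  refine ⟨V, r, hr, min 1 (c * r ^ 2), by positivity, ⟨hV.1, hV.2, hV.3, hV.4, fun x hx => ?_⟩,
    fun y hy => ?_, eqOn⟩
  · by_cases hxK : x ∈ closedBall p (2 * r)
    · rw [eqOn ⟨hxK, hx.1.1⟩]
      exact drop ⟨⟨subset hxK, hx.1.1⟩, hx.2⟩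
    · exact hV.angularDeriv_le x ⟨hx.1, hxK⟩
  · have hyK : y ∈ closedBall p (2 * r) :=
      ball_subset_closedBall (ball_subset_ball (by linarith) hy.1)
    rw [eqOn ⟨hyK, hy.2⟩]
    have decrease := (hball y (subset hyK)).1.1 (mem_sphere_zero_iff_norm.1 hy.2)
    have : 0 ≤ c * dist y p ^ 2 := by positivity
    linarith

end UniqueCriticalPoint

section Conjugation

variable {A : Type*} [NormedAddCommGroup A] [NormedSpace ℝ A] {g : A → ℂ} {X : Set A}

lemma IsCircleMapNear.conj (hg : IsCircleMapNear g X) :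
    IsCircleMapNear (fun y => starRingEnd ℂ (g y)) X where
  norm_eventually_eq_one x hx := by
    filter_upwards [hg.norm_eventually_eq_one x hx] with y hy
    rwa [Complex.norm_conj]
  contDiffAt x hx := Complex.conjCLE.contDiff.contDiffAt.comp x (hg.contDiffAt x hx)

lemma IsOpenBookMap.conj {H : Type*} [NormedAddCommGroup H] [InnerProductSpace ℝ H] {g : H → ℂ}
    {S : Set H} (hg : IsOpenBookMap g S) : IsOpenBookMap (fun y => starRingEnd ℂ (g y)) S where
  toIsCircleMapNear := hg.toIsCircleMapNear.conj
  angularDeriv_radial x hx := by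
    filter_upwards [hg.angularDeriv_radial x hx] with y hy
    rw [angularDeriv_conj, Pi.neg_apply, neg_apply, hy, neg_zero]
  exists_rotation x hx := by
    obtain ⟨O, hO, R, smooth, vanishes, rotates⟩ := hg.exists_rotation x hx
    refine ⟨O, hO, fun y => -R y, smooth.neg, fun y hy => ?_, fun y hy => ?_⟩
    · simp only [vanishes y hy, neg_zero]
    · rw [angularDeriv_conj, Pi.neg_apply, neg_apply, map_neg, rotates y hy, neg_neg]

lemma IsMeridianIn.conj {Y : Type*} [TopologicalSpace Y] {η : ℝ → Y} {f : Y → ℂ} {B : Set Y}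
    (hη : IsMeridianIn η f B) :
    IsMeridianIn (fun θ => η (2 * π - θ)) (fun y => starRingEnd ℂ (f y)) B where
  continuous := hη.continuous.comp (continuous_sub_left _)
  mem θ := hη.mem _
  apply_eq θ := by
    rw [sub_zero, hη.periodic, hη.apply_eq, map_mul, ← Complex.exp_conj, map_mul, Complex.conj_I,
      Complex.conj_ofReal, Complex.ofReal_sub, mul_neg, sub_mul, neg_sub, Complex.exp_sub]
    push_cast
    rw [Complex.exp_two_pi_mul_I, div_one]
  periodic := by rw [sub_self, sub_zero, hη.periodic]

lemma IsUnlinkMap.conj {g : E → ℂ} (hg : IsUnlinkMap g) :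
    IsUnlinkMap (fun y => starRingEnd ℂ (g y)) where
  toIsOpenBookMap := hg.toIsOpenBookMap.conj
  exists_meridian_zero := hg.exists_meridian_zero.imp' _ fun _ => IsMeridianIn.conj
  exists_meridian_half := hg.exists_meridian_half.imp' _ fun _ => IsMeridianIn.conj

end Conjugation

section HessianOperator

variable {H : Type*} [NormedAddCommGroup H] [InnerProductSpace ℝ H] {T : H →L[ℝ] H} {p : H}

lemma exists_eigenvalue_eq_zero (hT : (T : H →ₗ[ℝ] H).IsSymmetric) (hTp : T p = 0) (hp : p ≠ 0)
    {ι : Type*} [Fintype ι] {b : OrthonormalBasis ι ℝ H} {l : ι → ℝ}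
    (hb : ∀ i, T (b i) = l i • b i) : ∃ i, l i = 0 := by
  by_contra! h
  refine hp ?_
  rw [← b.sum_repr' p]
  refine Finset.sum_eq_zero fun i _ => ?_
  rw [real_inner_comm, inner_eq_zero_of_apply_eq_smul hT hTp (hb i) (h i), zero_smul]

lemma ker_eq_span_of_forall_apply_ne_zero (hTp : T p = 0) (hp : ‖p‖ = 1)
    (h : ∀ v, inner ℝ v p = (0 : ℝ) → v ≠ 0 → T v ≠ 0) :
    LinearMap.ker (T : H →ₗ[ℝ] H) = ℝ ∙ p := by
  refine le_antisymm (fun v hv => Submodule.mem_span_singleton.2 ⟨inner ℝ v p, ?_⟩)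
    ((Submodule.span_singleton_le_iff_mem _ _).2 hTp)
  by_contra hne
  refine h (v - (inner ℝ v p : ℝ) • p) ?_ (sub_ne_zero.2 (Ne.symm hne)) ?_
  · rw [inner_sub_left, inner_smul_left, real_inner_self_eq_norm_sq, hp, one_pow, mul_one,
      conj_trivial, sub_self]
  · rw [map_sub, map_smul, hTp, smul_zero, sub_zero]
    exact hv

lemma exists_forall_ne_nonpos_or_nonneg (l : Fin 4 → ℝ) {k : Fin 4} (hk : l k = 0) :
    ∃ j, (∀ i ≠ j, l i ≤ 0) ∨ ∀ i ≠ j, 0 ≤ l i := by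
  by_contra! h
  obtain ⟨⟨a, hak, ha⟩, c, hck, hc⟩ := h k
  obtain ⟨⟨b, hba, hb⟩, -⟩ := h a
  obtain ⟨-, d, hdc, hd⟩ := h c
  have distinct {i i' : Fin 4} (hi : 0 < l i) (hi' : l i' < 0) : i ≠ i' := fun h => by
    rw [h] at hi
    exact lt_asymm hi hi'
  have hbk : b ≠ k := fun h => hb.ne' (h ▸ hk)
  have hdk : d ≠ k := fun h => hd.ne (h ▸ hk)
  have := distinct ha hc
  have := distinct ha hd
  have := distinct hb hc
  have := distinct hb hd
  omega

lemma IsOpenBookMap.exists_isSymmetric_inner_eq_angularHess [CompleteSpace H] {g : H → ℂ}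
    {S : Set H} (hg : IsOpenBookMap g S) (hp : p ∈ sphere 0 1 \ S) (hcrit : angularDeriv g p = 0)
    (hnd : ∀ v, inner ℝ v p = (0 : ℝ) → v ≠ 0 → angularHess g p v ≠ 0) :
    ∃ T : H →L[ℝ] H, (T : H →ₗ[ℝ] H).IsSymmetric ∧ LinearMap.ker (T : H →ₗ[ℝ] H) = ℝ ∙ p ∧
      ∀ v w, inner ℝ (T v) w = angularHess g p v w := by
  let T : H →L[ℝ] H := InnerProductSpace.continuousLinearMapOfBilin (angularHess g p)
  have inner_T (v w : H) : inner ℝ (T v) w = angularHess g p v w :=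
    InnerProductSpace.continuousLinearMapOfBilin_apply _ v w
  have T_p : T p = 0 := ext_inner_right ℝ fun w => by
    rw [inner_T, hg.angularHess_symm hp,
      hg.angularHess_apply_self hp hcrit (hg.angularDeriv_radial p hp), inner_zero_left]
  refine ⟨T, fun v w => ?_, ?_, inner_T⟩
  · rw [ContinuousLinearMap.coe_coe, inner_T, hg.angularHess_symm hp, ← inner_T, real_inner_comm]
  · refine ker_eq_span_of_forall_apply_ne_zero T_p (mem_sphere_zero_iff_norm.1 hp.1)
      fun v hv hv0 hTv => hnd v hv hv0 (ContinuousLinearMap.ext fun w => ?_)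
    rw [← inner_T, hTv, inner_zero_left, zero_apply]

end HessianOperator

section SecondCriticalPoint

variable {g : E → ℂ} {T : E →L[ℝ] E} {p : E}

theorem IsUnlinkMap.exists_ne_of_eigenvalues_nonpos (hg : IsUnlinkMap g) (hp : p ∈ unlinkCompl)
    (hcrit : angularDeriv g p = 0) (hT : (T : E →ₗ[ℝ] E).IsSymmetric)
    (hker : LinearMap.ker (T : E →ₗ[ℝ] E) = ℝ ∙ p)
    (hgT : ∀ v w, inner ℝ (T v) w = angularHess g p v w) {ι : Type*} [Fintype ι]
    {b : OrthonormalBasis ι ℝ E} {l : ι → ℝ} (hb : ∀ i, T (b i) = l i • b i) {j : ι}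
    (hj : ∀ i ≠ j, l i ≤ 0) : ∃ x ∈ unlinkCompl, x ≠ p ∧ angularDeriv g x = 0 := by
  by_contra! regular
  obtain ⟨V, r, hr, c, hc, hV, decreases, eqOn⟩ := exists_isDescentField_eqOn_linearDescent
    hg.toIsOpenBookMap isClosed_unlinkSet unlinkSet_subset_sphere (sphere_diff_unlinkSet ▸ hp) hcrit
    (sphere_diff_unlinkSet ▸ regular) hT hker hgT
  obtain ⟨L, hL⟩ := hV.exists_lipschitzWith
  obtain ⟨C, hC⟩ := hV.exists_bound
  obtain ⟨Φ, hΦ⟩ := exists_isFlowOf hL hC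
  have subset_sphere : unlinkCompl ⊆ sphere 0 1 := sphere_diff_unlinkSet ▸ sdiff_subset
  have norm_p : ‖p‖ = 1 := mem_sphere_zero_iff_norm.1 (subset_sphere hp)
  refine hg.false_of_isDescentField (K := closedBall p (2 * r)) hV hΦ hc hr
    (fun x hx => decreases x ⟨hx.1, subset_sphere hx.2⟩) ?_
    ((isThin_setOf_eventually_flow_mem hΦ hL (locallyLipschitz_greatCircle p (b j))
      (hΦ.isInvariant_sphere hV.inner_self_eq_zero 1) fun y hy hyK =>
      mem_range_greatCircle_of_forall_flow_mem hT hb hker norm_p hΦ hV.inner_self_eq_zero eqOn hj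
        hy hyK).mono fun x hx => ⟨subset_sphere hx.1, hx.2⟩)
  rw [thickening_ball hr hr, ← two_mul]
  exact ball_subset_closedBall

theorem IsUnlinkMap.exists_angularDeriv_eq_zero_ne (hg : IsUnlinkMap g) (hp : p ∈ unlinkCompl)
    (hcrit : angularDeriv g p = 0)
    (hnd : ∀ v, inner ℝ v p = (0 : ℝ) → v ≠ 0 → angularHess g p v ≠ 0) :
    ∃ x ∈ unlinkCompl, x ≠ p ∧ angularDeriv g x = 0 := by
  obtain ⟨T, hT, hker, hgT⟩ := hg.exists_isSymmetric_inner_eq_angularHess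
    (sphere_diff_unlinkSet ▸ hp) hcrit hnd
  have p_ne : p ≠ 0 := norm_ne_zero_iff.1 (hp.1.trans_ne one_ne_zero)
  set l := hT.eigenvalues finrank_euclideanSpace_fin
  set b := hT.eigenvectorBasis finrank_euclideanSpace_fin
  have hb (i : Fin 4) : T (b i) = l i • b i :=
    hT.apply_eigenvectorBasis finrank_euclideanSpace_fin i
  obtain ⟨k, hk⟩ := exists_eigenvalue_eq_zero hT (apply_eq_zero_of_ker_eq_span hker) p_ne hb
  obtain ⟨j, hj | hj⟩ := exists_forall_ne_nonpos_or_nonneg l hk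
  · exact hg.exists_ne_of_eigenvalues_nonpos hp hcrit hT hker hgT hb hj
  · have conj_critical (x : E) : angularDeriv (fun y => starRingEnd ℂ (g y)) x = 0 ↔
        angularDeriv g x = 0 := by
      rw [angularDeriv_conj, Pi.neg_apply, neg_eq_zero]
    simpa only [conj_critical] using hg.conj.exists_ne_of_eigenvalues_nonpos (T := -T) hp
      ((conj_critical p).2 hcrit)
      (fun v w => by simpa only [ContinuousLinearMap.coe_coe, neg_apply, inner_neg_left,
        inner_neg_right, neg_inj] using hT v w)
      (by rw [ContinuousLinearMap.toLinearMap_neg, LinearMap.ker_neg, hker])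
      (fun v w => by
        rw [angularHess_conj, neg_apply, inner_neg_left, hgT, neg_apply, neg_apply])
      (l := fun i => -l i) (fun i => by rw [neg_apply, hb, neg_smul])
      fun i hi => neg_nonpos.2 (hj i hi)

end SecondCriticalPoint

section StereographicChart

variable {H : Type*} [NormedAddCommGroup H] [InnerProductSpace ℝ H] {n : ℕ}
  [Fact (Module.finrank ℝ H = n + 1)] {O : TopologicalSpace.Opens (sphere (0 : H) 1)}

/-- The isometry of `ℝⁿ` onto the hyperplane orthogonal to `x` which underlies the preferred chart
of the sphere at `x`. That chart is the stereographic projection from `-x`. -/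
def tangentIncl (x : sphere (0 : H) 1) : EuclideanSpace ℝ (Fin n) →ₗᵢ[ℝ] H :=
  (ℝ ∙ ((-x : sphere (0 : H) 1) : H))ᗮ.subtypeₗᵢ.comp
    (OrthonormalBasis.fromOrthogonalSpanSingleton n
      (ne_zero_of_mem_unit_sphere (-x))).repr.symm.toLinearIsometry

lemma inner_tangentIncl (x : sphere (0 : H) 1) (u : EuclideanSpace ℝ (Fin n)) :
    inner ℝ (x : H) (tangentIncl x u) = (0 : ℝ) := by
  have orthogonal : inner ℝ ((-x : sphere (0 : H) 1) : H) (tangentIncl x u) = (0 : ℝ) :=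
    Submodule.mem_orthogonal_singleton_iff_inner_right.1 (Subtype.prop _)
  rwa [coe_neg_sphere, inner_neg_left, neg_eq_zero] at orthogonal

lemma exists_tangentIncl_eq {x : sphere (0 : H) 1} {v : H} (h : inner ℝ v x = (0 : ℝ)) :
    ∃ u : EuclideanSpace ℝ (Fin n), tangentIncl x u = v := by
  have mem : v ∈ (ℝ ∙ ((-x : sphere (0 : H) 1) : H))ᗮ := by
    rw [Submodule.mem_orthogonal_singleton_iff_inner_left, coe_neg_sphere, inner_neg_right, h,
      neg_zero]
  refine ⟨(OrthonormalBasis.fromOrthogonalSpanSingleton n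
    (ne_zero_of_mem_unit_sphere (-x))).repr ⟨v, mem⟩, ?_⟩
  exact congrArg Subtype.val (LinearIsometryEquiv.symm_apply_apply _ _)

/-- The inverse of the preferred chart of the sphere at `x`, as a map into the ambient space. -/
def stereoParam (x : sphere (0 : H) 1) (u : EuclideanSpace ℝ (Fin n)) : H :=
  ((chartAt (EuclideanSpace ℝ (Fin n)) x).symm u : sphere (0 : H) 1)

lemma stereoParam_eq (x : sphere (0 : H) 1) :
    stereoParam (n := n) x = stereoInvFunAux ((-x : sphere (0 : H) 1) : H) ∘ tangentIncl x := rfl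

lemma stereoParam_zero (x : sphere (0 : H) 1) : stereoParam (n := n) x 0 = x := by
  simp [stereoParam_eq, stereoInvFunAux]

lemma contDiff_stereoParam (x : sphere (0 : H) 1) : ContDiff ℝ (⊤ : ℕ∞) (stereoParam (n := n) x) :=
  contDiff_stereoInvFunAux.comp (tangentIncl x).toContinuousLinearMap.contDiff

lemma hasFDerivAt_stereoParam (x : sphere (0 : H) 1) :
    HasFDerivAt (stereoParam (n := n) x) (tangentIncl x).toContinuousLinearMap 0 := by
  have derivative : HasFDerivAt (stereoInvFunAux ((-x : sphere (0 : H) 1) : H))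
      (ContinuousLinearMap.id ℝ H) (tangentIncl (n := n) x 0) := by
    rw [map_zero]
    exact hasFDerivAt_stereoInvFunAux _
  exact derivative.comp 0 (tangentIncl x).toContinuousLinearMap.hasFDerivAt

lemma extChartAt_opens (x y : O) :
    extChartAt (𝓡 n) x y = chartAt (EuclideanSpace ℝ (Fin n)) (x : sphere (0 : H) 1) y := by
  simp [extChartAt, TopologicalSpace.Opens.chartAt_eq]

lemma extChartAt_opens_self (x : O) : extChartAt (𝓡 n) x x = 0 := by
  have right_inv := (chartAt (EuclideanSpace ℝ (Fin n)) (x : sphere (0 : H) 1)).right_inv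
    (x := 0) (by simp [chartAt, ChartedSpace.chartAt])
  have symm_zero : (chartAt (EuclideanSpace ℝ (Fin n)) (x : sphere (0 : H) 1)).symm 0 = x :=
    Subtype.ext (stereoParam_zero (n := n) (x : sphere (0 : H) 1))
  rwa [symm_zero, ← extChartAt_opens] at right_inv

lemma eventually_extChartAt_opens_symm (x : O) : ∀ᶠ u in nhds (0 : EuclideanSpace ℝ (Fin n)),
    (((extChartAt (𝓡 n) x).symm u : sphere (0 : H) 1) : H) = stereoParam x u := by
  have target_mem := extChartAt_target_mem_nhds (I := 𝓡 n) x
  rw [extChartAt_opens_self] at target_mem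
  filter_upwards [target_mem] with u hu
  have right_inv := (extChartAt (𝓡 n) x).right_inv hu
  have source := (extChartAt (𝓡 n) x).map_target hu
  rw [extChartAt_opens] at right_inv
  rw [stereoParam, ← right_inv, OpenPartialHomeomorph.left_inv, right_inv]
  simpa [extChartAt, TopologicalSpace.Opens.chartAt_eq] using source

end StereographicChart

section HomogeneousExtension

variable {H : Type*} [NormedAddCommGroup H] [InnerProductSpace ℝ H] {n : ℕ}
  [Fact (Module.finrank ℝ H = n + 1)] {O : TopologicalSpace.Opens (sphere (0 : H) 1)}

section Basic

variable {F : Type*} [Zero F] {f : O → F}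

/-- The extension of a function on an open subset of the unit sphere to the ambient space, constant
along the rays from the origin and zero off the cone over its domain. -/
def homExt (f : O → F) (v : H) : F :=
  Function.extend ((↑) : sphere (0 : H) 1 → H) (Function.extend ((↑) : O → sphere (0 : H) 1) f 0) 0
    (‖v‖⁻¹ • v)

lemma homExt_of_eq {x : O} {v : H} (h : ((x : sphere (0 : H) 1) : H) = ‖v‖⁻¹ • v) :
    homExt f v = f x := by
  rw [homExt, ← h, Subtype.val_injective.extend_apply, Subtype.val_injective.extend_apply]

lemma homExt_coe {x : O} {v : H} (h : ((x : sphere (0 : H) 1) : H) = v) : homExt f v = f x :=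
  homExt_of_eq <| by rw [← h, norm_eq_of_mem_sphere, inv_one, one_smul]

lemma homExt_smul (f : O → F) {c : ℝ} (hc : 0 < c) (v : H) : homExt f (c • v) = homExt f v := by
  have normalize : ‖c • v‖⁻¹ • c • v = ‖v‖⁻¹ • v := by
    rw [norm_smul, Real.norm_of_nonneg hc.le, smul_smul, mul_inv, mul_comm c⁻¹, mul_assoc,
      inv_mul_cancel₀ hc.ne', mul_one]
  rw [homExt, homExt, normalize]

lemma homExt_eq_zero_or_exists (f : O → F) (v : H) : homExt f v = 0 ∨ ∃ x, homExt f v = f x := by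
  rw [homExt]
  by_cases h : ∃ y : sphere (0 : H) 1, (y : H) = ‖v‖⁻¹ • v
  · obtain ⟨y, hy⟩ := h
    rw [← hy, Subtype.val_injective.extend_apply]
    by_cases h : ∃ x : O, (x : sphere (0 : H) 1) = y
    · obtain ⟨x, rfl⟩ := h
      exact .inr ⟨x, Subtype.val_injective.extend_apply _ _ _⟩
    · exact .inl (Function.extend_apply' _ _ _ h)
  · exact .inl (Function.extend_apply' _ _ _ h)

lemma eventually_apply_extChartAt_symm (f : O → F) (x : O) :
    ∀ᶠ u in nhds (0 : EuclideanSpace ℝ (Fin n)),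
      f ((extChartAt (𝓡 n) x).symm u) = homExt f (stereoParam x u) := by
  filter_upwards [eventually_extChartAt_opens_symm x] with u hu
  exact (homExt_coe hu).symm

end Basic

variable {F : Type*} [NormedAddCommGroup F] [NormedSpace ℝ F] {f : O → F}

lemma contDiffAt_homExt (hf : ContMDiff (𝓡 n) 𝓘(ℝ, F) (⊤ : ℕ∞) f) (x : O) :
    ContDiffAt ℝ (⊤ : ℕ∞) (homExt f) ((x : sphere (0 : H) 1) : H) := by
  let U : TopologicalSpace.Opens H := ⟨{v | v ≠ 0}, isOpen_ne⟩
  let f' : sphere (0 : H) 1 → F := Function.extend ((↑) : O → sphere (0 : H) 1) f 0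
  let x' : U := ⟨((x : sphere (0 : H) 1) : H), ne_zero_of_mem_unit_sphere _⟩
  have smooth_f' : ContMDiffAt (𝓡 n) 𝓘(ℝ, F) (⊤ : ℕ∞) f' x := contMDiffAt_subtype_iff.1 <| by
    simpa only [f', Subtype.val_injective.extend_apply] using hf x
  have normalize_mem (v : U) : ‖(v : H)‖⁻¹ • (v : H) ∈ sphere (0 : H) 1 :=
    mem_sphere_zero_iff_norm.2 (norm_smul_inv_norm (𝕜 := ℝ) v.2)
  have smooth_normalize : ContMDiff 𝓘(ℝ, H) 𝓘(ℝ, H) (⊤ : ℕ∞)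
      fun v : U => ‖(v : H)‖⁻¹ • (v : H) := fun v =>
    ContMDiffAt.comp (g := fun v : H => ‖v‖⁻¹ • v) v
      (((contDiffAt_norm ℝ v.2).inv (norm_ne_zero_iff.2 v.2)).smul contDiffAt_id).contMDiffAt
      contMDiff_subtype_val.contMDiffAt
  have normalize_x : Set.codRestrict _ _ normalize_mem x' = x := Subtype.ext <| by
    simp [x']
  have comp := ContMDiffAt.comp (g := f') x' (normalize_x ▸ smooth_f')
    (smooth_normalize.codRestrict_sphere (n := n) normalize_mem x')
  have homExt_eq (v : U) : homExt f (v : H) = f' (Set.codRestrict _ _ normalize_mem v) :=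
    Subtype.val_injective.extend_apply _ _ (⟨_, normalize_mem v⟩ : sphere (0 : H) 1)
  exact (contMDiffAt_subtype_iff.1
    (comp.congr_of_eventuallyEq (.of_forall homExt_eq))).contDiffAt

lemma fderiv_homExt_apply_self {v : H} (hv : DifferentiableAt ℝ (homExt f) v) :
    fderiv ℝ (homExt f) v v = 0 := by
  have along_ray : HasDerivAt (fun t : ℝ => homExt f (t • v)) (fderiv ℝ (homExt f) v v) 1 := by
    have ray : HasDerivAt (fun t : ℝ => t • v) v 1 := by
      simpa only [one_smul] using (hasDerivAt_id' (1 : ℝ)).smul_const v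
    exact HasFDerivAt.comp_hasDerivAt (l := homExt f) 1 (by rw [one_smul]; exact hv.hasFDerivAt) ray
  refine along_ray.unique ((hasDerivAt_const (1 : ℝ) (homExt f v)).congr_of_eventuallyEq ?_)
  filter_upwards [lt_mem_nhds one_pos] with t ht
  exact homExt_smul f ht v

lemma hasMFDerivAt_homExt (hf : ContMDiff (𝓡 n) 𝓘(ℝ, F) (⊤ : ℕ∞) f) (x : O) :
    HasMFDerivAt (𝓡 n) 𝓘(ℝ, F) f x ((fderiv ℝ (homExt f) ((x : sphere (0 : H) 1) : H)).comp
      (tangentIncl (x : sphere (0 : H) 1)).toContinuousLinearMap) := by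
  have differentiable : HasFDerivAt (homExt f) (fderiv ℝ (homExt f) ((x : sphere (0 : H) 1) : H))
      (stereoParam (n := n) x 0) := by
    rw [stereoParam_zero]
    exact ((contDiffAt_homExt hf x).differentiableAt (by simp)).hasFDerivAt
  have in_chart := (differentiable.comp 0 (hasFDerivAt_stereoParam _)).congr_of_eventuallyEq
    (eventually_apply_extChartAt_symm f x)
  refine ⟨hf.continuous.continuousAt, ?_⟩
  rw [extChartAt_opens_self]
  exact in_chart.hasFDerivWithinAt

end HomogeneousExtension

section CircleMaps

variable {H : Type*} [NormedAddCommGroup H] [InnerProductSpace ℝ H] {n : ℕ}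
  [Fact (Module.finrank ℝ H = n + 1)] {O : TopologicalSpace.Opens (sphere (0 : H) 1)}

/-- The complex-valued homogeneous extension of a circle-valued map on an open subset of the unit
sphere. It replaces differentials and Hessians on the sphere by those of a map on `H`. -/
def circleHomExt (f : O → Circle) : H → ℂ := homExt fun x => (f x : ℂ)

lemma circleHomExt_coe (f : O → Circle) (x : O) :
    circleHomExt f ((x : sphere (0 : H) 1) : H) = f x :=
  homExt_coe rfl

lemma circleHomExt_smul (f : O → Circle) {c : ℝ} (hc : 0 < c) (v : H) :
    circleHomExt f (c • v) = circleHomExt f v :=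
  homExt_smul _ hc v

lemma contMDiff_coe_circle : ContMDiff (𝓡 1) 𝓘(ℝ, ℂ) (⊤ : ℕ∞) (fun z : Circle => (z : ℂ)) :=
  have := finrank_real_complex_fact'
  contMDiff_coe_sphere (E := ℂ)

variable {f : O → Circle}

lemma isCircleMapNear_circleHomExt (hf : ContMDiff (𝓡 n) (𝓡 1) (⊤ : ℕ∞) f) :
    IsCircleMapNear (circleHomExt f) (range fun x : O => ((x : sphere (0 : H) 1) : H)) := by
  have smooth (x : O) : ContDiffAt ℝ (⊤ : ℕ∞) (circleHomExt f) ((x : sphere (0 : H) 1) : H) :=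
    contDiffAt_homExt (n := n) (contMDiff_coe_circle.comp hf) x
  refine ⟨forall_mem_range.2 fun x => ?_, forall_mem_range.2 smooth⟩
  have ne_zero : ∀ᶠ y in nhds ((x : sphere (0 : H) 1) : H), circleHomExt f y ≠ 0 :=
    (smooth x).continuousAt.eventually_ne (by simp [circleHomExt_coe])
  filter_upwards [ne_zero] with y hy
  obtain ⟨z, hz⟩ := (homExt_eq_zero_or_exists _ y).resolve_left hy
  rw [circleHomExt, hz, Circle.norm_coe]

lemma eventually_angularDeriv_circleHomExt_apply_self (hf : ContMDiff (𝓡 n) (𝓡 1) (⊤ : ℕ∞) f)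
    (x : O) : ∀ᶠ y in nhds ((x : sphere (0 : H) 1) : H),
      angularDeriv (circleHomExt f) y y = 0 := by
  have smooth := (((isCircleMapNear_circleHomExt hf).contDiffAt _ ⟨x, rfl⟩).of_le
    (m := 1) (by simp)).eventually (by simp)
  filter_upwards [smooth] with y hy
  have fderiv_self : fderiv ℝ (circleHomExt f) y y = 0 :=
    fderiv_homExt_apply_self (hy.differentiableAt one_ne_zero)
  rw [angularDeriv_apply, fderiv_self, zero_div, Complex.zero_im]

lemma angularDeriv_circleHomExt_eq_zero_iff (hf : ContMDiff (𝓡 n) (𝓡 1) (⊤ : ℕ∞) f) (x : O) :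
    angularDeriv (circleHomExt f) ((x : sphere (0 : H) 1) : H) = 0 ↔
      ∀ u : EuclideanSpace ℝ (Fin n),
        angularDeriv (circleHomExt f) ((x : sphere (0 : H) 1) : H) (tangentIncl x u) = 0 := by
  refine ⟨fun h u => by rw [h, zero_apply], fun h => ContinuousLinearMap.ext fun v => ?_⟩
  set p : H := ((x : sphere (0 : H) 1) : H)
  have radial := (eventually_angularDeriv_circleHomExt_apply_self hf x).self_of_nhds
  have orthogonal : inner ℝ (v - (inner ℝ v p : ℝ) • p) p = (0 : ℝ) := by
    rw [inner_sub_left, real_inner_smul_left, real_inner_self_eq_norm_sq, norm_eq_of_mem_sphere,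
      one_pow, mul_one, sub_self]
  obtain ⟨u, hu⟩ := exists_tangentIncl_eq (n := n) orthogonal
  simpa [hu, p, radial] using h u

lemma mfderiv_circle_apply_eq_zero_iff (hf : ContMDiff (𝓡 n) (𝓡 1) (⊤ : ℕ∞) f) (x : O)
    (u : EuclideanSpace ℝ (Fin n)) : mfderiv (𝓡 n) (𝓡 1) f x u = 0 ↔
      angularDeriv (circleHomExt f) ((x : sphere (0 : H) 1) : H) (tangentIncl x u) = 0 := by
  have := finrank_real_complex_fact'
  have hg := isCircleMapNear_circleHomExt hf
  have fderiv_eq_zero_iff :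
      fderiv ℝ (circleHomExt f) ((x : sphere (0 : H) 1) : H) (tangentIncl x u) = 0 ↔
        angularDeriv (circleHomExt f) ((x : sphere (0 : H) 1) : H) (tangentIncl x u) = 0 := by
    rw [hg.fderiv_eq ⟨x, rfl⟩]
    simp [circleHomExt_coe]
  have chain : mfderiv (𝓡 1) 𝓘(ℝ, ℂ) (fun z : Circle => (z : ℂ)) (f x) (mfderiv (𝓡 n) (𝓡 1) f x u) =
      fderiv ℝ (circleHomExt f) ((x : sphere (0 : H) 1) : H) (tangentIncl x u) := by
    have comp := mfderiv_comp x ((contMDiff_coe_circle (f x)).mdifferentiableAt (by simp))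
      ((hf x).mdifferentiableAt (by simp))
    exact congrArg (fun T => T u)
      (comp.symm.trans (hasMFDerivAt_homExt (contMDiff_coe_circle.comp hf) x).mfderiv)
  have injective : Function.Injective (mfderiv (𝓡 1) 𝓘(ℝ, ℂ) (fun z : Circle => (z : ℂ)) (f x)) :=
    injective_mvfderiv_subtypeVal_sphere (E := ℂ) (f x)
  exact (injective.eq_iff' (map_zero _)).symm.trans (chain.congr_left.trans fderiv_eq_zero_iff)

end CircleMaps

section MorseData

variable {O : TopologicalSpace.Opens Sph} {f : O → Circle} {x : O}

lemma isCrit_iff_angularDeriv_eq_zero (hf : ContMDiff (𝓡 3) (𝓡 1) (⊤ : ℕ∞) f) (x : O) :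
    IsCrit f x ↔ angularDeriv (circleHomExt f) ((x : Sph) : E) = 0 := by
  have simple : IsSimpleModule ℝ (TangentSpace (𝓡 1) (f x)) :=
    isSimpleModule_iff_finrank_eq_one.2 (finrank_euclideanSpace_fin (𝕜 := ℝ))
  rw [angularDeriv_circleHomExt_eq_zero_iff hf]
  simp only [← mfderiv_circle_apply_eq_zero_iff hf]
  refine ⟨fun h u => ?_, fun h surjective => ?_⟩
  · exact congrArg (fun T => T u)
      ((mfderiv (𝓡 3) (𝓡 1) f x).toLinearMap.surjective_or_eq_zero.resolve_left h)
  · obtain ⟨w, hw⟩ := @exists_ne (TangentSpace (𝓡 1) (f x)) (IsSimpleModule.nontrivial ℝ _) 0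
    obtain ⟨u, rfl⟩ := surjective w
    exact hw (h u)

lemma eventually_liftChart_eq (f : O → Circle) (x : O) : ∀ᶠ u in nhds (0 : E3),
    liftChart f x u =
      (circleHomExt f (stereoParam (x : Sph) u) / circleHomExt f ((x : Sph) : E)).arg := by
  filter_upwards [eventually_apply_extChartAt_symm (n := 3) (fun y => (f y : ℂ)) x] with u hu
  rw [liftChart, hu, circleHomExt_coe, circleHomExt]

lemma eventually_fderiv_liftChart_eq (hf : ContMDiff (𝓡 3) (𝓡 1) (⊤ : ℕ∞) f) (x : O) (v : E3) :
    ∀ᶠ u in nhds (0 : E3), fderiv ℝ (liftChart f x) u v =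
      angularDeriv (circleHomExt f) (stereoParam (n := 3) (x : Sph) u)
        (fderiv ℝ (stereoParam (n := 3) (x : Sph)) u v) := by
  have tendsto : Filter.Tendsto (stereoParam (n := 3) (x : Sph)) (nhds 0)
      (nhds ((x : Sph) : E)) := by
    simpa only [stereoParam_zero] using
      (contDiff_stereoParam (n := 3) (x : Sph)).continuous.tendsto 0
  have arg_deriv := tendsto.eventually
    ((isCircleMapNear_circleHomExt hf).eventually_hasFDerivAt_arg_div ⟨x, rfl⟩)
  filter_upwards [(eventually_liftChart_eq f x).eventually_nhds, arg_deriv] with u hu hderiv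
  have param_deriv := ((contDiff_stereoParam (n := 3) (x : Sph)).differentiable (by simp)
    u).hasFDerivAt
  rw [((hderiv.comp u param_deriv).congr_of_eventuallyEq hu).fderiv]
  rfl

lemma hessAt_eq_angularHess (hf : ContMDiff (𝓡 3) (𝓡 1) (⊤ : ℕ∞) f) (hx : IsCrit f x)
    (v w : E3) : hessAt f x v w =
      angularHess (circleHomExt f) ((x : Sph) : E) (tangentIncl (x : Sph) w)
        (tangentIncl (x : Sph) v) := by
  have param_deriv := hasFDerivAt_stereoParam (n := 3) (x : Sph)
  have deriv_along : HasFDerivAt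
      (fun u : E3 => angularDeriv (circleHomExt f) (stereoParam (x : Sph) u))
      ((angularHess (circleHomExt f) ((x : Sph) : E)).comp
        (tangentIncl (x : Sph)).toContinuousLinearMap) 0 := by
    refine HasFDerivAt.comp (g := angularDeriv (circleHomExt f)) 0 ?_ param_deriv
    rw [stereoParam_zero]
    exact (isCircleMapNear_circleHomExt hf).hasFDerivAt_angularDeriv ⟨x, rfl⟩
  have param_deriv_smooth : ContDiff ℝ 1 (fderiv ℝ (stereoParam (n := 3) (x : Sph))) :=
    (contDiff_stereoParam (x : Sph)).fderiv_right (WithTop.coe_le_coe.2 le_top)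
  have product := deriv_along.clm_apply ((param_deriv_smooth.differentiable one_ne_zero
    0).clm_apply (differentiableAt_const v)).hasFDerivAt
  rw [hessAt, extChartAt_opens_self,
    (Filter.EventuallyEq.fderiv_eq (eventually_fderiv_liftChart_eq hf x v)), product.fderiv,
    stereoParam_zero, (isCrit_iff_angularDeriv_eq_zero hf x).1 hx, param_deriv.fderiv]
  simp

lemma Nondeg.angularHess_apply_ne_zero (hf : ContMDiff (𝓡 3) (𝓡 1) (⊤ : ℕ∞) f) (hx : IsCrit f x)
    (hnd : Nondeg f x) {v : E} (hv : inner ℝ v ((x : Sph) : E) = (0 : ℝ)) (hv0 : v ≠ 0) :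
    angularHess (circleHomExt f) ((x : Sph) : E) v ≠ 0 := by
  obtain ⟨u, rfl⟩ := exists_tangentIncl_eq (n := 3) hv
  obtain ⟨w, hw⟩ := hnd u fun h => hv0 (by rw [h, map_zero])
  rw [hessAt_eq_angularHess hf hx,
    (isCircleMapNear_circleHomExt hf).angularHess_symm ⟨x, rfl⟩] at hw
  exact fun h => hw (by rw [h, zero_apply])

end MorseData

section Tubes

lemma coe_toCircle {z : ℂ} (hz : z ≠ 0) : (toCircle z : ℂ) = z / ‖z‖ := by
  have hn : (‖z‖ : ℂ) ≠ 0 := Complex.ofReal_ne_zero.2 (norm_ne_zero_iff.2 hz)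
  rw [toCircle, Circle.coe_exp, eq_div_iff hn, mul_comm, Complex.norm_mul_exp_arg_mul_I]

lemma eq_zero_of_det4_ne_zero {a b c d : E} (h : det4 a b c d ≠ 0) {k : Fin 4 → ℝ}
    (hk : k 0 • a + k 1 • b + k 2 • c + k 3 • d = 0) : k = 0 := by
  refine Matrix.eq_zero_of_vecMul_eq_zero h (funext fun j => ?_)
  simpa [Matrix.vecMul, dotProduct, Fin.sum_univ_four] using congrArg (fun y : E => y j) hk

lemma Link.emb_mem_carrier (L : Link) (i : Fin L.n) (t : ℝ) : L.emb i t ∈ L.carrier := by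
  have periodic : Function.Periodic (L.emb i) (2 * π) := L.periodic i
  obtain ⟨s, hs, hts⟩ := periodic.exists_mem_Ico₀ Real.two_pi_pos t
  exact mem_iUnion.2 ⟨i, s, Ico_subset_Icc_self hs, hts.symm⟩

lemma Link.range_coe_compl (L : Link) : range (fun x : L.compl => ((x : Sph) : E)) =
    sphere (0 : E) 1 \ Subtype.val '' L.carrier := by
  ext x
  constructor
  · rintro ⟨y, rfl⟩
    exact ⟨(y : Sph).2, by rintro ⟨z, hz, hzy⟩; exact y.2 (Subtype.ext hzy ▸ hz)⟩
  · rintro ⟨hx, hxL⟩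
    exact ⟨⟨⟨x, hx⟩, fun h => hxL ⟨_, h, rfl⟩⟩, rfl⟩

namespace BRMap

variable (F : BRMap L) (i : Fin L.n) {q : (ℝ × ℂ) × ℝ}

lemma contDiffAt_coe_tub {p : ℝ × ℂ} (hp : p.2 ∈ ball (0 : ℂ) 1) :
    ContDiffAt ℝ (⊤ : ℕ∞) (fun p => (F.tub i p : E)) p := by
  have smooth := (contMDiff_coe_sphere (E := E) (n := 3)).comp_contMDiffOn (F.tub_smooth i)
  exact (contMDiffOn_iff_contDiffOn.1 smooth).contDiffAt
    ((isOpen_univ.prod isOpen_ball).mem_nhds ⟨trivial, hp⟩)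

lemma fderiv_coe_tub {p : ℝ × ℂ} (hp : p.2 ∈ ball (0 : ℂ) 1) (v : ℝ × ℂ) :
    fderiv ℝ (fun p => (F.tub i p : E)) p v = tangAmb (F.tub i) p v := by
  have tub_diff : MDifferentiableAt 𝓘(ℝ, ℝ × ℂ) (𝓡 3) (F.tub i) p :=
    ((F.tub_smooth i).contMDiffAt
      ((isOpen_univ.prod isOpen_ball).mem_nhds ⟨trivial, hp⟩)).mdifferentiableAt (by simp)
  have coe_diff : MDifferentiableAt (𝓡 3) 𝓘(ℝ, E) (fun p : Sph => (p : E)) (F.tub i p) :=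
    ((contMDiff_coe_sphere (E := E) (n := 3) (m := 1)) _).mdifferentiableAt one_ne_zero
  rw [← mfderiv_eq_fderiv]
  exact congrArg (fun T => T v) (mfderiv_comp p coe_diff tub_diff)

lemma tub_mem_carrier_iff {t : ℝ} {z : ℂ} (hz : z ∈ ball (0 : ℂ) 1) :
    F.tub i (t, z) ∈ L.carrier ↔ z = 0 := by
  refine ⟨fun h => by_contra fun hz0 => F.tub_off i t z hz hz0 h, ?_⟩
  rintro rfl
  rw [F.tub_core]
  exact L.emb_mem_carrier i t

lemma exists_tub_eq {x : Sph} (hx : x ∈ L.carrier) : ∃ i t, F.tub i (t, 0) = x := by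
  obtain ⟨i, t, -, rfl⟩ := mem_iUnion.1 hx
  exact ⟨i, t, F.tub_core i t⟩

lemma circleHomExt_tub {p : ℝ × ℂ} (hp : p.2 ∈ ball (0 : ℂ) 1) (hp0 : p.2 ≠ 0) :
    circleHomExt F.f (F.tub i p : E) = p.2 / ‖p.2‖ := by
  have off := F.tub_off i p.1 p.2 hp hp0
  rw [← coe_toCircle hp0, ← F.adapted i p.1 p.2 hp hp0 ⟨F.tub i p, off⟩ rfl]
  exact circleHomExt_coe F.f ⟨F.tub i p, off⟩

/-- The trivialization of the tube around the `i`-th component, extended by `1 + r` in the radial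
direction to a local parametrization of `ℝ⁴`. -/
def coneTub (q : (ℝ × ℂ) × ℝ) : E := (1 + q.2) • (F.tub i q.1 : E)

lemma contDiffAt_coneTub (hq : q.1.2 ∈ ball (0 : ℂ) 1) :
    ContDiffAt ℝ (⊤ : ℕ∞) (F.coneTub i) q :=
  (contDiffAt_const.add contDiffAt_snd).smul ((F.contDiffAt_coe_tub i hq).comp q contDiffAt_fst)

lemma hasFDerivAt_coneTub (hq : q.1.2 ∈ ball (0 : ℂ) 1) :
    HasFDerivAt (F.coneTub i) (fderiv ℝ (F.coneTub i) q) q :=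
  ((F.contDiffAt_coneTub i hq).differentiableAt (by simp)).hasFDerivAt

lemma fderiv_coneTub (hq : q.1.2 ∈ ball (0 : ℂ) 1) (v : (ℝ × ℂ) × ℝ) :
    fderiv ℝ (F.coneTub i) q v =
      (1 + q.2) • fderiv ℝ (fun p => (F.tub i p : E)) q.1 v.1 + v.2 • (F.tub i q.1 : E) := by
  have radius : HasFDerivAt (fun q : (ℝ × ℂ) × ℝ => 1 + q.2)
      (ContinuousLinearMap.snd ℝ (ℝ × ℂ) ℝ) q := hasFDerivAt_snd.const_add 1
  have tub : HasFDerivAt (fun q : (ℝ × ℂ) × ℝ => (F.tub i q.1 : E)) _ q :=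
    ((F.contDiffAt_coe_tub i hq).differentiableAt (by simp)).hasFDerivAt.comp q hasFDerivAt_fst
  exact congrArg (fun T => T v) (radius.smul tub).fderiv

lemma injective_fderiv_coneTub (hq : q.1.2 ∈ ball (0 : ℂ) 1) (hr : -1 < q.2) :
    Function.Injective (fderiv ℝ (F.coneTub i) q) := by
  rw [injective_iff_map_eq_zero]
  rintro ⟨⟨a, w⟩, s⟩ h
  have hr0 : 1 + q.2 ≠ 0 := by linarith
  have basis : ((a, w) : ℝ × ℂ) =
      a • ((1, 0) : ℝ × ℂ) + w.re • ((0, 1) : ℝ × ℂ) + w.im • ((0, Complex.I) : ℝ × ℂ) := by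
    refine Prod.ext (by simp) (Complex.ext ?_ ?_) <;> simp
  have independent := (F.positive i q.1.1 q.1.2 hq).ne'
  simp only [Prod.mk.eta, ← F.fderiv_coe_tub i hq] at independent
  rw [F.fderiv_coneTub i hq, basis, map_add, map_add, map_smul, map_smul, map_smul] at h
  have coeff := eq_zero_of_det4_ne_zero independent
    (k := ![s, (1 + q.2) * a, (1 + q.2) * w.re, (1 + q.2) * w.im]) (by
      simp only [Matrix.cons_val, ← h]
      module)
  have ha : a = 0 := by simpa [hr0] using congrFun coeff 1
  have hw : w = 0 := Complex.ext (by simpa [hr0] using congrFun coeff 2)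
    (by simpa [hr0] using congrFun coeff 3)
  rw [ha, hw, show s = 0 from congrFun coeff 0]
  rfl

lemma exists_hasFDerivAt_coneTub_equiv (hq : q.1.2 ∈ ball (0 : ℂ) 1) (hr : -1 < q.2) :
    ∃ e : ((ℝ × ℂ) × ℝ) ≃L[ℝ] E,
      HasFDerivAt (F.coneTub i) (e : ((ℝ × ℂ) × ℝ) →L[ℝ] E) q := by
  have finrank_eq : Module.finrank ℝ ((ℝ × ℂ) × ℝ) = Module.finrank ℝ E := by
    simp [Complex.finrank_real_complex]
  exact ⟨(LinearEquiv.ofInjectiveOfFinrankEq (fderiv ℝ (F.coneTub i) q).toLinearMap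
    (F.injective_fderiv_coneTub i hq hr) finrank_eq).toContinuousLinearEquiv,
    F.hasFDerivAt_coneTub i hq⟩

lemma coneTub_eq_of_norm_eq_one (hr : -1 < q.2) (h : ‖F.coneTub i q‖ = 1) :
    F.coneTub i q = F.tub i q.1 := by
  rw [coneTub, norm_smul, norm_eq_of_mem_sphere, mul_one,
    Real.norm_of_nonneg (by linarith)] at h
  rw [coneTub, h, one_smul]

lemma coneTub_mem_carrier_iff (hq : q.1.2 ∈ ball (0 : ℂ) 1) (hr : -1 < q.2)
    (h : ‖F.coneTub i q‖ = 1) : F.coneTub i q ∈ Subtype.val '' L.carrier ↔ q.1.2 = 0 := by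
  rw [F.coneTub_eq_of_norm_eq_one i hr h, Subtype.val_injective.mem_set_image]
  exact F.tub_mem_carrier_iff i hq

lemma circleHomExt_coneTub (hq : q.1.2 ∈ ball (0 : ℂ) 1) (hq0 : q.1.2 ≠ 0) (hr : -1 < q.2) :
    circleHomExt F.f (F.coneTub i q) = q.1.2 / ‖q.1.2‖ := by
  rw [coneTub, circleHomExt_smul _ (by linarith), F.circleHomExt_tub i hq hq0]

lemma angularDeriv_coneTub (hq : q.1.2 ∈ ball (0 : ℂ) 1) (hq0 : q.1.2 ≠ 0) (hr : -1 < q.2)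
    (hmem : F.coneTub i q ∈ range fun x : L.compl => ((x : Sph) : E)) :
    angularDeriv (circleHomExt F.f) (F.coneTub i q)
      (fderiv ℝ (F.coneTub i) q ((0, Complex.I * q.1.2), 0)) = 1 := by
  have hg := isCircleMapNear_circleHomExt F.smooth
  let c (s : ℝ) : (ℝ × ℂ) × ℝ := ((q.1.1, Complex.exp (s * Complex.I) * q.1.2), q.2)
  have c_zero : c 0 = q := by simp [c]
  have rotation : HasDerivAt (fun s : ℝ => Complex.exp (s * Complex.I)) Complex.I 0 := by
    simpa using (Complex.ofRealCLM.hasDerivAt (x := (0 : ℝ))).mul_const Complex.I |>.cexp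
  have c_deriv : HasDerivAt c ((0, Complex.I * q.1.2), 0) 0 :=
    ((hasDerivAt_const 0 q.1.1).prodMk (rotation.mul_const q.1.2)).prodMk (hasDerivAt_const 0 q.2)
  have g_deriv := (hg.differentiableAt hmem).hasFDerivAt
  have tub_deriv := F.hasFDerivAt_coneTub i hq
  rw [← c_zero] at g_deriv tub_deriv
  have along_c := (g_deriv.comp (c 0) tub_deriv).comp_hasDerivAt 0 c_deriv
  have norm_c (s : ℝ) : ‖(c s).1.2‖ = ‖q.1.2‖ := by
    rw [norm_mul, Complex.norm_exp_ofReal_mul_I, one_mul]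
  have rotates : (circleHomExt F.f ∘ F.coneTub i) ∘ c =
      fun s : ℝ => Complex.exp (s * Complex.I) * circleHomExt F.f (F.coneTub i q) := by
    ext s
    have c_ne : (c s).1.2 ≠ 0 := mul_ne_zero (Complex.exp_ne_zero _) hq0
    rw [Function.comp_apply, Function.comp_apply, F.circleHomExt_coneTub i hq hq0 hr,
      F.circleHomExt_coneTub i (by simpa [norm_c] using hq) c_ne hr, norm_c, mul_div_assoc]
  rw [rotates, c_zero] at along_c
  have value := along_c.unique (rotation.mul_const _)
  rw [ContinuousLinearMap.comp_apply] at value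
  rw [angularDeriv_apply, value, mul_div_cancel_right₀ _ (hg.ne_zero hmem), Complex.I_im]

lemma exists_coneTub_rightInverse {x : E} (hx : x ∈ Subtype.val '' L.carrier) :
    ∃ i, ∃ σ : E → (ℝ × ℂ) × ℝ, ∃ O ∈ nhds x, ∀ y ∈ O, ContDiffAt ℝ (⊤ : ℕ∞) σ y ∧
      (σ y).1.2 ∈ ball (0 : ℂ) 1 ∧ -1 < (σ y).2 ∧ F.coneTub i (σ y) = y := by
  obtain ⟨_, hx, rfl⟩ := hx
  obtain ⟨i, t, rfl⟩ := F.exists_tub_eq hx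
  have core : F.coneTub i ((t, 0), 0) = (F.tub i (t, 0) : E) := by simp [coneTub]
  have h0 : (((t, 0), 0) : (ℝ × ℂ) × ℝ).1.2 ∈ ball (0 : ℂ) 1 := by simp
  obtain ⟨e, he⟩ := F.exists_hasFDerivAt_coneTub_equiv i h0 neg_one_lt_zero
  let Φ := (F.contDiffAt_coneTub i h0).toOpenPartialHomeomorph (F.coneTub i) he (by simp)
  have source : ((t, 0), 0) ∈ Φ.source := ContDiffAt.mem_toOpenPartialHomeomorph_source _ _ _
  let D : Set ((ℝ × ℂ) × ℝ) := {q | q.1.2 ∈ ball (0 : ℂ) 1 ∧ -1 < q.2}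
  have isOpen_D : IsOpen D := (isOpen_ball.preimage (by fun_prop)).inter
    (isOpen_lt continuous_const continuous_snd)
  refine ⟨i, Φ.symm, Φ.target ∩ Φ.symm ⁻¹' D,
    (Φ.symm.isOpen_inter_preimage isOpen_D).mem_nhds ?_, fun y ⟨hy, hyD⟩ => ?_⟩
  · rw [← core]
    refine ⟨Φ.map_source source, ?_⟩
    rw [mem_preimage, show Φ.symm (F.coneTub i ((t, 0), 0)) = ((t, 0), 0) from
      Φ.left_inv source]
    exact ⟨h0, neg_one_lt_zero⟩
  · obtain ⟨e', he'⟩ := F.exists_hasFDerivAt_coneTub_equiv i hyD.1 hyD.2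
    exact ⟨Φ.contDiffAt_symm hy he' (F.contDiffAt_coneTub i hyD.1), hyD.1, hyD.2,
      Φ.right_inv hy⟩

theorem isOpenBookMap : IsOpenBookMap (circleHomExt F.f) (Subtype.val '' L.carrier) := by
  refine ⟨L.range_coe_compl ▸ isCircleMapNear_circleHomExt F.smooth, ?_, fun x hx => ?_⟩
  · rw [← L.range_coe_compl, forall_mem_range]
    exact eventually_angularDeriv_circleHomExt_apply_self F.smooth
  obtain ⟨i, σ, O, hO, hσ⟩ := F.exists_coneTub_rightInverse hx
  refine ⟨O, hO, fun y => fderiv ℝ (F.coneTub i) (σ y) ((0, Complex.I * (σ y).1.2), 0),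
    fun y hy => ContDiffAt.contDiffWithinAt ?_, ?_, ?_⟩
  · obtain ⟨smooth, hball, -, -⟩ := hσ y hy
    have fderiv_smooth : ContDiffAt ℝ (⊤ : ℕ∞) (fderiv ℝ (F.coneTub i)) (σ y) :=
      (F.contDiffAt_coneTub i hball).fderiv_right (by simp)
    have z_smooth : ContDiffAt ℝ (⊤ : ℕ∞) (fun y => (σ y).1.2) y := smooth.fst.snd
    exact (fderiv_smooth.comp y smooth).clm_apply
      ((contDiffAt_const.prodMk (contDiffAt_const.mul z_smooth)).prodMk contDiffAt_const)
  · rintro y ⟨hyO, hy⟩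
    obtain ⟨-, hball, hr, hσy⟩ := hσ y hyO
    have norm_one : ‖F.coneTub i (σ y)‖ = 1 := by
      obtain ⟨z, -, rfl⟩ := hy
      rw [hσy, norm_eq_of_mem_sphere]
    have z_zero := (F.coneTub_mem_carrier_iff i hball hr norm_one).1 (hσy.symm ▸ hy)
    simp only [z_zero, mul_zero]
    exact map_zero _
  · rintro y ⟨hyO, hy⟩
    obtain ⟨-, hball, hr, hσy⟩ := hσ y hyO
    have norm_one : ‖F.coneTub i (σ y)‖ = 1 := by
      rw [hσy]
      exact mem_sphere_zero_iff_norm.1 hy.1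
    have z_ne : (σ y).1.2 ≠ 0 := fun h =>
      hy.2 (hσy ▸ (F.coneTub_mem_carrier_iff i hball hr norm_one).2 h)
    have derivative := F.angularDeriv_coneTub i hball z_ne hr
      (by rwa [hσy, L.range_coe_compl])
    rwa [hσy] at derivative

theorem exists_isMeridianIn {x : E} (hx : x ∈ Subtype.val '' L.carrier) {N : Set E}
    (hN : N ∈ nhds x) :
    ∃ η, IsMeridianIn η (circleHomExt F.f) (N ∩ (sphere 0 1 \ Subtype.val '' L.carrier)) := by
  obtain ⟨_, hx, rfl⟩ := hx
  obtain ⟨i, t, rfl⟩ := F.exists_tub_eq hx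
  have tub_near : ∀ᶠ z in nhds (0 : ℂ), (F.tub i (t, z) : E) ∈ N :=
    ((F.contDiffAt_coe_tub i (mem_ball_self one_pos)).continuousAt.comp
      (Continuous.prodMk_right t).continuousAt).eventually hN
  obtain ⟨δ, hδ, hδN⟩ := Metric.eventually_nhds_iff.1 tub_near
  obtain ⟨ε, hε, hεδ⟩ := exists_between (lt_min hδ one_pos)
  let z (θ : ℝ) : ℂ := ε * Complex.exp (θ * Complex.I)
  have norm_z (θ : ℝ) : ‖z θ‖ = ε := by
    rw [norm_mul, Complex.norm_exp_ofReal_mul_I, mul_one, Complex.norm_of_nonneg hε.le]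
  have z_ne (θ : ℝ) : z θ ≠ 0 := norm_pos_iff.1 (norm_z θ ▸ hε)
  have z_mem (θ : ℝ) : z θ ∈ ball (0 : ℂ) 1 := by
    rw [mem_ball_zero_iff, norm_z]
    exact hεδ.trans_le (min_le_right _ _)
  have value (θ : ℝ) :
      circleHomExt F.f (F.tub i (t, z θ) : E) = Complex.exp (θ * Complex.I) := by
    rw [F.circleHomExt_tub i (z_mem θ) (z_ne θ), norm_z,
      mul_div_cancel_left₀ _ (Complex.ofReal_ne_zero.2 hε.ne')]
  refine ⟨fun θ => F.tub i (t, z θ), ?_, fun θ => ⟨hδN ?_, (F.tub i (t, z θ)).2, ?_⟩, ?_, ?_⟩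
  · refine continuous_iff_continuousAt.2 fun θ => ?_
    exact (F.contDiffAt_coe_tub i (p := (t, z θ)) (z_mem θ)).continuousAt.comp
      (f := fun θ => (t, z θ)) (by fun_prop)
  · rw [dist_zero_right, norm_z]
    exact hεδ.trans_le (min_le_left _ _)
  · rw [Subtype.val_injective.mem_set_image]
    exact F.tub_off i t _ (z_mem θ) (z_ne θ)
  · intro θ
    rw [value, value]
    simp
  · simp [z, Complex.exp_two_pi_mul_I]

end BRMap

end Tubes

section LowerBound

lemma val_image_Ucar : Subtype.val '' Ucar = unlinkSet := by
  ext x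
  constructor
  · rintro ⟨x, hx, rfl⟩
    exact ⟨norm_eq_of_mem_sphere x, hx⟩
  · rintro ⟨norm_eq, hx⟩
    exact ⟨⟨x, mem_sphere_zero_iff_norm.2 norm_eq⟩, hx, rfl⟩

variable {U : Link}

lemma range_coe_compl_eq_unlinkCompl (hU : U.carrier = Ucar) :
    range (fun x : U.compl => ((x : Sph) : E)) = unlinkCompl := by
  rw [U.range_coe_compl, hU, val_image_Ucar, sphere_diff_unlinkSet]

lemma coe_mem_unlinkCompl (hU : U.carrier = Ucar) (x : U.compl) :
    ((x : Sph) : E) ∈ unlinkCompl :=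
  range_coe_compl_eq_unlinkCompl hU ▸ mem_range_self x

lemma exists_coe_eq_of_mem_unlinkCompl (hU : U.carrier = Ucar) {x : E} (hx : x ∈ unlinkCompl) :
    ∃ y : U.compl, ((y : Sph) : E) = x := by
  rwa [← range_coe_compl_eq_unlinkCompl hU] at hx

lemma BRMap.exists_isMeridianIn_puncturedTube (hU : U.carrier = Ucar) (F : BRMap U) {x : E}
    {c R : ℝ} (hx : ‖x‖ = 1) (hxc : Z x = c) (hc : (c : ℂ) = 0 ∨ (c : ℂ) = 1 / 2) (hR : 0 < R) :
    ∃ η, IsMeridianIn η (circleHomExt F.f) (puncturedTube c R) := by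
  have carrier_eq : Subtype.val '' U.carrier = unlinkSet := by rw [hU, val_image_Ucar]
  have near : {y : E | ‖Z y - c‖ < R} ∈ nhds x := by
    refine (isOpen_lt (by have := continuous_Z; fun_prop) continuous_const).mem_nhds ?_
    simpa [hxc] using hR
  obtain ⟨η, hη⟩ := F.exists_isMeridianIn (carrier_eq ▸ ⟨hx, hxc ▸ hc⟩ :
    x ∈ Subtype.val '' U.carrier) near
  refine ⟨η, { hη with mem := fun θ => ?_ }⟩
  obtain ⟨η_near, η_sphere, η_off⟩ := hη.mem θ
  have norm_η := mem_sphere_zero_iff_norm.1 η_sphere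
  refine ⟨norm_η, fun h => η_off ?_, η_near⟩
  rw [carrier_eq]
  exact ⟨norm_η, h ▸ hc⟩

theorem BRMap.isUnlinkMap (hU : U.carrier = Ucar) (F : BRMap U) :
    IsUnlinkMap (circleHomExt F.f) where
  toIsOpenBookMap := val_image_Ucar ▸ hU ▸ F.isOpenBookMap
  exists_meridian_zero :=
    F.exists_isMeridianIn_puncturedTube hU (x := mk4 0 1) (by simp [norm_eq_one_iff_Z_W])
      (by simp) (by simp) (by norm_num)
  exists_meridian_half := by
    refine F.exists_isMeridianIn_puncturedTube hU (x := mk4 (1 / 2) (√3 / 2 : ℝ)) ?_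
      (by simp) (by simp) (by norm_num)
    rw [norm_eq_one_iff_Z_W, Z_mk4, W_mk4, Complex.norm_real, norm_div, Real.norm_of_nonneg]
    · norm_num [div_pow]
    · positivity

theorem two_le_encard_critSet (hU : U.carrier = Ucar) (F : BRMap U) (hF : MorseFun F.f) :
    2 ≤ (critSet F.f).encard := by
  obtain ⟨_, hx, x_crit⟩ := (F.isUnlinkMap hU).exists_angularDeriv_eq_zero
  obtain ⟨x, rfl⟩ := exists_coe_eq_of_mem_unlinkCompl hU hx
  have isCrit_x := (isCrit_iff_angularDeriv_eq_zero F.smooth x).2 x_crit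
  obtain ⟨_, hy, y_ne, y_crit⟩ := (F.isUnlinkMap hU).exists_angularDeriv_eq_zero_ne hx x_crit
    fun _ => (hF x isCrit_x).angularHess_apply_ne_zero F.smooth isCrit_x
  obtain ⟨y, rfl⟩ := exists_coe_eq_of_mem_unlinkCompl hU hy
  have isCrit_y := (isCrit_iff_angularDeriv_eq_zero F.smooth y).2 y_crit
  rw [← one_add_one_eq_two]
  refine Order.add_one_le_of_lt (one_lt_encard_iff.2 ⟨y, x, isCrit_y, isCrit_x, ?_⟩)
  rintro rfl
  exact y_ne rfl

end LowerBound

section AngularDerivRules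

lemma hasFDerivAt_norm {H : Type*} [NormedAddCommGroup H] [InnerProductSpace ℝ H] {x : H}
    (hx : x ≠ 0) : HasFDerivAt (fun y : H => ‖y‖) (‖x‖⁻¹ • innerSL ℝ x) x := by
  have sqrt_deriv := (hasStrictFDerivAt_norm_sq x).hasFDerivAt.sqrt (by simpa using hx)
  simp only [Real.sqrt_sq (norm_nonneg _)] at sqrt_deriv
  convert sqrt_deriv using 1
  ext v
  simp only [smul_apply, coe_innerSL_apply, smul_eq_mul, one_div, mul_inv_rev, nsmul_eq_mul,
    Nat.cast_ofNat]
  field_simp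

variable {A : Type*} [NormedAddCommGroup A] [NormedSpace ℝ A] {f g : A → ℂ} {x : A}

lemma angularDeriv_congr (h : f =ᶠ[nhds x] g) : angularDeriv f x = angularDeriv g x := by
  rw [angularDeriv, angularDeriv, h.fderiv_eq, h.self_of_nhds]

lemma angularDeriv_div (hf : DifferentiableAt ℝ f x) (hg : DifferentiableAt ℝ g x) (hf0 : f x ≠ 0)
    (hg0 : g x ≠ 0) :
    angularDeriv (fun y => f y / g y) x = angularDeriv f x - angularDeriv g x := by
  ext v
  have quotient := hf.hasFDerivAt.fun_mul
    ((hasFDerivAt_inv' (𝕜 := ℝ) hg0).comp x hg.hasFDerivAt)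
  simp only [Function.comp_apply, ← div_eq_mul_inv] at quotient
  simp only [angularDeriv_apply, sub_apply, ← Complex.sub_im, quotient.fderiv]
  congr 1
  simp only [ContinuousLinearMap.neg_comp, smul_neg, add_apply, neg_apply, smul_apply,
    ContinuousLinearMap.comp_apply, ContinuousLinearMap.mulLeftRight_apply, smul_eq_mul]
  field_simp
  ring

lemma angularDeriv_ofReal {r : A → ℝ} (hr : DifferentiableAt ℝ r x) :
    angularDeriv (fun y => (r y : ℂ)) x = 0 := by
  ext v
  have derivative : HasFDerivAt (fun y => (r y : ℂ)) _ x :=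
    Complex.ofRealCLM.hasFDerivAt.comp x hr.hasFDerivAt
  rw [angularDeriv_apply, derivative.fderiv]
  simp

lemma angularDeriv_div_norm (hf : DifferentiableAt ℝ f x) (hf0 : f x ≠ 0) :
    angularDeriv (fun y => f y / (‖f y‖ : ℂ)) x = angularDeriv f x := by
  have norm_diff := hf.norm ℝ hf0
  rw [angularDeriv_div hf (g := fun y => (‖f y‖ : ℂ))
    (Complex.ofRealCLM.differentiableAt.comp x norm_diff) hf0
    (Complex.ofReal_ne_zero.2 (norm_ne_zero_iff.2 hf0)), angularDeriv_ofReal norm_diff, sub_zero]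

end AngularDerivRules

section MilnorMap

/-- The first complex coordinate as a continuous real-linear map. -/
def coordZ : E →L[ℝ] ℂ :=
  (EuclideanSpace.proj 0).smulRight 1 + (EuclideanSpace.proj 1).smulRight Complex.I

/-- The second complex coordinate as a continuous real-linear map. -/
def coordW : E →L[ℝ] ℂ :=
  (EuclideanSpace.proj 2).smulRight 1 + (EuclideanSpace.proj 3).smulRight Complex.I

@[simp] lemma coordZ_apply (x : E) : coordZ x = Z x := by simp [coordZ, Z]

@[simp] lemma coordW_apply (x : E) : coordW x = W x := by simp [coordW, W]

lemma Z_smul (c : ℝ) (x : E) : Z (c • x) = c * Z x := by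
  simp only [← coordZ_apply, map_smul, Complex.real_smul]

lemma inner_eq_re_add_re (x y : E) :
    (inner ℝ x y : ℝ) = (Z y * starRingEnd ℂ (Z x)).re + (W y * starRingEnd ℂ (W x)).re := by
  simp only [PiLp.inner_apply, RCLike.inner_apply, Real.ringHom_apply, Fin.sum_univ_four,
    Complex.mul_re, Z_re, Complex.conj_re, Z_im, Complex.conj_im, mul_neg, sub_neg_eq_add, W_re,
    W_im]
  ring

/-- The open cone over the complement of the unlink. -/
def unlinkCone : Set E := {y | y ≠ 0 ∧ Z y ≠ 0 ∧ 2 * Z y - ‖y‖ ≠ 0}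

lemma isOpen_unlinkCone : IsOpen unlinkCone := by
  have := continuous_Z
  refine isOpen_ne.inter ((isOpen_ne_fun continuous_Z continuous_const).inter
    (isOpen_ne_fun ?_ continuous_const))
  fun_prop

lemma unlinkCompl_subset_unlinkCone : unlinkCompl ⊆ unlinkCone := by
  rintro y ⟨norm_y, hZ, hZ'⟩
  refine ⟨norm_ne_zero_iff.1 (norm_y ▸ one_ne_zero), hZ, fun h => hZ' ?_⟩
  rw [norm_y, Complex.ofReal_one] at h
  linear_combination h / 2

lemma inv_norm_smul_mem_unlinkCompl {y : E} (hy : y ∈ unlinkCone) :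
    ‖y‖⁻¹ • y ∈ unlinkCompl := by
  obtain ⟨hy0, hZ, hZ'⟩ := hy
  have norm_ne : (‖y‖ : ℂ) ≠ 0 := Complex.ofReal_ne_zero.2 (norm_ne_zero_iff.2 hy0)
  refine ⟨norm_smul_inv_norm (𝕜 := ℝ) hy0, ?_, fun h => hZ' ?_⟩
  · rw [Z_smul, Complex.ofReal_inv]
    exact mul_ne_zero (inv_ne_zero norm_ne) hZ
  · rw [Z_smul, Complex.ofReal_inv] at h
    field_simp at h
    linear_combination h

variable {U : Link} (hU : U.carrier = Ucar) {f : U.compl → Circle}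
  (hGu : ∀ x : U.compl, f x = toCircle (Gu ((x : Sph) : E)))
include hU hGu

lemma circleHomExt_eq_of_mem_unlinkCone {y : E} (hy : y ∈ unlinkCone) :
    circleHomExt f y = (2 * Z y - ‖y‖) / Z y / ‖(2 * Z y - ‖y‖) / Z y‖ := by
  obtain ⟨x, hx⟩ := exists_coe_eq_of_mem_unlinkCompl hU (inv_norm_smul_mem_unlinkCompl hy)
  obtain ⟨hy0, hZ, hZ'⟩ := hy
  have norm_ne : (‖y‖ : ℂ) ≠ 0 := Complex.ofReal_ne_zero.2 (norm_ne_zero_iff.2 hy0)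
  have Gu_eq : Gu ((x : Sph) : E) = (2 * Z y - ‖y‖) / Z y := by
    rw [Gu, hx, Z_smul, Complex.ofReal_inv]
    field_simp
  rw [← circleHomExt_smul f (inv_pos.2 (norm_pos_iff.2 hy0)), ← hx, circleHomExt_coe, hGu, Gu_eq,
    coe_toCircle (div_ne_zero hZ' hZ)]

lemma angularDeriv_circleHomExt_of_mem_unlinkCone {y : E} (hy : y ∈ unlinkCone) (v : E) :
    angularDeriv (circleHomExt f) y v =
      ((2 * Z v - (inner ℝ y v / ‖y‖ : ℝ)) / (2 * Z y - ‖y‖)).im - (Z v / Z y).im := by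
  obtain ⟨hy0, hZ, hZ'⟩ := id hy
  have Z_deriv : HasFDerivAt Z coordZ y := by
    simpa only [funext coordZ_apply] using coordZ.hasFDerivAt (x := y)
  have num_deriv : HasFDerivAt (fun y => 2 * Z y - (‖y‖ : ℂ)) _ y :=
    (Z_deriv.const_mul (2 : ℂ)).sub (Complex.ofRealCLM.hasFDerivAt.comp y (hasFDerivAt_norm hy0))
  have quotient_diff : DifferentiableAt ℝ (fun y => (2 * Z y - (‖y‖ : ℂ)) / Z y) y := by
    simpa only [div_eq_mul_inv] using num_deriv.differentiableAt.fun_mul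
      (Z_deriv.differentiableAt.fun_inv hZ)
  have near : circleHomExt f =ᶠ[nhds y]
      fun y => (2 * Z y - ‖y‖) / Z y / (‖(2 * Z y - ‖y‖) / Z y‖ : ℂ) := by
    filter_upwards [isOpen_unlinkCone.mem_nhds hy] with z hz
    exact circleHomExt_eq_of_mem_unlinkCone hU hGu hz
  rw [angularDeriv_congr near, angularDeriv_div_norm quotient_diff (div_ne_zero hZ' hZ),
    angularDeriv_div num_deriv.differentiableAt Z_deriv.differentiableAt hZ' hZ, sub_apply,
    angularDeriv_apply, angularDeriv_apply, num_deriv.fderiv, Z_deriv.fderiv]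
  simp [div_eq_inv_mul]

end MilnorMap

section CriticalPoints

variable {p v : E}

lemma two_mul_Z_sub_one_ne_zero (hp : p ∈ unlinkCompl) : 2 * Z p - 1 ≠ 0 := by
  simpa [hp.1] using (unlinkCompl_subset_unlinkCone hp).2.2

lemma inner_eq_re_div_of_W_eq_zero (hp : ‖p‖ = 1) (hW : W p = 0) (v : E) :
    (inner ℝ p v : ℝ) = (Z v / Z p).re := by
  have normSq_Z : Complex.normSq (Z p) = 1 := by
    rw [norm_eq_one_iff_Z_W, hW, norm_zero] at hp
    rw [Complex.normSq_eq_norm_sq]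
    linarith
  rw [inner_eq_re_add_re, hW, map_zero, mul_zero, Complex.zero_re, add_zero, div_eq_mul_inv,
    Complex.inv_def, normSq_Z, inv_one, Complex.ofReal_one, mul_one]

lemma exists_inner_eq_zero_Z_eq (hW : W p ≠ 0) (ζ : ℂ) :
    ∃ v : E, inner ℝ p v = (0 : ℝ) ∧ Z v = ζ := by
  refine ⟨mk4 ζ (-((ζ * starRingEnd ℂ (Z p)).re : ℝ) / starRingEnd ℂ (W p)), ?_, Z_mk4 _ _⟩
  rw [inner_eq_re_add_re, Z_mk4, W_mk4, div_mul_cancel₀ _ ((map_ne_zero _).2 hW), Complex.neg_re,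
    Complex.ofReal_re, add_neg_cancel]

lemma forall_im_div_eq_zero_iff (hp : p ∈ unlinkCompl) :
    (∀ v, inner ℝ p v = (0 : ℝ) → (Z v / (Z p * (2 * Z p - 1))).im = 0) ↔
      W p = 0 ∧ (Z p).re = 1 / 2 := by
  have hZ := hp.2.1
  have hZ' := two_mul_Z_sub_one_ne_zero hp
  refine ⟨fun h => ?_, fun ⟨hW, hre⟩ v hv => ?_⟩
  · have hW : W p = 0 := by
      by_contra hW
      obtain ⟨v, orthogonal, Z_v⟩ :=
        exists_inner_eq_zero_Z_eq hW (Complex.I * (Z p * (2 * Z p - 1)))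
      have im_eq := h v orthogonal
      rw [Z_v, mul_div_cancel_right₀ _ (mul_ne_zero hZ hZ')] at im_eq
      exact one_ne_zero im_eq
    have im_eq := h (mk4 (Complex.I * Z p) 0) <| by
      rw [inner_eq_re_div_of_W_eq_zero hp.1 hW, Z_mk4, mul_div_cancel_right₀ _ hZ, Complex.I_re]
    rw [Z_mk4, mul_comm (Z p), mul_div_mul_right _ _ hZ, Complex.div_im] at im_eq
    have normSq_ne := mt Complex.normSq_eq_zero.1 hZ'
    field_simp at im_eq
    simp only [Complex.I_re, zero_mul, Complex.I_im, one_mul, Complex.sub_re, Complex.mul_re,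
      Complex.re_ofNat, Complex.im_ofNat, sub_zero, Complex.one_re] at im_eq
    exact ⟨hW, by linarith⟩
  · rw [inner_eq_re_div_of_W_eq_zero hp.1 hW] at hv
    rw [← div_div, Complex.div_im, hv]
    simp [-Z_re, hre]

variable {U : Link} (hU : U.carrier = Ucar) {f : U.compl → Circle}
  (hGu : ∀ x : U.compl, f x = toCircle (Gu ((x : Sph) : E)))
include hU hGu

lemma angularDeriv_circleHomExt_of_inner_eq_zero (hp : p ∈ unlinkCompl)
    (hv : inner ℝ p v = (0 : ℝ)) :
    angularDeriv (circleHomExt f) p v = (Z v / (Z p * (2 * Z p - 1))).im := by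
  have hZ := hp.2.1
  have hZ' := two_mul_Z_sub_one_ne_zero hp
  rw [angularDeriv_circleHomExt_of_mem_unlinkCone hU hGu (unlinkCompl_subset_unlinkCone hp), hv,
    hp.1, zero_div, Complex.ofReal_zero, Complex.ofReal_one, sub_zero, ← Complex.sub_im]
  congr 1
  field_simp
  ring

theorem isCrit_iff_of_eq_toCircle_Gu (hf : ContMDiff (𝓡 3) (𝓡 1) (⊤ : ℕ∞) f) (x : U.compl) :
    IsCrit f x ↔ W ((x : Sph) : E) = 0 ∧ (Z ((x : Sph) : E)).re = 1 / 2 := by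
  have hx := coe_mem_unlinkCompl hU x
  rw [isCrit_iff_angularDeriv_eq_zero hf, angularDeriv_circleHomExt_eq_zero_iff (n := 3) hf,
    ← forall_im_div_eq_zero_iff hx]
  refine ⟨fun h v hv => ?_, fun h u => ?_⟩
  · obtain ⟨u, rfl⟩ := exists_tangentIncl_eq (n := 3) (real_inner_comm v _ ▸ hv)
    rw [← angularDeriv_circleHomExt_of_inner_eq_zero hU hGu hx hv, h]
  · rw [angularDeriv_circleHomExt_of_inner_eq_zero hU hGu hx (inner_tangentIncl _ u)]
    exact h _ (inner_tangentIncl _ u)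

end CriticalPoints

section Hessian

lemma hasDerivAt_add_smul {H : Type*} [NormedAddCommGroup H] [NormedSpace ℝ H] (p v : H) (t : ℝ) :
    HasDerivAt (fun t : ℝ => p + t • v) v t := by
  simpa only [one_smul] using ((hasDerivAt_id' t).smul_const v).const_add p

lemma hasDerivAt_norm_add_smul {H : Type*} [NormedAddCommGroup H] [InnerProductSpace ℝ H]
    {p v : H} (hp : p ≠ 0) (hv : inner ℝ p v = (0 : ℝ)) :
    HasDerivAt (fun t : ℝ => ‖p + t • v‖) 0 0 := by
  have derivative := (hasFDerivAt_norm hp).comp_hasDerivAt_of_eq (0 : ℝ)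
    (hasDerivAt_add_smul p v 0) (by simp)
  simpa [Function.comp_def, hv] using derivative

lemma IsCircleMapNear.hasDerivAt_angularDeriv_add_smul {A : Type*} [NormedAddCommGroup A]
    [NormedSpace ℝ A] {g : A → ℂ} {X : Set A} (hg : IsCircleMapNear g X) {p : A} (hp : p ∈ X)
    (v : A) : HasDerivAt (fun t : ℝ => angularDeriv g (p + t • v) v) (angularHess g p v v) 0 := by
  have derivative := (hg.hasFDerivAt_angularDeriv hp).comp_hasDerivAt_of_eq (0 : ℝ)
    (hasDerivAt_add_smul p v 0) (by simp)
  simpa using derivative.clm_apply (hasDerivAt_const (0 : ℝ) v)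

variable {U : Link} (hU : U.carrier = Ucar) {f : U.compl → Circle}
  (hf : ContMDiff (𝓡 3) (𝓡 1) (⊤ : ℕ∞) f)
  (hGu : ∀ x : U.compl, f x = toCircle (Gu ((x : Sph) : E))) {p v : E}
include hU hf hGu

lemma angularHess_circleHomExt_apply_self (hp : p ∈ unlinkCompl) (hv : inner ℝ p v = (0 : ℝ)) :
    angularHess (circleHomExt f) p v v = (-(‖v‖ ^ 2 : ℝ) / (2 * Z p - 1) -
      4 * Z v ^ 2 / (2 * Z p - 1) ^ 2 + (Z v / Z p) ^ 2).im := by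
  have hp_cone := unlinkCompl_subset_unlinkCone hp
  have hZ := hp.2.1
  have hZ' := two_mul_Z_sub_one_ne_zero hp
  have norm_deriv := hasDerivAt_norm_add_smul hp_cone.1 hv
  have inner_deriv : HasDerivAt (fun t : ℝ => (inner ℝ (p + t • v) v / ‖p + t • v‖ : ℝ))
      (‖v‖ ^ 2) 0 := by
    have quotient := ((hasDerivAt_add_smul p v 0).inner ℝ (hasDerivAt_const 0 v)).fun_div norm_deriv
      (by simp [hp.1])
    simpa [hp.1] using quotient
  have Z_deriv : HasDerivAt (fun t : ℝ => Z (p + t • v)) (Z v) 0 := by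
    simpa only [Function.comp_def, coordZ_apply] using
      coordZ.hasFDerivAt.comp_hasDerivAt (0 : ℝ) (hasDerivAt_add_smul p v 0)
  have formula_deriv := ((inner_deriv.ofReal_comp.const_sub (2 * Z v)).fun_div
    ((Z_deriv.const_mul 2).sub norm_deriv.ofReal_comp) (by simpa [hp.1] using hZ')).fun_sub
    ((hasDerivAt_const (0 : ℝ) (Z v)).fun_div Z_deriv (by simpa using hZ))
  have eventually_formula : (fun t : ℝ => angularDeriv (circleHomExt f) (p + t • v) v) =ᶠ[nhds 0]
      fun t => ((2 * Z v - (inner ℝ (p + t • v) v / ‖p + t • v‖ : ℝ)) /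
        (2 * Z (p + t • v) - ‖p + t • v‖) - Z v / Z (p + t • v)).im := by
    filter_upwards [(hasDerivAt_add_smul p v 0).continuousAt.eventually_mem
      (isOpen_unlinkCone.mem_nhds (by simpa using hp_cone))] with t ht
    rw [angularDeriv_circleHomExt_of_mem_unlinkCone hU hGu ht, Complex.sub_im]
  have hg := range_coe_compl_eq_unlinkCompl hU ▸ isCircleMapNear_circleHomExt hf
  rw [(hg.hasDerivAt_angularDeriv_add_smul hp v).unique
    ((Complex.imCLM.hasFDerivAt.comp_hasDerivAt (0 : ℝ) formula_deriv).congr_of_eventuallyEq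
      eventually_formula), Complex.imCLM_apply]
  congr 1
  simp only [Complex.ofReal_pow, Pi.sub_apply, zero_smul, add_zero, hp.1, Complex.ofReal_one,
    neg_mul, hv, div_one, Complex.ofReal_zero, sub_zero, zero_mul, zero_sub]
  field_simp
  ring

lemma angularHess_circleHomExt_of_critical (hp : p ∈ unlinkCompl) (hW : W p = 0)
    (hre : (Z p).re = 1 / 2) (hv : inner ℝ p v = (0 : ℝ)) :
    angularHess (circleHomExt f) p v v =
      (2 * (Z p).im)⁻¹ * (‖W v‖ ^ 2 - ‖(Z v / Z p).im‖ ^ 2) := by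
  set y := (Z p).im
  set t := (Z v / Z p).im
  have Z_p : Z p = 1 / 2 + y * Complex.I := by
    rw [← Complex.re_add_im (Z p), hre]
    push_cast
    rfl
  have hy : (y : ℂ) ≠ 0 := fun hy => two_mul_Z_sub_one_ne_zero hp (by rw [Z_p, hy]; ring)
  have quotient : Z v / Z p = t * Complex.I := by
    rw [← Complex.re_add_im (Z v / Z p), ← inner_eq_re_div_of_W_eq_zero hp.1 hW, hv]
    simp [t]
  have Z_v : Z v = t * Complex.I * Z p := by rw [← quotient, div_mul_cancel₀ _ hp.2.1]
  have norm_v : ‖v‖ ^ 2 = t ^ 2 + ‖W v‖ ^ 2 := by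
    have norm_Z : ‖Z p‖ ^ 2 = 1 := by simpa [hW] using (norm_eq_one_iff_Z_W p).1 hp.1
    rw [norm_sq_eq_Z_W, Z_v, norm_mul, norm_mul, mul_pow, norm_Z, mul_pow, Complex.norm_real,
      Complex.norm_I, Real.norm_eq_abs, sq_abs]
    ring
  have two_Z_sub_one : 2 * Z p - 1 = 2 * y * Complex.I := by rw [Z_p]; ring
  have re_add_im : (-(‖v‖ ^ 2 : ℝ) / (2 * Z p - 1) - 4 * Z v ^ 2 / (2 * Z p - 1) ^ 2 +
      (Z v / Z p) ^ 2) = (-(t ^ 2 * (1 / 4 - y ^ 2) / y ^ 2) - t ^ 2 : ℝ) +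
        ((2 * y)⁻¹ * (‖W v‖ ^ 2 - t ^ 2) : ℝ) * Complex.I := by
    rw [two_Z_sub_one, quotient, Z_v, norm_v, Z_p]
    push_cast
    field_simp
    ring_nf
    simp only [Complex.I_sq]
    ring
  rw [angularHess_circleHomExt_apply_self hU hf hGu hp hv, re_add_im, Complex.add_im,
    Complex.ofReal_im, zero_add, Complex.mul_I_im, Complex.ofReal_re, Real.norm_eq_abs, sq_abs]

end Hessian

section DiagonalHessian

variable {O : TopologicalSpace.Opens Sph} {f : O → Circle} {x : O}

lemma hessAt_add_sub_hessAt_sub (hf : ContMDiff (𝓡 3) (𝓡 1) (⊤ : ℕ∞) f) (hx : IsCrit f x)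
    (v w : E3) :
    hessAt f x (v + w) (v + w) - hessAt f x (v - w) (v - w) = 4 * hessAt f x v w := by
  simp only [hessAt_eq_angularHess hf hx, map_add, map_sub, add_apply, sub_apply]
  linear_combination 2 * (isCircleMapNear_circleHomExt hf).angularHess_symm ⟨x, rfl⟩
    (tangentIncl (x : Sph) v) (tangentIncl (x : Sph) w)

variable {A B : Type*} [NormedAddCommGroup A] [NormedSpace ℝ A] [NormedAddCommGroup B]
  [NormedSpace ℝ B] {c : ℝ} (e : E3 ≃ₗ[ℝ] A × B)
  (h : ∀ v, hessAt f x v v = c * (‖(e v).2‖ ^ 2 - ‖(e v).1‖ ^ 2))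
include h

lemma nondeg_of_hessAt_self_eq (hf : ContMDiff (𝓡 3) (𝓡 1) (⊤ : ℕ∞) f) (hx : IsCrit f x)
    (hc : c ≠ 0) : Nondeg f x := by
  refine fun v hv => ⟨e.symm (-(e v).1, (e v).2), fun hess_eq => hv (e.map_eq_zero_iff.1 ?_)⟩
  have polarization := hessAt_add_sub_hessAt_sub hf hx v (e.symm (-(e v).1, (e v).2))
  simp only [hess_eq, h, map_add, map_sub, LinearEquiv.apply_symm_apply, Prod.fst_add,
    Prod.snd_add, Prod.fst_sub, Prod.snd_sub, add_neg_cancel, sub_neg_eq_add, sub_self, norm_zero,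
    ← two_smul ℝ, norm_smul, Real.norm_ofNat] at polarization
  have sum_eq_zero : ‖(e v).1‖ ^ 2 + ‖(e v).2‖ ^ 2 = 0 :=
    (mul_eq_zero.1 (by linear_combination polarization / 4)).resolve_left hc
  obtain ⟨fst_eq, snd_eq⟩ := (add_eq_zero_iff_of_nonneg (sq_nonneg _) (sq_nonneg _)).1 sum_eq_zero
  exact Prod.ext (by simpa using fst_eq) (by simpa using snd_eq)

lemma hasIndex_of_hessAt_self_eq (hx : IsCrit f x) (hc : 0 < c) :
    HasIndex f x (Module.finrank ℝ A) := by
  have inl_injective : Function.Injective (e.symm.toLinearMap ∘ₗ LinearMap.inl ℝ A B) :=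
    e.symm.injective.comp LinearMap.inl_injective
  have inr_injective : Function.Injective (e.symm.toLinearMap ∘ₗ LinearMap.inr ℝ A B) :=
    e.symm.injective.comp LinearMap.inr_injective
  have := Module.Finite.of_injective _ inl_injective
  have := Module.Finite.of_injective _ inr_injective
  have finrank_add : 3 = Module.finrank ℝ A + Module.finrank ℝ B := by
    rw [← Module.finrank_prod, ← e.finrank_eq, finrank_euclideanSpace_fin]
  refine ⟨hx, by lia, _, LinearMap.range (e.symm.toLinearMap ∘ₗ LinearMap.inr ℝ A B),
    LinearMap.finrank_range_of_inj inl_injective, ?_, ?_, ?_⟩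
  · rw [LinearMap.finrank_range_of_inj inr_injective]
    lia
  · rintro _ ⟨a, rfl⟩ ne_zero
    have ha : a ≠ 0 := fun ha => ne_zero (by rw [ha, map_zero])
    rw [h]
    simpa using mul_pos hc (pow_pos (norm_pos_iff.2 ha) 2)
  · rintro _ ⟨b, rfl⟩ ne_zero
    have hb : b ≠ 0 := fun hb => ne_zero (by rw [hb, map_zero])
    rw [h]
    simpa using mul_pos hc (pow_pos (norm_pos_iff.2 hb) 2)

end DiagonalHessian

section CriticalPointsOfMilnorMap

lemma mk4_mem_unlinkCompl {y : ℝ} (hy : y ^ 2 = 3 / 4) : mk4 ⟨1 / 2, y⟩ 0 ∈ unlinkCompl := by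
  refine ⟨?_, ?_, ?_⟩
  · rw [norm_eq_one_iff_Z_W, Z_mk4, W_mk4, norm_zero, ← Complex.normSq_eq_norm_sq,
      Complex.normSq_mk]
    linear_combination hy
  · rw [Z_mk4]
    exact fun h => by simpa using congrArg Complex.re h
  · rw [Z_mk4]
    intro h
    rw [show y = 0 by simpa using congrArg Complex.im h] at hy
    norm_num at hy

lemma W_eq_zero_and_re_eq_half_iff {p : E} (hp : ‖p‖ = 1) :
    W p = 0 ∧ (Z p).re = 1 / 2 ↔
      p = mk4 ⟨1 / 2, √3 / 2⟩ 0 ∨ p = mk4 ⟨1 / 2, -(√3 / 2)⟩ 0 := by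
  refine ⟨fun ⟨hW, hre⟩ => ?_, ?_⟩
  · have im_sq : (Z p).im ^ 2 = (√3 / 2) ^ 2 := by
      rw [norm_eq_one_iff_Z_W, hW, norm_zero, ← Complex.normSq_eq_norm_sq, Complex.normSq_apply,
        hre] at hp
      rw [div_pow, Real.sq_sqrt (by norm_num)]
      linear_combination hp
    exact (sq_eq_sq_iff_eq_or_eq_neg.1 im_sq).imp
      (fun him => ext_Z_W (by rw [Z_mk4]; exact Complex.ext hre him) (by rw [W_mk4, hW]))
      (fun him => ext_Z_W (by rw [Z_mk4]; exact Complex.ext hre him) (by rw [W_mk4, hW]))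
  · rintro (rfl | rfl) <;> rw [Z_mk4, W_mk4] <;> exact ⟨rfl, rfl⟩

lemma finrank_E3_eq : Module.finrank ℝ E3 = Module.finrank ℝ (ℝ × ℂ) := by
  simp [Complex.finrank_real_complex]

lemma exists_tangent_equiv {x : Sph} (hW : W (x : E) = 0) (hZ : Z (x : E) ≠ 0) :
    ∃ e : E3 ≃ₗ[ℝ] ℝ × ℂ, ∀ v, e v =
      ((Z (tangentIncl x v) / Z (x : E)).im, W (tangentIncl x v)) := by
  let l : E3 →ₗ[ℝ] ℝ × ℂ :=
    (((Complex.imCLM ∘L (ContinuousLinearMap.mul ℝ ℂ (Z (x : E))⁻¹ ∘L coordZ)).prod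
      coordW).comp (tangentIncl x).toContinuousLinearMap).toLinearMap
  have l_apply (v : E3) :
      l v = ((Z (tangentIncl x v) / Z (x : E)).im, W (tangentIncl x v)) := by
    simp [l, div_eq_inv_mul]
  have l_injective : Function.Injective l := by
    refine (injective_iff_map_eq_zero l).2 fun v hv => ?_
    obtain ⟨im_eq, W_eq⟩ := Prod.ext_iff.1 ((l_apply v).symm.trans hv)
    have re_eq := (inner_eq_re_div_of_W_eq_zero (norm_eq_of_mem_sphere x) hW _).symm.trans
      (inner_tangentIncl x v)
    have Z_eq : Z (tangentIncl x v) = 0 :=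
      (div_eq_zero_iff.1 (Complex.ext re_eq im_eq)).resolve_right hZ
    refine (map_eq_zero_iff _ (tangentIncl (n := 3) x).injective).1 (ext_Z_W ?_ ?_)
    · rw [Z_eq, ← coordZ_apply, map_zero]
    · exact W_eq.trans ((map_zero coordW).symm.trans (coordW_apply 0))
  exact ⟨LinearMap.linearEquivOfInjective l l_injective finrank_E3_eq, l_apply⟩

variable {U : Link} (hU : U.carrier = Ucar) {f : U.compl → Circle}
  (hf : ContMDiff (𝓡 3) (𝓡 1) (⊤ : ℕ∞) f)
  (hGu : ∀ x : U.compl, f x = toCircle (Gu ((x : Sph) : E)))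
include hU hf hGu

lemma exists_hessAt_self_eq {x : U.compl} (hx : IsCrit f x) : ∃ e : E3 ≃ₗ[ℝ] ℝ × ℂ, ∀ v,
    hessAt f x v v = (2 * (Z ((x : Sph) : E)).im)⁻¹ * (‖(e v).2‖ ^ 2 - ‖(e v).1‖ ^ 2) := by
  have hx_mem := coe_mem_unlinkCompl hU x
  obtain ⟨hW, hre⟩ := (isCrit_iff_of_eq_toCircle_Gu hU hGu hf x).1 hx
  obtain ⟨e, he⟩ := exists_tangent_equiv hW hx_mem.2.1
  refine ⟨e, fun v => ?_⟩
  rw [hessAt_eq_angularHess hf hx, he,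
    angularHess_circleHomExt_of_critical hU hf hGu hx_mem hW hre (inner_tangentIncl _ v)]

theorem morseFun_of_eq_toCircle_Gu : MorseFun f := by
  intro x hx
  obtain ⟨e, he⟩ := exists_hessAt_self_eq hU hf hGu hx
  have hre := ((isCrit_iff_of_eq_toCircle_Gu hU hGu hf x).1 hx).2
  refine nondeg_of_hessAt_self_eq e he hf hx (inv_ne_zero (mul_ne_zero two_ne_zero fun him => ?_))
  exact (coe_mem_unlinkCompl hU x).2.2 (Complex.ext (by simpa using hre) (by simpa using him))

theorem hasIndex_one_of_im_pos {x : U.compl} (hx : IsCrit f x)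
    (him : 0 < (Z ((x : Sph) : E)).im) : HasIndex f x 1 := by
  obtain ⟨e, he⟩ := exists_hessAt_self_eq hU hf hGu hx
  simpa using hasIndex_of_hessAt_self_eq e he hx (by positivity)

theorem hasIndex_two_of_im_neg {x : U.compl} (hx : IsCrit f x)
    (him : (Z ((x : Sph) : E)).im < 0) : HasIndex f x 2 := by
  obtain ⟨e, he⟩ := exists_hessAt_self_eq hU hf hGu hx
  have neg_form (v : E3) : hessAt f x v v = -(2 * (Z ((x : Sph) : E)).im)⁻¹ *
      (‖((e.trans (LinearEquiv.prodComm ℝ ℝ ℂ)) v).2‖ ^ 2 -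
        ‖((e.trans (LinearEquiv.prodComm ℝ ℝ ℂ)) v).1‖ ^ 2) := by
    rw [he, LinearEquiv.trans_apply, LinearEquiv.prodComm_apply, Prod.fst_swap, Prod.snd_swap]
    ring
  have index := hasIndex_of_hessAt_self_eq _ neg_form hx (neg_pos.2 (inv_neg''.2 (by linarith)))
  rwa [Complex.finrank_real_complex] at index

theorem exists_critSet_eq_pair : ∃ a b : U.compl, 0 < (Z ((a : Sph) : E)).im ∧
    (Z ((b : Sph) : E)).im < 0 ∧ critSet f = {a, b} := by
  have half_sqrt_sq : (√3 / 2) ^ 2 = 3 / 4 := by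
    rw [div_pow, Real.sq_sqrt (by norm_num)]
    norm_num
  obtain ⟨a, ha⟩ := exists_coe_eq_of_mem_unlinkCompl hU (mk4_mem_unlinkCompl half_sqrt_sq)
  obtain ⟨b, hb⟩ := exists_coe_eq_of_mem_unlinkCompl hU
    (mk4_mem_unlinkCompl ((neg_sq _).trans half_sqrt_sq))
  refine ⟨a, b, by rw [ha, Z_mk4]; positivity, by rw [hb, Z_mk4, neg_lt_zero]; positivity, ?_⟩
  ext x
  change IsCrit f x ↔ x = a ∨ x = b
  rw [isCrit_iff_of_eq_toCircle_Gu hU hGu hf,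
    W_eq_zero_and_re_eq_half_iff (coe_mem_unlinkCompl hU x).1, ← ha, ← hb]
  exact or_congr (Subtype.val_injective.comp Subtype.val_injective).eq_iff
    (Subtype.val_injective.comp Subtype.val_injective).eq_iff

end CriticalPointsOfMilnorMap

/-- The 2-component unlink `U` (the link of indeterminacy
at infinity of `G(z,w) = (2z-1)/z`, whose carrier is
`{z = 0} ∪ {z = 1/2} ⊂ S³`) satisfies `MN U = 2`; the Milnor map `u` of `G`
at radius 1 is a simple boundary-regular Morse map for `U` with exactly two
critical points, one of index 1 and one of index 2, and `u` is a minimal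
Morse map. -/
theorem statement_3 (U : Link) (hU : U.carrier = Ucar)
    (u : BRMap U) (hu : ∀ x : U.compl, u.f x = toCircle (Gu ((x : Sph) : E))) :
    MN U = 2 ∧ MorseFun u.f ∧ Minimal u ∧
    ∃ a b : U.compl, a ≠ b ∧ critSet u.f = {a, b} ∧
      HasIndex u.f a 1 ∧ HasIndex u.f b 2 := by
  obtain ⟨a, b, ha, hb, critSet_eq⟩ := exists_critSet_eq_pair hU u.smooth hu
  have a_ne_b : a ≠ b := fun h => (hb.trans ha).ne (by rw [h])
  have encard_eq : (critSet u.f).encard = 2 := by rw [critSet_eq, encard_pair a_ne_b]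
  have morse_u : MorseFun u.f := morseFun_of_eq_toCircle_Gu hU u.smooth hu
  have a_crit : a ∈ critSet u.f := critSet_eq ▸ mem_insert a {b}
  have b_crit : b ∈ critSet u.f := critSet_eq ▸ mem_insert_of_mem a rfl
  refine ⟨le_antisymm (sInf_le ⟨u, morse_u, encard_eq⟩) (le_sInf ?_), morse_u,
    ⟨morse_u, fun F hF => encard_eq ▸ two_le_encard_critSet hU F hF⟩, a, b, a_ne_b, critSet_eq,
    hasIndex_one_of_im_pos hU u.smooth hu a_crit ha,
    hasIndex_two_of_im_neg hU u.smooth hu b_crit hb⟩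
  rintro _ ⟨F, hF, rfl⟩
  exact two_le_encard_critSet hU F hF

end MorseNovikov
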